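/- arXiv:1604.00284 — 2 statements merged into one kernel-verified Lean document; each statement's English description precedes it below -/
import Mathlib

section
/- Let ω ≥ 1 be an integer and δ ∈ (0,1/8) be fixed, and let η > 0. The series ζ_{E₂}(s) = Σ_{k≥1} E_{2,k}(s) converges absolutely and locally uniformly on the strip {s ∈ ℂ : 1 < Re(s) < 2}, and its sum extends to a meromorphic function on ℂ which is holomorphic at s = 0. Moreover, for fixed ω and δ, the derivative at 0 of this extension satisfies ζ_{E₂}'(0) = -(ζ(-1)/ω)·(5 + 2γ - 2·log 2 - 2·log ω) + (1/(6ω))·log(η) + o(1) as η → 0⁺. -/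
open MeasureTheory Filter

/-- `A₁(u) = ((5 - cosh(η)²)·cosh(η)·sinh(η)²/8) · u·(1 + u²sinh(η)²)^{-5/2}`. -/
noncomputable def coneA1 (η u : ℝ) : ℝ :=
  ((5 - Real.cosh η ^ 2) * Real.cosh η * Real.sinh η ^ 2 / 8) *
    (u * (1 + u ^ 2 * Real.sinh η ^ 2) ^ (-(5 : ℝ) / 2))

/-- `A₂(u) = -(cosh(η)·sinh(η)⁴/8) · u³·(1 + u²sinh(η)²)^{-5/2}`. -/
noncomputable def coneA2 (η u : ℝ) : ℝ :=
  -(Real.cosh η * Real.sinh η ^ 4 / 8) *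
    (u ^ 3 * (1 + u ^ 2 * Real.sinh η ^ 2) ^ (-(5 : ℝ) / 2))

/-- `A₃(u) = (u/(24(u²-1)²))·(2 + 3cosh(η)⁵·(1 + u²sinh(η)²)^{-5/2}
  - 5cosh(η)³·(1 + u²sinh(η)²)^{-3/2})` (the singularity at `u = 1` is removable). -/
noncomputable def coneA3 (η u : ℝ) : ℝ :=
  (u / (24 * (u ^ 2 - 1) ^ 2)) *
    (2 + 3 * Real.cosh η ^ 5 * (1 + u ^ 2 * Real.sinh η ^ 2) ^ (-(5 : ℝ) / 2) -
      5 * Real.cosh η ^ 3 * (1 + u ^ 2 * Real.sinh η ^ 2) ^ (-(3 : ℝ) / 2))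

/-- `E_{2,k}(s) = (2 sin(πs)/π)·(1/(kω))·∫_{k^{δ-1}/ω}^{∞} (k²ω²u² - 1/4)^{-s} ·
  (A₁(u) + A₂(u) + A₃(u)) du`. -/
noncomputable def coneE2 (ω : ℕ) (η δ : ℝ) (k : ℕ) (s : ℂ) : ℂ :=
  (2 * Complex.sin ((Real.pi : ℂ) * s) / (Real.pi : ℂ)) * (1 / ((k : ℂ) * (ω : ℂ))) *
    ∫ u in Set.Ioi ((k : ℝ) ^ (δ - 1) / ω),
      (((k : ℝ) ^ 2 * (ω : ℝ) ^ 2 * u ^ 2 - 1 / 4 : ℝ) : ℂ) ^ (-s) *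
        ((coneA1 η u + coneA2 η u + coneA3 η u : ℝ) : ℂ)

/-!
Write `f = A₁ + A₂ + A₃`, `N_k = kω` and `c_k = k^{δ-1}/ω`. Expanding `(N_k² u² - 1/4)^{-s}` in
powers of `(N_k u)^{-2}` to order `J` leaves a remainder whose sum over `k` converges absolutely
for `Re s > -J`. The `j`-th term of the expansion contributes, with `z = s + j`,
`∑ₖ N_k^{-1-2z} ∫_{c_k}^∞ u^{-2z} f(u) du`. Integrating over `(0, ∞)` instead would give
`ω^{-1-2z} ζ(1 + 2z)` times a Mellin transform of `f`, which is meromorphic because `f` has power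
expansions at `0` and `∞`; the missing part over `(0, c_k)` is continued by means of the expansion
of `f` at `0`, each power of `u` producing one more zeta function.

At `s = 0` the factor `sin (πs)` vanishes, as do all binomial coefficients with `j ≥ 1`, so only
the pole of `ζ(1 + 2s)` and the low part of the `j = 0` term matter:
`ζ_{E₂}'(0) = ω⁻¹ ((2γ - 2 log ω) ∫ f - 2 ∫ f log u) - 2 ∑ₖ N_k⁻¹ ∫_0^{c_k} f`. In the variable
`r = u sinh η` both moments are elementary up to terms of size `O(sinh² η)`, while
`f(u) = O(sinh² η) u` makes the last sum vanish in the limit.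
-/

namespace ConeZeta

open Set Topology Asymptotics

/-! ### Holomorphic and meromorphic functions -/

theorem aestronglyMeasurable_deriv_of_differentiableAt {α : Type*} [MeasurableSpace α]
    {μ : Measure α} {F : ℂ → α → ℂ} {z₀ : ℂ}
    (hmeas : ∀ᶠ z in 𝓝 z₀, AEStronglyMeasurable (F z) μ)
    (hdiff : ∀ᵐ a ∂μ, DifferentiableAt ℂ (fun z => F z a) z₀) :
    AEStronglyMeasurable (fun a => deriv (fun z => F z a) z₀) μ := by
  have hstep : ∀ᶠ t : ℂ in 𝓝[≠] 0, AEStronglyMeasurable (F (z₀ + t)) μ :=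
    (((continuous_const_add z₀).tendsto' 0 z₀ (add_zero z₀)).mono_left
      nhdsWithin_le_nhds).eventually hmeas
  obtain ⟨t, ht, ht_meas⟩ : ∃ t : ℕ → ℂ, Tendsto t atTop (𝓝[≠] 0) ∧
      ∀ n, AEStronglyMeasurable (F (z₀ + t n)) μ := by
    obtain ⟨t, ht⟩ := exists_seq_tendsto (𝓝[≠] (0 : ℂ))
    obtain ⟨N, hN⟩ := eventually_atTop.1 (ht.eventually hstep)
    exact ⟨fun n => t (n + N), ht.comp (tendsto_add_atTop_nat N), fun n => hN _ (by lia)⟩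
  refine aestronglyMeasurable_of_tendsto_ae (f := fun n a => (t n)⁻¹ • (F (z₀ + t n) a - F z₀ a))
    atTop (fun n => ((ht_meas n).fun_sub hmeas.self_of_nhds).fun_const_smul _) ?_
  filter_upwards [hdiff] with a ha
  exact ha.hasDerivAt.tendsto_slope_zero.comp ht

theorem differentiableOn_integral_of_dominated {α : Type*} [MeasurableSpace α] {μ : Measure α}
    {F : ℂ → α → ℂ} {U : Set ℂ} (hU : IsOpen U) {bound : α → ℝ} (hbound : Integrable bound μ)
    (hmeas : ∀ z ∈ U, AEStronglyMeasurable (F z) μ)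
    (hdiff : ∀ᵐ a ∂μ, DifferentiableOn ℂ (fun z => F z a) U)
    (hle : ∀ᵐ a ∂μ, ∀ z ∈ U, ‖F z a‖ ≤ bound a) :
    DifferentiableOn ℂ (fun z => ∫ a, F z a ∂μ) U := by
  intro z₀ hz₀
  obtain ⟨R, hR, hRU⟩ := Metric.isOpen_iff.1 hU z₀ hz₀
  have hmeas₀ : ∀ᶠ z in 𝓝 z₀, AEStronglyMeasurable (F z) μ := by
    filter_upwards [hU.mem_nhds hz₀] with z hz using hmeas z hz
  have hdiffAt : ∀ᵐ a ∂μ, ∀ z ∈ U, DifferentiableAt ℂ (fun z => F z a) z := by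
    filter_upwards [hdiff] with a ha z hz using (ha z hz).differentiableAt (hU.mem_nhds hz)
  have hclosedBall : ∀ z ∈ Metric.ball z₀ (R / 2), Metric.closedBall z (R / 4) ⊆ U :=
    fun z hz => (Metric.closedBall_subset_ball' (by linarith [Metric.mem_ball.1 hz])).trans hRU
  have hball : Metric.ball z₀ (R / 2) ⊆ U :=
    fun z hz => hclosedBall z hz (Metric.mem_closedBall_self (by positivity))
  have hcauchy : ∀ᵐ a ∂μ, ∀ z ∈ Metric.ball z₀ (R / 2),
      ‖deriv (fun z => F z a) z‖ ≤ bound a / (R / 4) := by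
    filter_upwards [hdiff, hle] with a had hal z hz
    refine Complex.norm_deriv_le_of_forall_mem_sphere_norm_le (by positivity)
      (DifferentiableOn.diffContOnCl (had.mono ?_)) fun y hy =>
        hal y (hclosedBall z hz (Metric.sphere_subset_closedBall hy))
    exact Metric.closure_ball_subset_closedBall.trans (hclosedBall z hz)
  refine (hasDerivAt_integral_of_dominated_loc_of_deriv_le
    (Metric.ball_mem_nhds z₀ (by positivity : 0 < R / 2)) hmeas₀
    (hbound.mono' (hmeas z₀ hz₀) (hle.mono fun a ha => ha z₀ hz₀))
    (aestronglyMeasurable_deriv_of_differentiableAt hmeas₀ (hdiffAt.mono fun a ha => ha z₀ hz₀))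
    hcauchy (hbound.div_const _)
    ?_).2.differentiableAt.differentiableWithinAt
  filter_upwards [hdiffAt] with a ha z hz using (ha z (hball hz)).hasDerivAt

theorem meromorphicOn_of_differentiableOn {f : ℂ → ℂ} {U : Set ℂ} (hU : IsOpen U)
    (hf : DifferentiableOn ℂ f U) : MeromorphicOn f U :=
  (hf.analyticOnNhd hU).meromorphicOn

theorem meromorphicAt_of_differentiable {f : ℂ → ℂ} (hf : Differentiable ℂ f) (z : ℂ) :
    MeromorphicAt f z :=
  (hf.analyticAt z).meromorphicAt

theorem eventuallyEq_nhdsNE_of_isPreconnected {f g : ℂ → ℂ} {U : Set ℂ} (hf : MeromorphicOn f U)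
    (hg : MeromorphicOn g U) (hU : IsPreconnected U) {z₀ z : ℂ} (hz₀ : z₀ ∈ U)
    (hfg : f =ᶠ[𝓝[≠] z₀] g) (hz : z ∈ U) : f =ᶠ[𝓝[≠] z] g := by
  have hsub : ∀ w, meromorphicOrderAt (f - g) w = ⊤ ↔ f =ᶠ[𝓝[≠] w] g := fun w => by
    simp only [meromorphicOrderAt_eq_top_iff, Pi.sub_apply, sub_eq_zero, EventuallyEq]
  rw [← hsub] at hfg ⊢
  by_contra hz_top
  exact MeromorphicOn.meromorphicOrderAt_ne_top_of_isPreconnected (hf.sub hg) hU hz hz₀ hz_top hfg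

theorem eventuallyEq_of_meromorphicNFOn {f g : ℂ → ℂ} {U : Set ℂ} (hf : MeromorphicNFOn f U)
    (hg : MeromorphicNFOn g U) (hU : IsPreconnected U) {z₀ z : ℂ} (hz₀ : z₀ ∈ U)
    (hfg : f =ᶠ[𝓝[≠] z₀] g) (hz : z ∈ U) : f =ᶠ[𝓝 z] g :=
  ((hf hz).eventuallyEq_nhdsNE_iff_eventuallyEq_nhds (hg hz)).1
    (eventuallyEq_nhdsNE_of_isPreconnected hf.meromorphicOn hg.meromorphicOn hU hz₀ hfg hz)

-- Normal forms make the local continuations agree at every point, and not merely off a discrete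
-- set, so that they can be glued pointwise.
theorem exists_meromorphicNFOn_univ_of_exhaustion {U : ℕ → Set ℂ} (hU_open : ∀ n, IsOpen (U n))
    (hU_conn : ∀ n, IsPreconnected (U n)) (hU_mono : Monotone U) (hU_univ : ⋃ n, U n = univ)
    {F : ℕ → ℂ → ℂ} (hF : ∀ n, MeromorphicOn (F n) (U n)) {z₀ : ℂ} (hz₀ : z₀ ∈ U 0)
    (hF_eq : ∀ n, F n =ᶠ[𝓝[≠] z₀] F 0) :
    ∃ G : ℂ → ℂ, MeromorphicNFOn G univ ∧ G =ᶠ[𝓝[≠] z₀] F 0 := by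
  set N : ℕ → ℂ → ℂ := fun n => toMeromorphicNFOn (F n) (U n)
  have hN : ∀ n, MeromorphicNFOn (N n) (U n) := fun n =>
    meromorphicNFOn_toMeromorphicNFOn (F n) (U n)
  have hz₀_mem : ∀ n, z₀ ∈ U n := fun n => hU_mono (Nat.zero_le n) hz₀
  have hN_F : ∀ n, N n =ᶠ[𝓝[≠] z₀] F n := fun n =>
    (hF n).toMeromorphicNFOn_eq_self_on_nhdsNE (hz₀_mem n)
  have hN_eq : ∀ m n, m ≤ n → EqOn (N m) (N n) (U m) := fun m n hmn z hz =>
    (eventuallyEq_of_meromorphicNFOn (hN m) (fun w hw => hN n (hU_mono hmn hw)) (hU_conn m)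
      (hz₀_mem m) (((hN_F m).trans (hF_eq m)).trans ((hN_F n).trans (hF_eq n)).symm) hz).eq_of_nhds
  choose level hlevel using fun z => mem_iUnion.1 (hU_univ ▸ mem_univ z : z ∈ ⋃ n, U n)
  have hglue : ∀ n, EqOn (fun z => N (level z) z) (N n) (U n) := fun n z hz => by
    rcases le_total (level z) n with h | h
    · exact hN_eq _ _ h (hlevel z)
    · exact (hN_eq _ _ h hz).symm
  have hglue_nhds : ∀ n, ∀ z ∈ U n, (fun z => N (level z) z) =ᶠ[𝓝 z] N n := fun n z hz =>
    (hglue n).eventuallyEq_of_mem ((hU_open n).mem_nhds hz)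
  exact ⟨fun z => N (level z) z,
    fun z _ => (meromorphicNFAt_congr (hglue_nhds _ z (hlevel z))).2 (hN _ (hlevel z)),
    ((hglue_nhds 0 z₀ hz₀).filter_mono nhdsWithin_le_nhds).trans (hN_F 0)⟩

theorem exists_meromorphicNFOn_univ_eqOn {f : ℂ → ℂ} {V : Set ℂ} (hf : AnalyticOnNhd ℂ f V)
    (hV : IsPreconnected V) {U : ℕ → Set ℂ} (hU_open : ∀ n, IsOpen (U n))
    (hU_conn : ∀ n, IsPreconnected (U n)) (hU_mono : Monotone U) (hU_univ : ⋃ n, U n = univ)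
    {F : ℕ → ℂ → ℂ} (hF : ∀ n, MeromorphicOn (F n) (U n)) {z₀ : ℂ} (hz₀ : z₀ ∈ U 0) (hz₀V : z₀ ∈ V)
    (hF_eq : ∀ n, F n =ᶠ[𝓝 z₀] f) :
    ∃ G : ℂ → ℂ, MeromorphicNFOn G univ ∧ EqOn G f V := by
  obtain ⟨G, hG, hG_eq⟩ := exists_meromorphicNFOn_univ_of_exhaustion hU_open hU_conn hU_mono
    hU_univ hF hz₀ fun n => ((hF_eq n).trans (hF_eq 0).symm).filter_mono nhdsWithin_le_nhds
  refine ⟨G, hG, fun z hz => ?_⟩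
  exact (eventuallyEq_of_meromorphicNFOn (fun w _ => hG (mem_univ w)) hf.meromorphicNFOn hV hz₀V
    (hG_eq.trans ((hF_eq 0).filter_mono nhdsWithin_le_nhds)) hz).eq_of_nhds

theorem exists_meromorphicNFOn_univ_eqOn_halfPlane {f : ℂ → ℂ} {c : ℝ}
    (hf : DifferentiableOn ℂ f {s | c < s.re}) {F : ℕ → ℂ → ℂ}
    (hF : ∀ n : ℕ, MeromorphicOn (F n) {s | c - n < s.re})
    (hF_eq : ∀ n, EqOn (F n) f {s | c < s.re}) :
    ∃ G : ℂ → ℂ, MeromorphicNFOn G univ ∧ EqOn G f {s | c < s.re} := by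
  have hopen : ∀ r : ℝ, IsOpen {s : ℂ | r < s.re} := fun r =>
    isOpen_lt continuous_const Complex.continuous_re
  have hconn : ∀ r : ℝ, IsPreconnected {s : ℂ | r < s.re} := fun r =>
    (convex_halfSpace_re_gt r).isPreconnected
  have hmem : ((c + 1 : ℝ) : ℂ) ∈ {s : ℂ | c < s.re} := by simp
  refine exists_meromorphicNFOn_univ_eqOn (hf.analyticOnNhd (hopen c)) (hconn c)
    (fun n => hopen (c - n)) (fun n => hconn (c - n)) (fun m n hmn s hs => ?_)
    (eq_univ_of_forall fun s => mem_iUnion.2 ?_) hF (by simp) hmem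
    fun n => (hF_eq n).eventuallyEq_of_mem ((hopen c).mem_nhds hmem)
  · have : (m : ℝ) ≤ n := Nat.cast_le.2 hmn
    exact (sub_le_sub_left this c).trans_lt hs
  · obtain ⟨n, hn⟩ := exists_nat_gt (c - s.re)
    exact ⟨n, by simpa using sub_lt_comm.1 hn⟩

theorem meromorphicAt_riemannZeta (s : ℂ) : MeromorphicAt riemannZeta s := by
  have hprod : MeromorphicAt (fun s => (s - 1)⁻¹ * riemannZeta₁ s) s :=
    (meromorphicAt_of_differentiable (by fun_prop : Differentiable ℂ fun s : ℂ => s - 1) s).inv.mul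
      (meromorphicAt_of_differentiable differentiable_riemannZeta₁ s)
  refine hprod.congr ?_
  filter_upwards [nhdsNE_le_cofinite s (eventually_cofinite_ne 1)] with x hx
  rw [riemannZeta_eq_inv_sub_mul hx]

/-! ### Power expansions and the continuation of Mellin transforms -/

/-- `f x ∼ ∑ₙ bₙ x ^ (m + n)` as `x → 0⁺`, in the sense of asymptotic expansions. -/
def HasPowerExpansion (m : ℕ) (f : ℝ → ℂ) (b : ℕ → ℂ) : Prop :=
  ∀ N : ℕ, (fun x : ℝ => f x - ∑ n ∈ Finset.range N, b n * (x : ℂ) ^ (m + n)) =O[𝓝[>] 0]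
    fun x : ℝ => x ^ (m + N)

theorem exists_hasPowerExpansion_of_analyticAt {φ : ℝ → ℂ} (hφ : AnalyticAt ℝ φ 0) (m : ℕ) :
    ∃ b : ℕ → ℂ, HasPowerExpansion m (fun x => (x : ℂ) ^ m * φ x) b := by
  obtain ⟨p, hp⟩ := hφ
  refine ⟨p.coeff, fun N => ?_⟩
  have htaylor := (hp.isBigO_sub_partialSum_pow N).mono (nhdsWithin_le_nhds (s := Ioi 0))
  have hpow : (fun x : ℝ => (x : ℂ) ^ m) =O[𝓝[>] 0] fun x : ℝ => x ^ m :=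
    isBigO_of_le _ fun x => by simp
  refine ((hpow.mul htaylor).congr (fun x => ?_) fun x => rfl).trans (isBigO_of_le _ fun x => ?_)
  · simp only [zero_add, FormalMultilinearSeries.partialSum,
      FormalMultilinearSeries.apply_eq_pow_smul_coeff, Complex.real_smul, Complex.ofReal_pow,
      mul_sub, Finset.mul_sum]
    congr 1
    exact Finset.sum_congr rfl fun n _ => by ring
  · simp [pow_add]

namespace HasPowerExpansion

variable {m : ℕ} {f g : ℝ → ℂ} {b : ℕ → ℂ}

theorem congr' (hf : HasPowerExpansion m f b) (hfg : f =ᶠ[𝓝[>] 0] g) :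
    HasPowerExpansion m g b := fun N =>
  (hf N).congr' (hfg.mono fun x hx => by simp only [hx]) EventuallyEq.rfl

theorem isBigO (hf : HasPowerExpansion m f b) : f =O[𝓝[>] 0] fun x : ℝ => x ^ m := by
  simpa using hf 0

end HasPowerExpansion

theorem exists_norm_le_mul_pow_of_isBigO {f : ℝ → ℂ} (hf : ContinuousOn f (Ioi 0)) {m : ℕ}
    (hf0 : f =O[𝓝[>] 0] fun x : ℝ => x ^ m) :
    ∃ C : ℝ, ∀ x ∈ Ioc (0 : ℝ) 1, ‖f x‖ ≤ C * x ^ m := by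
  obtain ⟨C₀, hC₀⟩ := hf0.bound
  obtain ⟨ε, hε, hε_bound⟩ := (nhdsGT_basis (0 : ℝ)).eventually_iff.1 hC₀
  obtain ⟨C₁, hC₁⟩ := isCompact_Icc.exists_bound_of_continuousOn (s := Icc (ε / 2) 1)
    (f := fun x : ℝ => f x / x ^ m) <| by
      have hpos : Icc (ε / 2) 1 ⊆ Ioi 0 := fun x hx => (half_pos hε).trans_le hx.1
      refine (hf.mono hpos).div (by fun_prop) fun x hx => ?_
      exact_mod_cast (pow_pos (mem_Ioi.1 (hpos hx)) m).ne'
  refine ⟨max C₀ C₁, fun x hx => ?_⟩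
  have hxm : 0 < x ^ m := pow_pos hx.1 m
  have hnorm : ‖x ^ m‖ = x ^ m := Real.norm_of_nonneg hxm.le
  rw [← div_le_iff₀ hxm]
  rcases lt_or_ge x ε with hxε | hxε
  · refine le_max_of_le_left ((div_le_iff₀ hxm).2 ?_)
    simpa only [hnorm] using hε_bound ⟨hx.1, hxε⟩
  · refine le_max_of_le_right ?_
    simpa [abs_of_pos hx.1] using hC₁ x ⟨by linarith, hx.2⟩

theorem isBigO_rpow_neg_of_isBigO_pow {f : ℝ → ℂ} {m : ℕ}
    (hf : f =O[𝓝[>] 0] fun x : ℝ => x ^ m) : f =O[𝓝[>] 0] fun x : ℝ => x ^ (-(-m : ℝ)) := by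
  simpa using hf

theorem isBigO_atTop_rpow_of_isBigO_comp_inv {f : ℝ → ℂ} {m : ℕ}
    (hf : (fun x => f x⁻¹) =O[𝓝[>] 0] fun x : ℝ => x ^ m) :
    f =O[atTop] fun x : ℝ => x ^ (-m : ℝ) := by
  refine ((hf.comp_tendsto tendsto_inv_atTop_nhdsGT_zero).congr' (.of_forall fun x => ?_) ?_)
  · simp
  · filter_upwards [eventually_ge_atTop 0] with x hx
    simp [Real.rpow_neg hx]

theorem locallyIntegrableOn_indicator {f : ℝ → ℂ} {S T : Set ℝ} (hf : LocallyIntegrableOn f S)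
    (hT : MeasurableSet T) : LocallyIntegrableOn (T.indicator f) S := fun x hx =>
  let ⟨u, hu, hint⟩ := hf x hx
  ⟨u, hu, hint.indicator hT⟩

theorem isBigO_atTop_of_eqOn_zero {f : ℝ → ℂ} (hf : ∀ x, 1 < x → f x = 0) (g : ℝ → ℝ) :
    f =O[atTop] g :=
  (isBigO_zero g atTop).congr' ((eventually_gt_atTop 1).mono fun x hx => (hf x hx).symm)
    EventuallyEq.rfl

section MellinContinuation

variable {m : ℕ} {f : ℝ → ℂ} {b : ℕ → ℂ} {s : ℂ}

/-- `f` minus the first `N` terms of `∑ₙ bₙ x ^ (m + n)`, these terms being cut off outside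
`(0, 1]` in order not to change the behaviour of `f` at infinity. -/
noncomputable def expansionRemainder (m : ℕ) (f : ℝ → ℂ) (b : ℕ → ℂ) (N : ℕ) (x : ℝ) : ℂ :=
  f x - (Ioc 0 1).indicator (fun t : ℝ => ∑ n ∈ Finset.range N, b n * (t : ℂ) ^ (m + n)) x

theorem hasMellin_indicator_sum_pow (hs : -m < s.re) (b : ℕ → ℂ) (N : ℕ) :
    HasMellin ((Ioc 0 1).indicator fun t : ℝ => ∑ n ∈ Finset.range N, b n * (t : ℂ) ^ (m + n)) s
      (∑ n ∈ Finset.range N, b n / (s + (m + n : ℕ))) := by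
  have hpow : ∀ n, HasMellin ((Ioc 0 1).indicator fun t : ℝ => b n * (t : ℂ) ^ (m + n)) s
      (b n / (s + (m + n : ℕ))) := fun n => by
    have hmono := hasMellin_cpow_Ioc ((m + n : ℕ) : ℂ) (s := s)
      (by rw [Complex.natCast_re]; push_cast; linarith [(n.cast_nonneg : (0 : ℝ) ≤ n)])
    simp only [Complex.cpow_natCast] at hmono
    have hsmul := hasMellin_const_smul hmono.1 (b n)
    rw [hmono.2, smul_eq_mul, mul_one_div] at hsmul
    have hfun := indicator_const_smul (Ioc 0 1) (b n) fun t : ℝ => (t : ℂ) ^ (m + n)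
    simp only [smul_eq_mul] at hfun
    rw [hfun]
    exact hsmul
  induction N with
  | zero => simp [HasMellin, MellinConvergent, mellin]
  | succ N ih =>
    have hadd := hasMellin_add ih.1 (hpow N).1
    rw [ih.2, (hpow N).2] at hadd
    simp only [Finset.sum_range_succ]
    convert hadd using 1
    exact indicator_add _ _ _

theorem mellin_eq_mellin_expansionRemainder_add (hf : LocallyIntegrableOn f (Ioi 0))
    (hf1 : ∀ x, 1 < x → f x = 0) (hf0 : f =O[𝓝[>] 0] fun x : ℝ => x ^ m) (b : ℕ → ℂ) (N : ℕ)
    (hs : -m < s.re) :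
    mellin f s = mellin (expansionRemainder m f b N) s +
      ∑ n ∈ Finset.range N, b n / (s + (m + n : ℕ)) := by
  have hf_conv : MellinConvergent f s :=
    mellinConvergent_of_isBigO_rpow hf (isBigO_atTop_of_eqOn_zero hf1 _) (lt_add_one s.re)
      (isBigO_rpow_neg_of_isBigO_pow hf0) hs
  have hpoly := hasMellin_indicator_sum_pow hs b N
  have hsub := (hasMellin_sub hf_conv hpoly.1).2
  rw [hpoly.2] at hsub
  exact (sub_eq_iff_eq_add.1 hsub.symm)

theorem differentiableAt_mellin_expansionRemainder (hf : LocallyIntegrableOn f (Ioi 0))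
    (hf1 : ∀ x, 1 < x → f x = 0) (hf0 : HasPowerExpansion m f b) {N : ℕ}
    (hs : -((m + N : ℕ) : ℝ) < s.re) :
    DifferentiableAt ℂ (mellin (expansionRemainder m f b N)) s := by
  refine mellin_differentiableAt_of_isBigO_rpow (hf.sub (locallyIntegrableOn_indicator ?_
    measurableSet_Ioc)) (isBigO_atTop_of_eqOn_zero (fun x hx => ?_) _) (lt_add_one s.re)
    (isBigO_rpow_neg_of_isBigO_pow (m := m + N) ?_) hs
  · exact (by fun_prop : Continuous _).locallyIntegrable.locallyIntegrableOn _
  · simp [expansionRemainder, hf1 x hx, hx.not_ge]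
  · refine (hf0 N).congr' ?_ EventuallyEq.rfl
    filter_upwards [Ioc_mem_nhdsGT one_pos] with x hx
    simp only [expansionRemainder, indicator_of_mem hx]

theorem exists_meromorphicNFOn_mellin_of_eqOn_zero (hf : LocallyIntegrableOn f (Ioi 0))
    (hf1 : ∀ x, 1 < x → f x = 0) (hf0 : HasPowerExpansion m f b) :
    ∃ G : ℂ → ℂ, MeromorphicNFOn G univ ∧ EqOn G (mellin f) {s | -m < s.re} := by
  refine exists_meromorphicNFOn_univ_eqOn_halfPlane
    (fun s hs => DifferentiableAt.differentiableWithinAt ?_)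
    (F := fun N s => mellin (expansionRemainder m f b N) s +
      ∑ n ∈ Finset.range N, b n / (s + (m + n : ℕ))) (fun N => ?_) fun N s hs =>
    (mellin_eq_mellin_expansionRemainder_add hf hf1 hf0.isBigO b N hs).symm
  · have hzero : expansionRemainder m f b 0 = f := funext fun x => by simp [expansionRemainder]
    simpa only [hzero] using
      differentiableAt_mellin_expansionRemainder (N := 0) hf hf1 hf0 (by simpa using hs)
  · have hrem : MeromorphicOn (mellin (expansionRemainder m f b N)) {s | -(m : ℝ) - N < s.re} :=
      meromorphicOn_of_differentiableOn (isOpen_lt continuous_const Complex.continuous_re)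
        fun s hs => (differentiableAt_mellin_expansionRemainder hf hf1 hf0
          (by push_cast; linarith [show -(m : ℝ) - N < s.re from hs])).differentiableWithinAt
    have hpole : ∀ n s, MeromorphicAt (fun s : ℂ => b n / (s + (m + n : ℕ))) s := fun n s => by
      fun_prop
    exact hrem.add fun s _ => MeromorphicAt.fun_sum fun n _ => hpole n s

theorem mellin_eq_add_mellin_neg {m m' : ℝ} (hf : ContinuousOn f (Ioi 0))
    (hf0 : f =O[𝓝[>] 0] fun x : ℝ => x ^ (-m)) (hf_top : f =O[atTop] fun x : ℝ => x ^ (-m'))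
    (hs : m < s.re) (hs' : s.re < m') :
    mellin f s = mellin ((Iic 1).indicator f) s +
      mellin ((Iio 1).indicator fun x => f x⁻¹) (-s) := by
  have hind : ∀ T : Set ℝ, (fun x => T.indicator f x) =O[⊤] f := fun T =>
    isBigO_of_le _ fun x => norm_indicator_le_norm_self f x
  have hconv : ∀ T : Set ℝ, MeasurableSet T → MellinConvergent (T.indicator f) s := fun T hT =>
    mellinConvergent_of_isBigO_rpow
      (locallyIntegrableOn_indicator (hf.locallyIntegrableOn measurableSet_Ioi) hT)
      (((hind T).mono le_top).trans hf_top) hs' (((hind T).mono le_top).trans hf0) hs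
  have hadd := (hasMellin_add (hconv (Iic 1) measurableSet_Iic) (hconv (Ioi 1) measurableSet_Ioi)).2
  have hinv : mellin ((Ioi 1).indicator f) s = mellin ((Iio 1).indicator fun x => f x⁻¹) (-s) := by
    rw [← neg_neg s, ← mellin_comp_inv, neg_neg]
    refine setIntegral_congr_fun measurableSet_Ioi fun x hx => ?_
    simp only [indicator_apply, mem_Ioi, mem_Iio, one_lt_inv₀ (mem_Ioi.1 hx)]
  rw [← hinv, ← hadd]
  congr 1
  exact (indicator_self_add_compl (Iic 1) f).symm.trans (by rw [compl_Iic]; rfl)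

theorem exists_meromorphicOn_mellin {m' : ℕ} {b' : ℕ → ℂ} (hf : ContinuousOn f (Ioi 0))
    (hf0 : HasPowerExpansion m f b) (hf_top : HasPowerExpansion m' (fun x => f x⁻¹) b') :
    ∃ G : ℂ → ℂ, MeromorphicOn G univ ∧ EqOn G (mellin f) {s | -m < s.re ∧ s.re < m'} := by
  have hf_inv : ContinuousOn (fun x => f x⁻¹) (Ioi 0) :=
    hf.comp (continuousOn_inv₀.mono fun x hx => (mem_Ioi.1 hx).ne') fun x hx =>
      mem_Ioi.2 (inv_pos.2 hx)
  have hcut : ∀ T : Set ℝ, Ioo 0 1 ⊆ T → ∀ g : ℝ → ℂ, g =ᶠ[𝓝[>] 0] T.indicator g := fun T hT g => by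
    filter_upwards [Ioo_mem_nhdsGT one_pos] with x hx using (indicator_of_mem (hT hx) g).symm
  obtain ⟨G₀, hG₀, hG₀_eq⟩ := exists_meromorphicNFOn_mellin_of_eqOn_zero
    (locallyIntegrableOn_indicator (hf.locallyIntegrableOn measurableSet_Ioi) measurableSet_Iic)
    (fun x hx => indicator_of_notMem (notMem_Iic.2 hx) f)
    (hf0.congr' (hcut (Iic 1) (fun x hx => hx.2.le) f))
  obtain ⟨G₁, hG₁, hG₁_eq⟩ := exists_meromorphicNFOn_mellin_of_eqOn_zero
    (locallyIntegrableOn_indicator (hf_inv.locallyIntegrableOn measurableSet_Ioi) measurableSet_Iio)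
    (fun x hx => indicator_of_notMem (notMem_Iio.2 hx.le) _)
    (hf_top.congr' (hcut (Iio 1) (fun x hx => hx.2) _))
  refine ⟨fun s => G₀ s + G₁ (-s), fun s _ => ?_, fun s hs => ?_⟩
  · exact (hG₀.meromorphicOn s (mem_univ s)).add
      ((hG₁.meromorphicOn (-s) (mem_univ _)).comp_analyticAt analyticAt_id.neg)
  · simp only
    rw [hG₀_eq hs.1, hG₁_eq (by simpa using hs.2), mellin_eq_add_mellin_neg hf
      (isBigO_rpow_neg_of_isBigO_pow hf0.isBigO)
      (isBigO_atTop_rpow_of_isBigO_comp_inv hf_top.isBigO) hs.1 hs.2]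

end MellinContinuation

/-! ### Frequencies, cutoffs and the low part of the integrals -/

/-- The frequency `(k + 1) * w`; the terms of the series are indexed from `k = 0`. -/
noncomputable def freq (w : ℝ) (k : ℕ) : ℝ := (k + 1) * w

/-- The lower limit `(k + 1) ^ (δ - 1) / w` of the integral in the `k`-th term. -/
noncomputable def cutoff (w δ : ℝ) (k : ℕ) : ℝ := ((k : ℝ) + 1) ^ (δ - 1) / w

section Frequencies

variable {w δ : ℝ} (k : ℕ)

theorem freq_pos (hw : 0 < w) : 0 < freq w k := by
  unfold freq
  positivity

theorem cutoff_pos (hw : 0 < w) : 0 < cutoff w δ k := by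
  unfold cutoff
  positivity

theorem cutoff_le_one (hw : 1 ≤ w) (hδ : δ ≤ 1) : cutoff w δ k ≤ 1 :=
  div_le_one_of_le₀ ((Real.rpow_le_one_of_one_le_of_nonpos (by simp) (by linarith)).trans hw)
    (by linarith)

theorem one_le_freq_mul {u : ℝ} (hw : 0 < w) (hδ : 0 ≤ δ) (hu : cutoff w δ k ≤ u) :
    1 ≤ freq w k * u := by
  have hk : (0 : ℝ) < k + 1 := k.cast_add_one_pos
  calc 1 ≤ ((k : ℝ) + 1) ^ δ := Real.one_le_rpow (by simp) hδ
    _ = freq w k * cutoff w δ k := by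
      rw [freq, cutoff, Real.rpow_sub_one hk.ne']
      field_simp
    _ ≤ freq w k * u := mul_le_mul_of_nonneg_left hu (freq_pos k hw).le

theorem summable_add_one_rpow {σ : ℝ} (hσ : σ < -1) : Summable fun k : ℕ => ((k : ℝ) + 1) ^ σ := by
  exact_mod_cast (summable_nat_add_iff 1).2 (Real.summable_nat_rpow.2 hσ)

theorem summable_freq_rpow {σ : ℝ} (hw : 0 ≤ w) (hσ : σ < -1) :
    Summable fun k => freq w k ^ σ := by
  refine ((summable_add_one_rpow hσ).mul_right (w ^ σ)).congr fun k => ?_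
  rw [freq, Real.mul_rpow k.cast_add_one_pos.le hw]

theorem hasSum_freq_cpow {s : ℂ} (hw : 0 ≤ w) (hs : 1 < s.re) :
    HasSum (fun k => (freq w k : ℂ) ^ (-s)) ((w : ℂ) ^ (-s) * riemannZeta s) := by
  have hzeta : HasSum (fun k : ℕ => 1 / ((k : ℂ) + 1) ^ s) (riemannZeta s) := by
    rw [zeta_eq_tsum_one_div_nat_add_one_cpow hs]
    refine Summable.hasSum ?_
    exact_mod_cast (summable_nat_add_iff 1).2 (Complex.summable_one_div_nat_cpow.2 hs)
  refine (hzeta.mul_left ((w : ℂ) ^ (-s))).congr_fun fun k => ?_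
  have hk : (k : ℂ) + 1 = ((k + 1 : ℝ) : ℂ) := by push_cast; rfl
  rw [freq, Complex.ofReal_mul, Complex.mul_cpow_ofReal_nonneg k.cast_add_one_pos.le hw, hk,
    Complex.cpow_neg ((k + 1 : ℝ) : ℂ), one_div, mul_comm]

end Frequencies

section MellinIndicator

variable {f : ℝ → ℂ} {s : ℂ} {c : ℝ}

theorem mellin_indicator_Iic (f : ℝ → ℂ) (s : ℂ) (c : ℝ) :
    mellin ((Iic c).indicator f) s = ∫ u in Ioc 0 c, (u : ℂ) ^ (s - 1) * f u := by
  simp only [mellin, smul_eq_mul, ← indicator_mul_right (Iic c) (fun u : ℝ => (u : ℂ) ^ (s - 1))]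
  rw [setIntegral_indicator measurableSet_Iic, Ioi_inter_Iic]

theorem mellin_indicator_Iic_pow (hc : 0 < c) {n : ℕ} (hs : 0 < s.re + n) :
    mellin ((Iic c).indicator fun u : ℝ => (u : ℂ) ^ n) s = (c : ℂ) ^ (s + n) / (s + n) := by
  have hsn : s + n ≠ 0 := fun h => by
    rw [← Complex.natCast_re, ← Complex.add_re, h, Complex.zero_re] at hs
    exact hs.false
  have hmul : ∀ u ∈ Ioc 0 c, (u : ℂ) ^ (s - 1) * (u : ℂ) ^ n = (u : ℂ) ^ (s + n - 1) := by
    intro u hu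
    rw [← Complex.cpow_natCast, ← Complex.cpow_add _ _ (by exact_mod_cast hu.1.ne')]
    ring_nf
  rw [mellin_indicator_Iic, setIntegral_congr_fun measurableSet_Ioc hmul,
    ← intervalIntegral.integral_of_le hc.le, integral_cpow (Or.inl (by simpa using hs)),
    sub_add_cancel, Complex.ofReal_zero, Complex.zero_cpow hsn, sub_zero]

theorem norm_mellin_indicator_Iic_le {C : ℝ} {m : ℕ} (hc : 0 < c)
    (hf : ∀ u ∈ Ioc 0 c, ‖f u‖ ≤ C * u ^ m) (hs : 0 < s.re + m) :
    ‖mellin ((Iic c).indicator f) s‖ ≤ C * (c ^ (s.re + m) / (s.re + m)) := by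
  have hint : IntegrableOn (fun u : ℝ => C * u ^ (s.re + m - 1)) (Ioc 0 c) :=
    ((intervalIntegrable_iff_integrableOn_Ioc_of_le hc.le).1
      (intervalIntegral.intervalIntegrable_rpow' (by linarith))).const_mul C
  have hle : ∀ u ∈ Ioc 0 c, ‖(u : ℂ) ^ (s - 1) * f u‖ ≤ C * u ^ (s.re + m - 1) := fun u hu => by
    calc ‖(u : ℂ) ^ (s - 1) * f u‖ ≤ u ^ (s.re - 1) * (C * u ^ m) := by
          rw [norm_mul, Complex.norm_cpow_eq_rpow_re_of_pos hu.1, Complex.sub_re, Complex.one_re]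
          exact mul_le_mul_of_nonneg_left (hf u hu) (Real.rpow_nonneg hu.1.le _)
      _ = C * u ^ (s.re + m - 1) := by
          rw [← Real.rpow_natCast, mul_left_comm, ← Real.rpow_add hu.1]
          ring_nf
  rw [mellin_indicator_Iic]
  refine (norm_integral_le_of_norm_le hint ((ae_restrict_mem measurableSet_Ioc).mono hle)).trans_eq
    ?_
  rw [integral_const_mul, ← intervalIntegral.integral_of_le hc.le,
    integral_rpow (Or.inl (by linarith)), sub_add_cancel, Real.zero_rpow hs.ne', sub_zero]

theorem mellinConvergent_and_differentiableAt_indicator_Iic {m : ℕ} (hf : ContinuousOn f (Ioi 0))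
    (hf0 : f =O[𝓝[>] 0] fun x : ℝ => x ^ m) (hc : c ≤ 1) (hs : 0 < s.re + m) :
    MellinConvergent ((Iic c).indicator f) s ∧
      DifferentiableAt ℂ (mellin ((Iic c).indicator f)) s := by
  have hloc := locallyIntegrableOn_indicator (T := Iic c)
    (hf.locallyIntegrableOn measurableSet_Ioi) measurableSet_Iic
  have htop := isBigO_atTop_of_eqOn_zero (f := (Iic c).indicator f)
    (fun x hx => indicator_of_notMem (notMem_Iic.2 (hc.trans_lt hx)) f) fun x => x ^ (-(s.re + 1))
  have hzero := isBigO_rpow_neg_of_isBigO_pow (m := m) (f := (Iic c).indicator f)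
    ((isBigO_of_le _ fun x => norm_indicator_le_norm_self f x).trans hf0)
  exact ⟨mellinConvergent_of_isBigO_rpow hloc htop (lt_add_one _) hzero (by linarith),
    mellin_differentiableAt_of_isBigO_rpow hloc htop (lt_add_one _) hzero (by linarith)⟩

end MellinIndicator

theorem re_one_sub_two_mul (z : ℂ) : (1 - 2 * z).re = 1 - 2 * z.re := by simp

/-- The contribution `(freq w k) ^ (-(1 + 2z)) * ∫₀^cutoff u ^ (-2z) f(u) du` of the interval below
the cutoff, the integral being a Mellin transform at `1 - 2z`. -/
noncomputable def lowTerm (w δ : ℝ) (f : ℝ → ℂ) (k : ℕ) (z : ℂ) : ℂ :=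
  (freq w k : ℂ) ^ (-(1 + 2 * z)) * mellin ((Iic (cutoff w δ k)).indicator f) (1 - 2 * z)

/-- The sum over all frequencies of the contributions of the intervals below the cutoffs. -/
noncomputable def lowSum (w δ : ℝ) (f : ℝ → ℂ) (z : ℂ) : ℂ := ∑' k, lowTerm w δ f k z

/-- The domain of absolute convergence of `lowSum` for an amplitude of order `u ^ m` at `0`. -/
def lowRegion (δ : ℝ) (m : ℕ) : Set ℂ :=
  {z | 2 * z.re < m + 1 ∧ 0 < 2 * δ * z.re + (1 - δ) * (m + 1)}

section LowRegion

variable {δ : ℝ}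

theorem isOpen_lowRegion (δ : ℝ) (m : ℕ) : IsOpen (lowRegion δ m) := by
  have hleft : IsOpen {z : ℂ | 2 * z.re < m + 1} := isOpen_lt (by fun_prop) (by fun_prop)
  have hright : IsOpen {z : ℂ | 0 < 2 * δ * z.re + (1 - δ) * (m + 1)} :=
    isOpen_lt (by fun_prop) (by fun_prop)
  exact hleft.inter hright

theorem convex_lowRegion (δ : ℝ) (m : ℕ) : Convex ℝ (lowRegion δ m) := by
  have hlinear : ∀ c : ℝ, IsLinearMap ℝ fun z : ℂ => c * z.re := fun c =>
    (c • Complex.reLm).isLinear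
  have hinter : lowRegion δ m =
      {z : ℂ | 2 * z.re < (m : ℝ) + 1} ∩ {z : ℂ | -((1 - δ) * ((m : ℝ) + 1)) < 2 * δ * z.re} := by
    ext z
    simp only [lowRegion, mem_inter_iff, mem_ofPred_eq, neg_lt_iff_pos_add]
  rw [hinter]
  exact (convex_halfSpace_lt (hlinear 2) _).inter (convex_halfSpace_gt (hlinear (2 * δ)) _)

theorem monotone_lowRegion (hδ : δ ≤ 1) : Monotone (lowRegion δ) := by
  rintro m n hmn z ⟨hz, hz'⟩
  have hcast : (m : ℝ) ≤ n := Nat.cast_le.2 hmn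
  exact ⟨by linarith, hz'.trans_le (by gcongr)⟩

theorem iUnion_lowRegion (hδ : δ < 1) (m : ℕ) : ⋃ N, lowRegion δ (m + N) = univ := by
  refine eq_univ_of_forall fun z => mem_iUnion.2 ?_
  obtain ⟨N, hN⟩ := exists_nat_gt (max (2 * z.re) (-(2 * δ * z.re) / (1 - δ)))
  have hN' := (div_lt_iff₀ (sub_pos.2 hδ)).1 ((le_max_right _ _).trans_lt hN)
  have hm : 0 ≤ (1 - δ) * (m + 1) := mul_nonneg (sub_nonneg.2 hδ.le) (by positivity)
  refine ⟨N, ?_, ?_⟩ <;> push_cast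
  · linarith [(le_max_left _ _).trans_lt hN, (m.cast_nonneg : (0 : ℝ) ≤ m)]
  · linarith

theorem zero_mem_lowRegion (hδ : δ < 1) (m : ℕ) : (0 : ℂ) ∈ lowRegion δ m := by
  have : 0 < 1 - δ := sub_pos.2 hδ
  constructor <;> simp only [Complex.zero_re, mul_zero, zero_add] <;> positivity

end LowRegion

section LowSum

variable {w δ : ℝ} {f : ℝ → ℂ} {m : ℕ} {z : ℂ}

theorem freq_rpow_mul_cutoff_rpow (hw : 0 < w) (k : ℕ) (a b : ℝ) :
    freq w k ^ a * cutoff w δ k ^ b = w ^ (a - b) * ((k : ℝ) + 1) ^ (a + (δ - 1) * b) := by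
  have hk : (0 : ℝ) < k + 1 := k.cast_add_one_pos
  rw [freq, cutoff, Real.mul_rpow hk.le hw.le, Real.div_rpow (by positivity) hw.le,
    ← Real.rpow_mul hk.le, Real.rpow_sub hw, Real.rpow_add hk]
  ring

theorem freq_cpow_mul_cutoff_cpow (hw : 0 < w) (k : ℕ) (a b : ℂ) :
    (freq w k : ℂ) ^ a * (cutoff w δ k : ℂ) ^ b =
      (w : ℂ) ^ (a - b) * ((k + 1 : ℝ) : ℂ) ^ (a + (δ - 1) * b) := by
  have hk : (0 : ℝ) < k + 1 := k.cast_add_one_pos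
  have hlog : Real.log (cutoff w δ k) = (δ - 1) * Real.log (k + 1) - Real.log w := by
    rw [cutoff, Real.log_div (by positivity) hw.ne', Real.log_rpow hk]
  have hcpow : ∀ {x : ℝ}, 0 < x → ∀ e : ℂ, (x : ℂ) ^ e = Complex.exp (Real.log x * e) :=
    fun hx e => by
      rw [Complex.cpow_def_of_ne_zero (by exact_mod_cast hx.ne'), Complex.ofReal_log hx.le]
  rw [hcpow (freq_pos k hw), hcpow (cutoff_pos k hw), hcpow hw, hcpow hk, ← Complex.exp_add,
    ← Complex.exp_add, hlog, freq, Real.log_mul hk.ne' hw.ne']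
  congr 1
  push_cast
  ring

theorem norm_lowTerm_le (hw : 1 ≤ w) (hδ : δ ≤ 1) {C : ℝ}
    (hf : ∀ u ∈ Ioc (0 : ℝ) 1, ‖f u‖ ≤ C * u ^ m) (hz : 2 * z.re < m + 1) (k : ℕ) :
    ‖lowTerm w δ f k z‖ ≤ C * w ^ (-(m + 2) : ℝ) / (m + 1 - 2 * z.re) *
      ((k : ℝ) + 1) ^ (-(1 + (2 * δ * z.re + (1 - δ) * (m + 1)))) := by
  have hw0 : 0 < w := one_pos.trans_le hw
  have hre : (1 - 2 * z).re + m = m + 1 - 2 * z.re := by rw [re_one_sub_two_mul]; ring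
  have hmellin := norm_mellin_indicator_Iic_le (s := 1 - 2 * z) (m := m) (cutoff_pos k hw0)
    (fun u hu => hf u ⟨hu.1, hu.2.trans (cutoff_le_one k hw hδ)⟩) (by rw [hre]; linarith)
  rw [hre] at hmellin
  calc ‖lowTerm w δ f k z‖
      ≤ freq w k ^ (-(1 + 2 * z.re)) *
          (C * (cutoff w δ k ^ (m + 1 - 2 * z.re) / (m + 1 - 2 * z.re))) := by
        rw [lowTerm, norm_mul, Complex.norm_cpow_eq_rpow_re_of_pos (freq_pos k hw0)]
        refine (mul_le_mul_of_nonneg_left hmellin (by positivity [freq_pos k hw0])).trans_eq ?_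
        simp
    _ = C / (m + 1 - 2 * z.re) *
          (freq w k ^ (-(1 + 2 * z.re)) * cutoff w δ k ^ (m + 1 - 2 * z.re)) := by ring
    _ = _ := by
        rw [freq_rpow_mul_cutoff_rpow hw0]
        ring_nf

theorem summable_norm_lowTerm (hw : 1 ≤ w) (hδ : δ ≤ 1) {C : ℝ}
    (hf : ∀ u ∈ Ioc (0 : ℝ) 1, ‖f u‖ ≤ C * u ^ m) (hz : z ∈ lowRegion δ m) :
    Summable fun k => ‖lowTerm w δ f k z‖ := by
  exact .of_nonneg_of_le (fun k => norm_nonneg _) (norm_lowTerm_le hw hδ hf hz.1)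
    ((summable_add_one_rpow (by linarith [hz.2])).mul_left _)

theorem norm_lowSum_le (hw : 1 ≤ w) (hδ : δ ≤ 1) {C : ℝ}
    (hf : ∀ u ∈ Ioc (0 : ℝ) 1, ‖f u‖ ≤ C * u ^ m) (hz : z ∈ lowRegion δ m) :
    ‖lowSum w δ f z‖ ≤ C * (w ^ (-(m + 2) : ℝ) / (m + 1 - 2 * z.re) *
      ∑' k : ℕ, ((k : ℝ) + 1) ^ (-(1 + (2 * δ * z.re + (1 - δ) * (m + 1))))) := by
  rw [← mul_assoc, ← mul_div_assoc, ← tsum_mul_left]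
  exact tsum_of_norm_bounded ((summable_add_one_rpow (by linarith [hz.2])).mul_left _).hasSum
    (norm_lowTerm_le hw hδ hf hz.1)

theorem differentiableAt_lowTerm (hw : 1 ≤ w) (hδ : δ ≤ 1) (hf : ContinuousOn f (Ioi 0))
    (hf0 : f =O[𝓝[>] 0] fun x : ℝ => x ^ m) (hz : 2 * z.re < m + 1) (k : ℕ) :
    DifferentiableAt ℂ (lowTerm w δ f k) z := by
  have hfreq : (freq w k : ℂ) ≠ 0 := by exact_mod_cast (freq_pos k (one_pos.trans_le hw)).ne'
  have hmellin := (mellinConvergent_and_differentiableAt_indicator_Iic hf hf0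
    (cutoff_le_one (δ := δ) k hw hδ) (s := 1 - 2 * z) (by rw [re_one_sub_two_mul]; linarith)).2
  exact (DifferentiableAt.const_cpow (by fun_prop) (Or.inl hfreq)).mul
    (DifferentiableAt.comp (g := mellin ((Iic (cutoff w δ k)).indicator f)) z hmellin
      (by fun_prop))

theorem differentiableOn_lowSum (hw : 1 ≤ w) (hδ : δ ≤ 1) (hf : ContinuousOn f (Ioi 0))
    (hf0 : f =O[𝓝[>] 0] fun x : ℝ => x ^ m) :
    DifferentiableOn ℂ (lowSum w δ f) (lowRegion δ m) := by
  obtain ⟨C, hC⟩ := exists_norm_le_mul_pow_of_isBigO hf hf0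
  rintro z₀ ⟨hz₀, hz₀'⟩
  obtain ⟨σ, hσ, hσ'⟩ := exists_between hz₀
  obtain ⟨τ, hτ, hτ'⟩ := exists_between hz₀'
  have hU : IsOpen ({z : ℂ | 2 * z.re < σ} ∩ {z | τ < 2 * δ * z.re + (1 - δ) * (m + 1)}) :=
    (isOpen_lt (by fun_prop) (by fun_prop)).inter (isOpen_lt (by fun_prop) (by fun_prop))
  refine (Complex.differentiableOn_tsum_of_summable_norm
    (u := fun k : ℕ => C * w ^ (-(m + 2) : ℝ) / (m + 1 - σ) * ((k : ℝ) + 1) ^ (-(1 + τ)))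
    ((summable_add_one_rpow (by linarith)).mul_left _) (fun k z hz => ?_) hU
    fun k z hz => ?_).differentiableAt
    (hU.mem_nhds ⟨hσ, hτ'⟩) |>.differentiableWithinAt
  · exact (differentiableAt_lowTerm hw hδ hf hf0 (lt_trans hz.1 hσ') k).differentiableWithinAt
  · have hC0 : 0 ≤ C := by simpa using (norm_nonneg _).trans (hC 1 (by simp))
    have hz1 : 2 * z.re < σ := hz.1
    have hz2 : τ < 2 * δ * z.re + (1 - δ) * (m + 1) := hz.2
    refine (norm_lowTerm_le hw hδ hC (hz1.trans hσ') k).trans ?_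
    gcongr
    linarith

/-- The sum of `lowTerm` for the amplitude `u ^ n`. -/
noncomputable def lowZeta (w δ : ℝ) (n : ℕ) (z : ℂ) : ℂ :=
  (w : ℂ) ^ (-(n + 2) : ℂ) / (n + 1 - 2 * z) *
    riemannZeta (1 + 2 * z + (1 - δ) * (n + 1 - 2 * z))

theorem hasSum_lowTerm_pow (hw : 1 ≤ w) {n : ℕ} (hz : z ∈ lowRegion δ n) :
    HasSum (fun k => lowTerm w δ (fun u => (u : ℂ) ^ n) k z) (lowZeta w δ n z) := by
  have hw0 : 0 < w := one_pos.trans_le hw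
  have hre : (1 - 2 * z).re + n = n + 1 - 2 * z.re := by rw [re_one_sub_two_mul]; ring
  have hzeta := hasSum_freq_cpow (w := 1) (s := 1 + 2 * z + (1 - δ) * (n + 1 - 2 * z)) zero_le_one
    (by simp; linarith [hz.2])
  simp only [Complex.ofReal_one, Complex.one_cpow, one_mul] at hzeta
  refine (hzeta.mul_left _).congr_fun fun k => ?_
  rw [lowTerm, mellin_indicator_Iic_pow (cutoff_pos k hw0) (by rw [hre]; linarith [hz.1]),
    mul_div_assoc', freq_cpow_mul_cutoff_cpow hw0, freq, mul_one]
  have hexp : -(1 + 2 * z) + (δ - 1) * (1 - 2 * z + n) =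
    -(1 + 2 * z + (1 - δ) * (n + 1 - 2 * z)) := by ring
  rw [hexp]
  ring_nf

theorem meromorphicAt_lowZeta (n : ℕ) (z : ℂ) : MeromorphicAt (lowZeta w δ n) z := by
  have hpole : MeromorphicAt (fun z : ℂ => (w : ℂ) ^ (-(n + 2) : ℂ) / (n + 1 - 2 * z)) z := by
    fun_prop
  exact hpole.mul ((meromorphicAt_riemannZeta _).comp_analyticAt (by fun_prop))

theorem isBigO_const_mul_pow (c : ℂ) {n : ℕ} (hmn : m ≤ n) :
    (fun x : ℝ => c * (x : ℂ) ^ n) =O[𝓝[>] 0] fun x : ℝ => x ^ m := by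
  refine IsBigO.const_mul_left (IsBigO.of_bound 1 ?_) c
  filter_upwards [Ioc_mem_nhdsGT one_pos] with x hx
  simpa [abs_of_pos hx.1] using pow_le_pow_of_le_one hx.1.le hx.2 hmn

theorem lowSum_eq_lowSum_sub_add (hw : 1 ≤ w) (hδ : δ ≤ 1) (hf : ContinuousOn f (Ioi 0))
    (hf0 : f =O[𝓝[>] 0] fun x : ℝ => x ^ m) (c : ℂ) {n : ℕ} (hmn : m ≤ n)
    (hz : z ∈ lowRegion δ m) :
    lowSum w δ f z = lowSum w δ (fun x => f x - c * (x : ℂ) ^ n) z + c * lowZeta w δ n z := by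
  have hpow0 := isBigO_const_mul_pow c hmn
  have hpow : ContinuousOn (fun x : ℝ => c * (x : ℂ) ^ n) (Ioi 0) := by fun_prop
  obtain ⟨C, hC⟩ := exists_norm_le_mul_pow_of_isBigO (hf.sub hpow) (hf0.sub hpow0)
  have hsum := (summable_norm_lowTerm hw hδ hC hz).of_norm.hasSum.add
    ((hasSum_lowTerm_pow hw (monotone_lowRegion hδ hmn hz)).mul_left c)
  refine (hsum.congr_fun fun k => ?_).tsum_eq
  have hconv : ∀ {g : ℝ → ℂ}, ContinuousOn g (Ioi 0) → (g =O[𝓝[>] 0] fun x : ℝ => x ^ m) →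
      MellinConvergent ((Iic (cutoff w δ k)).indicator g) (1 - 2 * z) := fun hg hg0 =>
    (mellinConvergent_and_differentiableAt_indicator_Iic hg hg0 (cutoff_le_one k hw hδ)
      (by rw [re_one_sub_two_mul]; linarith [hz.1])).1
  have hsplit : (Iic (cutoff w δ k)).indicator f =
      (Iic (cutoff w δ k)).indicator (fun x => f x - c * (x : ℂ) ^ n) +
        c • (Iic (cutoff w δ k)).indicator fun x : ℝ => (x : ℂ) ^ n := by
    ext x
    by_cases hx : x ∈ Iic (cutoff w δ k) <;> simp [hx]
  have hmono := hconv (g := fun x : ℝ => (x : ℂ) ^ n) (by fun_prop)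
    (by simpa using isBigO_const_mul_pow 1 hmn)
  have hmellin := (hasMellin_add (hconv (hf.sub hpow) (hf0.sub hpow0)) (hmono.const_smul c)).2
  rw [lowTerm, lowTerm, lowTerm, hsplit]
  refine (congrArg _ hmellin).trans ?_
  rw [mellin_const_smul, smul_eq_mul]
  ring

theorem lowSum_eq_lowSum_sub_sum_add (hw : 1 ≤ w) (hδ : δ ≤ 1) (hf : ContinuousOn f (Ioi 0))
    (hf0 : f =O[𝓝[>] 0] fun x : ℝ => x ^ m) (b : ℕ → ℂ) (N : ℕ) (hz : z ∈ lowRegion δ m) :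
    lowSum w δ f z =
      lowSum w δ (fun x => f x - ∑ n ∈ Finset.range N, b n * (x : ℂ) ^ (m + n)) z +
        ∑ n ∈ Finset.range N, b n * lowZeta w δ (m + n) z := by
  induction N with
  | zero => simp
  | succ N ih =>
    have hstep := lowSum_eq_lowSum_sub_add hw hδ
      (f := fun x => f x - ∑ n ∈ Finset.range N, b n * (x : ℂ) ^ (m + n)) (hf.sub (by fun_prop))
      (hf0.sub (IsBigO.fun_sum fun n _ => isBigO_const_mul_pow (b n) (Nat.le_add_right m n)))
      (b N) (Nat.le_add_right m N) hz
    simp only [Finset.sum_range_succ, ← sub_sub]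
    rw [ih, hstep]
    ring

theorem exists_meromorphicNFOn_lowSum {b : ℕ → ℂ} (hw : 1 ≤ w) (hδ : δ < 1)
    (hf : ContinuousOn f (Ioi 0)) (hf0 : HasPowerExpansion m f b) :
    ∃ G : ℂ → ℂ, MeromorphicNFOn G univ ∧ EqOn G (lowSum w δ f) (lowRegion δ m) := by
  refine exists_meromorphicNFOn_univ_eqOn
    ((differentiableOn_lowSum hw hδ.le hf hf0.isBigO).analyticOnNhd (isOpen_lowRegion δ m))
    (convex_lowRegion δ m).isPreconnected (U := fun N => lowRegion δ (m + N))
    (fun N => isOpen_lowRegion δ _) (fun N => (convex_lowRegion δ _).isPreconnected)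
    ((monotone_lowRegion hδ.le).comp fun _ _ h => Nat.add_le_add_left h m) (iUnion_lowRegion hδ m)
    (F := fun N z => lowSum w δ (fun x => f x - ∑ n ∈ Finset.range N, b n * (x : ℂ) ^ (m + n)) z +
      ∑ n ∈ Finset.range N, b n * lowZeta w δ (m + n) z) (fun N => ?_)
    (zero_mem_lowRegion hδ _) (zero_mem_lowRegion hδ m) fun N => ?_
  · exact (meromorphicOn_of_differentiableOn (isOpen_lowRegion δ _)
      (differentiableOn_lowSum hw hδ.le (hf.sub (by fun_prop)) (hf0 N))).add fun z _ =>
      MeromorphicAt.fun_sum fun n _ => (MeromorphicAt.const _ z).mul (meromorphicAt_lowZeta _ z)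
  · filter_upwards [(isOpen_lowRegion δ m).mem_nhds (zero_mem_lowRegion hδ m)] with z hz
    exact (lowSum_eq_lowSum_sub_sum_add hw hδ.le hf hf0.isBigO b N hz).symm

end LowSum

/-! ### Sums of weighted integrals above the cutoffs -/

/-- The amplitudes for which the sums of integrals can be continued: continuous on `(0, ∞)`, with
asymptotic expansions in powers of `u` starting with `u` at `0` and with `u ^ (-2)` at `∞`. -/
structure IsAmplitude (f : ℝ → ℂ) : Prop where
  continuousOn : ContinuousOn f (Ioi 0)
  exists_expansion_zero : ∃ b, HasPowerExpansion 1 f b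
  exists_expansion_atTop : ∃ b, HasPowerExpansion 2 (fun x => f x⁻¹) b

namespace IsAmplitude

variable {f : ℝ → ℂ} {s : ℂ}

theorem isBigO_zero (hf : IsAmplitude f) : f =O[𝓝[>] 0] fun x : ℝ => x ^ 1 :=
  let ⟨_, hb⟩ := hf.exists_expansion_zero
  hb.isBigO

theorem isBigO_atTop (hf : IsAmplitude f) : f =O[atTop] fun x : ℝ => x ^ (-(2 : ℕ) : ℝ) :=
  let ⟨_, hb⟩ := hf.exists_expansion_atTop
  isBigO_atTop_rpow_of_isBigO_comp_inv hb.isBigO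

theorem mellinConvergent (hf : IsAmplitude f) (hs : -1 < s.re) (hs' : s.re < 2) :
    MellinConvergent f s :=
  mellinConvergent_of_isBigO_rpow (hf.continuousOn.locallyIntegrableOn measurableSet_Ioi)
    hf.isBigO_atTop (by simpa using hs') (isBigO_rpow_neg_of_isBigO_pow hf.isBigO_zero)
    (by simpa using hs)

theorem hasDerivAt_mellin (hf : IsAmplitude f) (hs : -1 < s.re) (hs' : s.re < 2) :
    HasDerivAt (mellin f) (mellin (fun t => Real.log t • f t) s) s :=
  (mellin_hasDerivAt_of_isBigO_rpow (hf.continuousOn.locallyIntegrableOn measurableSet_Ioi)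
    hf.isBigO_atTop (by simpa using hs') (isBigO_rpow_neg_of_isBigO_pow hf.isBigO_zero)
    (by simpa using hs)).2

theorem integrableOn_rpow_mul_norm (hf : IsAmplitude f) {τ : ℝ} (hτ : -1 < τ) (hτ' : τ < 2) :
    IntegrableOn (fun u : ℝ => u ^ (-τ) * ‖f u‖) (Ioi 0) := by
  have hconv := hf.mellinConvergent (s := (1 - τ : ℝ)) (by rw [Complex.ofReal_re]; linarith)
    (by rw [Complex.ofReal_re]; linarith)
  refine IntegrableOn.congr_fun hconv.norm (fun u hu => ?_) measurableSet_Ioi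
  simp only [norm_smul, Complex.norm_cpow_eq_rpow_re_of_pos (mem_Ioi.1 hu), Complex.sub_re,
    Complex.ofReal_re, Complex.one_re, sub_sub_cancel_left]

end IsAmplitude

/-- The integral over `(cutoff, ∞)` of the amplitude `f` against the kernel `ψ` at the `k`-th
frequency, normalised by that frequency. -/
noncomputable def weightedTerm (w δ : ℝ) (ψ : ℝ → ℂ) (f : ℝ → ℂ) (k : ℕ) : ℂ :=
  (freq w k : ℂ)⁻¹ * ∫ u in Ioi (cutoff w δ k), ψ (freq w k * u) * f u

/-- The sum of the weighted integrals over all frequencies. -/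
noncomputable def weightedSum (w δ : ℝ) (ψ : ℝ → ℂ) (f : ℝ → ℂ) : ℂ :=
  ∑' k, weightedTerm w δ ψ f k

section WeightedTerm

variable {w δ C τ : ℝ} {f ψ φ : ℝ → ℂ} (k : ℕ)

theorem norm_kernel_mul_le (hw : 0 < w) (hδ : 0 ≤ δ) (hψ : ∀ t, 1 ≤ t → ‖ψ t‖ ≤ C * t ^ (-τ))
    {u : ℝ} (hu : u ∈ Ioi (cutoff w δ k)) :
    ‖ψ (freq w k * u) * f u‖ ≤ C * freq w k ^ (-τ) * (u ^ (-τ) * ‖f u‖) := by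
  have hu0 : 0 < u := (cutoff_pos k hw).trans hu
  calc ‖ψ (freq w k * u) * f u‖ ≤ C * (freq w k * u) ^ (-τ) * ‖f u‖ := by
        rw [norm_mul]
        exact mul_le_mul_of_nonneg_right (hψ _ (one_le_freq_mul k hw hδ (mem_Ioi.1 hu).le))
          (norm_nonneg _)
    _ = C * freq w k ^ (-τ) * (u ^ (-τ) * ‖f u‖) := by
        rw [Real.mul_rpow (freq_pos k hw).le hu0.le]
        ring

theorem integrableOn_rpow_mul_norm_Ioi_cutoff (hw : 0 < w) (hf : IsAmplitude f) (hτ : -1 < τ)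
    (hτ' : τ < 2) : IntegrableOn (fun u : ℝ => u ^ (-τ) * ‖f u‖) (Ioi (cutoff w δ k)) :=
  (hf.integrableOn_rpow_mul_norm hτ hτ').mono_set (Ioi_subset_Ioi (cutoff_pos k hw).le)

theorem aestronglyMeasurable_kernel_mul (hw : 0 < w) (hδ : 0 ≤ δ) (hf : IsAmplitude f)
    (hψ : ContinuousOn ψ (Ici 1)) :
    AEStronglyMeasurable (fun u => ψ (freq w k * u) * f u)
      (volume.restrict (Ioi (cutoff w δ k))) := by
  refine ContinuousOn.aestronglyMeasurable (ContinuousOn.mul ?_ ?_) measurableSet_Ioi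
  · exact hψ.comp (by fun_prop) fun u hu => one_le_freq_mul k hw hδ (mem_Ioi.1 hu).le
  · exact hf.continuousOn.mono (Ioi_subset_Ioi (cutoff_pos k hw).le)

theorem integrableOn_kernel_mul (hw : 0 < w) (hδ : 0 ≤ δ) (hf : IsAmplitude f)
    (hψ : ContinuousOn ψ (Ici 1)) (hτ : -1 < τ) (hτ' : τ < 2)
    (hψ_le : ∀ t, 1 ≤ t → ‖ψ t‖ ≤ C * t ^ (-τ)) :
    IntegrableOn (fun u => ψ (freq w k * u) * f u) (Ioi (cutoff w δ k)) :=
  ((integrableOn_rpow_mul_norm_Ioi_cutoff k hw hf hτ hτ').const_mul _).mono'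
    (aestronglyMeasurable_kernel_mul k hw hδ hf hψ)
    ((ae_restrict_mem measurableSet_Ioi).mono fun _ hu => norm_kernel_mul_le k hw hδ hψ_le hu)

theorem norm_weightedTerm_le (hw : 0 < w) (hδ : 0 ≤ δ) (hf : IsAmplitude f) (hτ : -1 < τ)
    (hτ' : τ < 2) (hψ : ∀ t, 1 ≤ t → ‖ψ t‖ ≤ C * t ^ (-τ)) :
    ‖weightedTerm w δ ψ f k‖ ≤
      C * (∫ u in Ioi 0, u ^ (-τ) * ‖f u‖) * freq w k ^ (-(1 + τ)) := by
  have hfreq : 0 < freq w k := freq_pos k hw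
  have hC : 0 ≤ C := by simpa using (norm_nonneg _).trans (hψ 1 le_rfl)
  calc ‖weightedTerm w δ ψ f k‖
      ≤ (freq w k)⁻¹ *
          ∫ u in Ioi (cutoff w δ k), C * freq w k ^ (-τ) * (u ^ (-τ) * ‖f u‖) := by
        rw [weightedTerm, norm_mul, norm_inv, Complex.norm_of_nonneg hfreq.le]
        gcongr
        exact norm_integral_le_of_norm_le
          ((integrableOn_rpow_mul_norm_Ioi_cutoff k hw hf hτ hτ').const_mul _)
          ((ae_restrict_mem measurableSet_Ioi).mono fun _ hu => norm_kernel_mul_le k hw hδ hψ hu)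
    _ ≤ (freq w k)⁻¹ * (C * freq w k ^ (-τ) * ∫ u in Ioi 0, u ^ (-τ) * ‖f u‖) := by
        rw [integral_const_mul]
        refine mul_le_mul_of_nonneg_left (mul_le_mul_of_nonneg_left (setIntegral_mono_set
          (hf.integrableOn_rpow_mul_norm hτ hτ') ?_
          (Ioi_subset_Ioi (cutoff_pos k hw).le).eventuallyLE) (by positivity)) (by positivity)
        filter_upwards [ae_restrict_mem measurableSet_Ioi] with u hu
        exact mul_nonneg (Real.rpow_nonneg (mem_Ioi.1 hu).le _) (norm_nonneg _)
    _ = _ := by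
        rw [neg_add, Real.rpow_add hfreq, Real.rpow_neg_one]
        ring

end WeightedTerm

/-- Entire families of kernels on `[1, ∞)`, those of parameter `s` being dominated by
`t ^ (-(2 re s + κ))` locally uniformly in `s`. -/
structure IsKernelFamily (κ : ℝ) (ψ : ℂ → ℝ → ℂ) : Prop where
  continuousOn : ∀ s, ContinuousOn (ψ s) (Ici 1)
  differentiable : ∀ t, 1 ≤ t → Differentiable ℂ fun s => ψ s t
  exists_bound : ∀ ρ : ℝ, ∃ C : ℝ, ∀ s : ℂ, ‖s‖ ≤ ρ → ∀ t, 1 ≤ t →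
    ‖ψ s t‖ ≤ C * t ^ (-(2 * s.re + κ))

namespace IsKernelFamily

variable {κ w δ : ℝ} {ψ : ℂ → ℝ → ℂ} {f : ℝ → ℂ} {K : Set ℂ} {s : ℂ}

theorem exists_bound_of_isCompact (hψ : IsKernelFamily κ ψ) (hK : IsCompact K)
    (hK_pos : ∀ s ∈ K, 0 < 2 * s.re + κ) :
    ∃ C τ : ℝ, 0 < τ ∧ τ < 2 ∧ ∀ s ∈ K, ∀ t, 1 ≤ t → ‖ψ s t‖ ≤ C * t ^ (-τ) := by
  obtain ⟨ρ, hρ⟩ := hK.isBounded.exists_norm_le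
  obtain ⟨C, hC⟩ := hψ.exists_bound ρ
  obtain ⟨σ, hσ, hσ_le⟩ : ∃ σ, 0 < σ ∧ ∀ s ∈ K, σ ≤ 2 * s.re + κ := by
    rcases K.eq_empty_or_nonempty with rfl | hne
    · exact ⟨1, one_pos, by simp⟩
    · obtain ⟨s₀, hs₀, hmin⟩ := hK.exists_isMinOn hne
        (by fun_prop : ContinuousOn (fun s : ℂ => 2 * s.re + κ) K)
      exact ⟨_, hK_pos s₀ hs₀, fun s hs => hmin hs⟩
  refine ⟨C, min σ 1, by positivity, (min_le_right σ 1).trans_lt one_lt_two, fun s hs t ht => ?_⟩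
  refine (hC s (hρ s hs) t ht).trans ?_
  have hC0 : 0 ≤ C := by simpa using (norm_nonneg _).trans (hC s (hρ s hs) 1 le_rfl)
  gcongr
  exact (min_le_left σ 1).trans (hσ_le s hs)

theorem exists_summable_bound (hψ : IsKernelFamily κ ψ) (hw : 0 < w) (hδ : 0 ≤ δ)
    (hf : IsAmplitude f) (hK : IsCompact K) (hK_pos : ∀ s ∈ K, 0 < 2 * s.re + κ) :
    ∃ u : ℕ → ℝ, Summable u ∧ ∀ k, ∀ s ∈ K, ‖weightedTerm w δ (ψ s) f k‖ ≤ u k := by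
  obtain ⟨C, τ, hτ, hτ', hC⟩ := hψ.exists_bound_of_isCompact hK hK_pos
  exact ⟨_, (summable_freq_rpow hw.le (by linarith)).mul_left _, fun k s hs =>
    norm_weightedTerm_le k hw hδ hf (by linarith) hτ' (hC s hs)⟩

theorem summable_norm_weightedTerm (hψ : IsKernelFamily κ ψ) (hw : 0 < w) (hδ : 0 ≤ δ)
    (hf : IsAmplitude f) (hs : 0 < 2 * s.re + κ) :
    Summable fun k => ‖weightedTerm w δ (ψ s) f k‖ := by
  obtain ⟨u, hu, hle⟩ := hψ.exists_summable_bound hw hδ hf isCompact_singleton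
    (by rintro _ rfl; exact hs)
  exact .of_nonneg_of_le (fun k => norm_nonneg _) (fun k => hle k s rfl) hu

theorem integrableOn_mul (hψ : IsKernelFamily κ ψ) (hw : 0 < w) (hδ : 0 ≤ δ)
    (hf : IsAmplitude f) (hs : 0 < 2 * s.re + κ) (k : ℕ) :
    IntegrableOn (fun u => ψ s (freq w k * u) * f u) (Ioi (cutoff w δ k)) := by
  obtain ⟨C, τ, hτ, hτ', hC⟩ := hψ.exists_bound_of_isCompact isCompact_singleton
    (by rintro _ rfl; exact hs)
  exact integrableOn_kernel_mul k hw hδ hf (hψ.continuousOn s) (by linarith) hτ' (hC s rfl)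

theorem isOpen_setOf_pos (κ : ℝ) : IsOpen {s : ℂ | 0 < 2 * s.re + κ} :=
  isOpen_lt (by fun_prop) (by fun_prop)

theorem differentiableOn_weightedTerm (hψ : IsKernelFamily κ ψ) (hw : 0 < w) (hδ : 0 ≤ δ)
    (hf : IsAmplitude f) (k : ℕ) :
    DifferentiableOn ℂ (fun s => weightedTerm w δ (ψ s) f k) {s | 0 < 2 * s.re + κ} := by
  intro s₀ hs₀
  obtain ⟨K, hK, hs₀K, hK_pos⟩ := exists_compact_subset (isOpen_setOf_pos κ) hs₀
  obtain ⟨C, τ, hτ, hτ', hC⟩ := hψ.exists_bound_of_isCompact hK fun s hs => hK_pos hs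
  refine DifferentiableAt.differentiableWithinAt (DifferentiableAt.const_mul ?_ _)
  refine (differentiableOn_integral_of_dominated isOpen_interior
    ((integrableOn_rpow_mul_norm_Ioi_cutoff k hw hf (by linarith) hτ').const_mul
      (C * freq w k ^ (-τ))) (fun s _ => aestronglyMeasurable_kernel_mul k hw hδ hf
        (hψ.continuousOn s)) ?_ ?_).differentiableAt (isOpen_interior.mem_nhds hs₀K)
  · filter_upwards [ae_restrict_mem measurableSet_Ioi] with u hu
    exact ((hψ.differentiable _ (one_le_freq_mul k hw hδ (mem_Ioi.1 hu).le)).mul_const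
      (f u)).differentiableOn
  · filter_upwards [ae_restrict_mem measurableSet_Ioi] with u hu s hs
    exact norm_kernel_mul_le k hw hδ (hC s (interior_subset hs)) hu

theorem tendstoLocallyUniformlyOn_sum_weightedTerm (hψ : IsKernelFamily κ ψ) (hw : 0 < w)
    (hδ : 0 ≤ δ) (hf : IsAmplitude f) :
    TendstoLocallyUniformlyOn (fun n s => ∑ k ∈ Finset.range n, weightedTerm w δ (ψ s) f k)
      (fun s => weightedSum w δ (ψ s) f) atTop {s | 0 < 2 * s.re + κ} := by
  rw [tendstoLocallyUniformlyOn_iff_forall_isCompact (isOpen_setOf_pos κ)]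
  intro K hK_pos hK
  obtain ⟨u, hu, hle⟩ := hψ.exists_summable_bound hw hδ hf hK fun s hs => hK_pos hs
  exact tendstoUniformlyOn_tsum_nat hu hle

theorem differentiableOn_weightedSum (hψ : IsKernelFamily κ ψ) (hw : 0 < w) (hδ : 0 ≤ δ)
    (hf : IsAmplitude f) :
    DifferentiableOn ℂ (fun s => weightedSum w δ (ψ s) f) {s | 0 < 2 * s.re + κ} :=
  (hψ.tendstoLocallyUniformlyOn_sum_weightedTerm hw hδ hf).differentiableOn
    (.of_forall fun _ => DifferentiableOn.fun_sum fun k _ =>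
      hψ.differentiableOn_weightedTerm hw hδ hf k) (isOpen_setOf_pos κ)

end IsKernelFamily

/-! ### Binomial expansion of the kernel -/

/-- The coefficient of `p ^ j` in the binomial series of `(1 - p) ^ (-s)`. -/
noncomputable def negBinomialCoeff (j : ℕ) (s : ℂ) : ℂ :=
  (∏ i ∈ Finset.range j, (s + i)) / j.factorial

theorem differentiable_negBinomialCoeff (j : ℕ) : Differentiable ℂ (negBinomialCoeff j) := by
  unfold negBinomialCoeff
  fun_prop

theorem choose_eq_negBinomialCoeff (j : ℕ) (s : ℂ) :
    Ring.choose (s + j - 1) j = negBinomialCoeff j s := by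
  have heval : (ascPochhammer ℂ j).eval s = ∏ i ∈ Finset.range j, (s + i) := by
    induction j with
    | zero => simp
    | succ n ih => rw [ascPochhammer_succ_eval, ih, Finset.prod_range_succ]
  have hfactorial := Ring.factorial_nsmul_multichoose_eq_ascPochhammer s j
  rw [nsmul_eq_mul, Polynomial.ascPochhammer_smeval_eq_eval, heval] at hfactorial
  rw [← Ring.multichoose_eq, negBinomialCoeff, ← hfactorial,
    mul_div_cancel_left₀ _ (by exact_mod_cast j.factorial_ne_zero)]

theorem hasSum_negBinomialCoeff (s : ℂ) {p : ℂ} (hp : ‖p‖ < 1) :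
    HasSum (fun j => negBinomialCoeff j s * p ^ j) ((1 - p) ^ (-s)) := by
  have hseries := (Complex.one_div_one_sub_cpow_hasFPowerSeriesOnBall_zero s).hasSum (y := p)
    (by simpa [enorm_eq_nnnorm, ← NNReal.coe_lt_coe] using hp)
  simpa only [zero_add, FormalMultilinearSeries.ofScalars_apply_eq, smul_eq_mul,
    choose_eq_negBinomialCoeff, one_div, ← Complex.cpow_neg] using hseries

theorem norm_negBinomialCoeff_le {ρ : ℝ} {s : ℂ} (hs : ‖s‖ ≤ ρ) (j : ℕ) :
    ‖negBinomialCoeff j s‖ ≤ ‖negBinomialCoeff j ρ‖ := by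
  have hρ : 0 ≤ ρ := (norm_nonneg s).trans hs
  simp only [negBinomialCoeff, norm_div, norm_prod]
  gcongr with i
  calc ‖s + i‖ ≤ ρ + i := (norm_add_le _ _).trans (by simpa using hs)
    _ = ‖(ρ : ℂ) + i‖ := by
      rw [← Complex.ofReal_natCast, ← Complex.ofReal_add, Complex.norm_of_nonneg (by positivity)]

/-- The error made by truncating the binomial series of `(1 - p) ^ (-s)` after `J` terms. -/
noncomputable def negBinomialRemainder (J : ℕ) (s : ℂ) (p : ℝ) : ℂ :=
  (1 - (p : ℂ)) ^ (-s) - ∑ j ∈ Finset.range J, negBinomialCoeff j s * (p : ℂ) ^ j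

theorem exists_norm_negBinomialRemainder_le (ρ : ℝ) (J : ℕ) : ∃ C : ℝ, ∀ s : ℂ, ‖s‖ ≤ ρ →
    ∀ p : ℝ, 0 ≤ p → p ≤ 1 / 4 → ‖negBinomialRemainder J s p‖ ≤ C * p ^ J := by
  have hmajorant : Summable fun i => ‖negBinomialCoeff (i + J) ρ‖ * (1 / 4 : ℝ) ^ i := by
    have htail := (summable_nat_add_iff J).2
      (hasSum_negBinomialCoeff ρ (p := 1 / 4) (by norm_num)).summable.norm
    refine (htail.mul_right ((4 : ℝ) ^ J)).congr fun i => ?_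
    rw [norm_mul, norm_pow, mul_assoc, pow_add, mul_assoc, ← mul_pow]
    norm_num
  refine ⟨∑' i, ‖negBinomialCoeff (i + J) ρ‖ * (1 / 4 : ℝ) ^ i, fun s hs p hp hp' => ?_⟩
  have hnorm : ‖(p : ℂ)‖ = p := Complex.norm_of_nonneg hp
  have htail := (hasSum_nat_add_iff' J).2
    (hasSum_negBinomialCoeff s (p := p) (by rw [hnorm]; linarith))
  rw [negBinomialRemainder, ← htail.tsum_eq, ← tsum_mul_right]
  refine tsum_of_norm_bounded (hmajorant.mul_right _).hasSum fun i => ?_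
  rw [norm_mul, norm_pow, hnorm, pow_add, ← mul_assoc]
  gcongr
  exact norm_negBinomialCoeff_le hs _

theorem differentiable_negBinomialRemainder (J : ℕ) {p : ℝ} (hp : p < 1) :
    Differentiable ℂ fun s => negBinomialRemainder J s p := fun s => by
  have hbase : (1 - (p : ℂ)) ≠ 0 := by exact_mod_cast (sub_pos.2 hp).ne'
  exact (DifferentiableAt.const_cpow (by fun_prop) (Or.inl hbase)).sub
    (DifferentiableAt.fun_sum fun j _ => (differentiable_negBinomialCoeff j s).mul_const _)

theorem negBinomialRemainder_one_zero (p : ℝ) : negBinomialRemainder 1 0 p = 0 := by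
  simp [negBinomialRemainder, negBinomialCoeff]

/-- The homogeneous kernel `t ^ (-2 s)`. -/
noncomputable def powerKernel (s : ℂ) (t : ℝ) : ℂ := (t : ℂ) ^ (-(2 * s))

/-- The kernel `(t ^ 2 - 1 / 4) ^ (-s)` minus the first `J` terms
`4 ^ (-j) * negBinomialCoeff j s * t ^ (-2 (s + j))` of its expansion at infinity. -/
noncomputable def remainderKernel (J : ℕ) (s : ℂ) (t : ℝ) : ℂ :=
  powerKernel s t * negBinomialRemainder J s (1 / (4 * t ^ 2))

theorem one_div_four_mul_sq_mem_Icc {t : ℝ} (ht : 1 ≤ t) :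
    1 / (4 * t ^ 2) ∈ Icc (0 : ℝ) (1 / 4) := by
  refine ⟨by positivity, one_div_le_one_div_of_le (by norm_num) ?_⟩
  linarith [one_le_pow₀ (n := 2) ht]

theorem norm_powerKernel (s : ℂ) {t : ℝ} (ht : 0 < t) :
    ‖powerKernel s t‖ = t ^ (-(2 * s.re)) := by
  rw [powerKernel, Complex.norm_cpow_eq_rpow_re_of_pos ht]
  simp

theorem isKernelFamily_powerKernel : IsKernelFamily 0 powerKernel where
  continuousOn s t ht := by
    have hslit : (t : ℂ) ∈ Complex.slitPlane := by
      simpa using one_pos.trans_le (mem_Ici.1 ht)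
    exact (ContinuousAt.cpow (by fun_prop) continuousAt_const hslit).continuousWithinAt
  differentiable t ht s := by
    refine DifferentiableAt.const_cpow (by fun_prop) (Or.inl ?_)
    exact_mod_cast (one_pos.trans_le ht).ne'
  exists_bound _ := ⟨1, fun s _ t ht => by
    rw [norm_powerKernel s (one_pos.trans_le ht), one_mul, add_zero]⟩

theorem isKernelFamily_remainderKernel (J : ℕ) : IsKernelFamily (2 * J) (remainderKernel J) where
  continuousOn s := by
    refine (isKernelFamily_powerKernel.continuousOn s).mul fun t ht => ?_
    have hp := one_div_four_mul_sq_mem_Icc (mem_Ici.1 ht)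
    have ht0 : 4 * t ^ 2 ≠ 0 := by positivity [one_pos.trans_le (mem_Ici.1 ht)]
    have hslit : 1 - ((1 / (4 * t ^ 2) : ℝ) : ℂ) ∈ Complex.slitPlane := by
      rw [← Complex.ofReal_one, ← Complex.ofReal_sub, Complex.ofReal_mem_slitPlane]
      linarith [hp.2]
    have hcont : ContinuousAt (fun t : ℝ => ((1 / (4 * t ^ 2) : ℝ) : ℂ)) t := by fun_prop
    exact ((ContinuousAt.cpow (hcont.const_sub 1) continuousAt_const hslit).sub
      (by fun_prop)).continuousWithinAt
  differentiable t ht := (isKernelFamily_powerKernel.differentiable t ht).mul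
    (differentiable_negBinomialRemainder J
      ((one_div_four_mul_sq_mem_Icc ht).2.trans_lt (by norm_num)))
  exists_bound ρ := by
    obtain ⟨C, hC⟩ := exists_norm_negBinomialRemainder_le ρ J
    refine ⟨C * (1 / 4) ^ J, fun s hs t ht => ?_⟩
    have ht0 : 0 < t := one_pos.trans_le ht
    have hp := one_div_four_mul_sq_mem_Icc ht
    rw [remainderKernel, norm_mul, norm_powerKernel s ht0, neg_add, Real.rpow_add ht0]
    calc t ^ (-(2 * s.re)) * ‖negBinomialRemainder J s (1 / (4 * t ^ 2))‖
        ≤ t ^ (-(2 * s.re)) * (C * (1 / (4 * t ^ 2)) ^ J) := by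
          gcongr
          exact hC s hs _ hp.1 hp.2
      _ = C * (1 / 4) ^ J * (t ^ (-(2 * s.re)) * t ^ (-(2 * (J : ℝ)))) := by
          rw [Real.rpow_neg ht0.le (2 * (J : ℝ)), Real.rpow_mul ht0.le, Real.rpow_natCast,
            Real.rpow_two, one_div, mul_inv, mul_pow]
          ring

theorem remainderKernel_zero (s : ℂ) {t : ℝ} (ht : 1 ≤ t) :
    remainderKernel 0 s t = ((t ^ 2 - 1 / 4 : ℝ) : ℂ) ^ (-s) := by
  have ht0 : 0 < t := one_pos.trans_le ht
  have hp := one_div_four_mul_sq_mem_Icc ht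
  have hfactor : t ^ 2 - 1 / 4 = t ^ 2 * (1 - 1 / (4 * t ^ 2)) := by field_simp
  have hsq : ((t ^ 2 : ℝ) : ℂ) ^ (-s) = powerKernel s t := by
    rw [powerKernel, pow_two, Complex.ofReal_mul, Complex.mul_cpow_ofReal_nonneg ht0.le ht0.le,
      ← Complex.cpow_add _ _ (by exact_mod_cast ht0.ne')]
    ring_nf
  rw [hfactor, Complex.ofReal_mul, Complex.mul_cpow_ofReal_nonneg (by positivity)
    (by linarith [hp.2]), hsq]
  simp [remainderKernel, negBinomialRemainder]

theorem remainderKernel_zero_eq_sum_add (J : ℕ) (s : ℂ) {t : ℝ} (ht : 0 < t) :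
    remainderKernel 0 s t = ∑ j ∈ Finset.range J,
      negBinomialCoeff j s * (1 / 4) ^ j * powerKernel (s + j) t + remainderKernel J s t := by
  have hpow : ∀ j : ℕ, powerKernel (s + j) t = powerKernel s t * (1 / (t : ℂ) ^ 2) ^ j := by
    intro j
    have ht' : (t : ℂ) ≠ 0 := by exact_mod_cast ht.ne'
    have hcast : 2 * (j : ℂ) = (2 * j : ℕ) := by push_cast; rfl
    rw [powerKernel, mul_add, neg_add, Complex.cpow_add _ _ ht', powerKernel,
      Complex.cpow_neg _ (2 * (j : ℂ)), hcast, Complex.cpow_natCast, pow_mul, one_div, inv_pow]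
  have hsum : ∑ j ∈ Finset.range J, negBinomialCoeff j s * (1 / 4) ^ j * powerKernel (s + j) t =
      powerKernel s t * ∑ j ∈ Finset.range J,
        negBinomialCoeff j s * ((1 / (4 * t ^ 2) : ℝ) : ℂ) ^ j := by
    rw [Finset.mul_sum]
    refine Finset.sum_congr rfl fun j _ => ?_
    rw [hpow]
    push_cast
    ring
  rw [hsum]
  simp only [remainderKernel, negBinomialRemainder, Finset.range_zero, Finset.sum_empty]
  ring

/-! ### Continuation of the series attached to an amplitude -/

section PowerKernel

variable {w δ : ℝ} {f : ℝ → ℂ} {z : ℂ}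

theorem mellin_eq_mellin_indicator_add (hf : IsAmplitude f) {c : ℝ} (hc : 0 ≤ c) {s : ℂ}
    (hs : -1 < s.re) (hs' : s.re < 2) :
    mellin f s =
      mellin ((Iic c).indicator f) s + ∫ u in Ioi c, (u : ℂ) ^ (s - 1) * f u := by
  have hint : IntegrableOn (fun u : ℝ => (u : ℂ) ^ (s - 1) * f u) (Ioi 0) :=
    hf.mellinConvergent hs hs'
  rw [mellin_indicator_Iic, mellin, ← Ioc_union_Ioi_eq_Ioi hc]
  exact setIntegral_union Ioc_disjoint_Ioi_same measurableSet_Ioi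
    (hint.mono_set Ioc_subset_Ioi_self) (hint.mono_set (Ioi_subset_Ioi hc))

theorem weightedTerm_powerKernel (hw : 0 < w) (hf : IsAmplitude f) (hz : -1 / 2 < z.re)
    (hz' : z.re < 1) (k : ℕ) :
    weightedTerm w δ (powerKernel z) f k =
      (freq w k : ℂ) ^ (-(1 + 2 * z)) * mellin f (1 - 2 * z) - lowTerm w δ f k z := by
  have hfreq : 0 < freq w k := freq_pos k hw
  have hfreq' : (freq w k : ℂ) ≠ 0 := by exact_mod_cast hfreq.ne'
  have hmul : ∀ u ∈ Ioi (cutoff w δ k), powerKernel z (freq w k * u) * f u =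
      (freq w k : ℂ) ^ (-(2 * z)) * ((u : ℂ) ^ (1 - 2 * z - 1) * f u) := fun u hu => by
    rw [powerKernel, Complex.ofReal_mul, Complex.mul_cpow_ofReal_nonneg hfreq.le
      ((cutoff_pos k hw).trans hu).le, sub_sub_cancel_left, mul_assoc]
  have hpow : (freq w k : ℂ) ^ (-(1 + 2 * z)) = (freq w k : ℂ)⁻¹ * (freq w k : ℂ) ^ (-(2 * z)) := by
    rw [neg_add, Complex.cpow_add _ _ hfreq', Complex.cpow_neg_one]
  rw [weightedTerm, setIntegral_congr_fun measurableSet_Ioi hmul, integral_const_mul, lowTerm,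
    mellin_eq_mellin_indicator_add hf (cutoff_pos (δ := δ) k hw).le
      (by rw [re_one_sub_two_mul]; linarith) (by rw [re_one_sub_two_mul]; linarith), hpow]
  ring

theorem mem_lowRegion_one (hδ : 0 ≤ δ) (hδ' : δ < 1) (hz : 0 < z.re) (hz' : z.re < 1) :
    z ∈ lowRegion δ 1 :=
  ⟨by push_cast; linarith, by push_cast; nlinarith [mul_nonneg hδ hz.le]⟩

theorem weightedSum_powerKernel (hw : 1 ≤ w) (hδ : 0 ≤ δ) (hδ' : δ < 1) (hf : IsAmplitude f)
    (hz : 0 < z.re) (hz' : z.re < 1) :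
    weightedSum w δ (powerKernel z) f =
      (w : ℂ) ^ (-(1 + 2 * z)) * riemannZeta (1 + 2 * z) * mellin f (1 - 2 * z) -
        lowSum w δ f z := by
  have hw0 : 0 < w := one_pos.trans_le hw
  obtain ⟨C, hC⟩ := exists_norm_le_mul_pow_of_isBigO hf.continuousOn hf.isBigO_zero
  have hlow := (summable_norm_lowTerm hw hδ'.le hC (mem_lowRegion_one hδ hδ' hz hz')).of_norm
  have hzeta := hasSum_freq_cpow hw0.le (s := 1 + 2 * z) (by simpa using hz)
  exact (((hzeta.mul_right _).sub hlow.hasSum).congr_fun fun k =>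
    weightedTerm_powerKernel hw0 hf (by linarith) hz' k).tsum_eq

theorem exists_meromorphicNFOn_weightedSum_powerKernel (hw : 1 ≤ w) (hδ : 0 ≤ δ) (hδ' : δ < 1)
    (hf : IsAmplitude f) :
    ∃ G : ℂ → ℂ, MeromorphicNFOn G univ ∧
      EqOn G (fun z => weightedSum w δ (powerKernel z) f) {z | 0 < z.re} := by
  have hw0 : 0 < w := one_pos.trans_le hw
  obtain ⟨b, hb⟩ := hf.exists_expansion_zero
  obtain ⟨b', hb'⟩ := hf.exists_expansion_atTop
  obtain ⟨M, hM, hM_eq⟩ := exists_meromorphicOn_mellin hf.continuousOn hb hb'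
  obtain ⟨S, hS, hS_eq⟩ := exists_meromorphicNFOn_lowSum hw hδ' hf.continuousOn hb
  have hopen : IsOpen {z : ℂ | 0 < z.re} := isOpen_lt continuous_const Complex.continuous_re
  have hanalytic : AnalyticOnNhd ℂ (fun z => weightedSum w δ (powerKernel z) f) {z | 0 < z.re} := by
    have hdiff := isKernelFamily_powerKernel.differentiableOn_weightedSum hw0 hδ hf
    exact (hdiff.mono fun z hz => by simpa using hz).analyticOnNhd hopen
  have hhalf : (1 / 2 : ℂ) ∈ {z : ℂ | 0 < z.re ∧ z.re < 1} := by norm_num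
  have hstrip : IsOpen {z : ℂ | 0 < z.re ∧ z.re < 1} :=
    hopen.inter (isOpen_lt Complex.continuous_re continuous_const)
  refine exists_meromorphicNFOn_univ_eqOn hanalytic (convex_halfSpace_re_gt 0).isPreconnected
    (U := fun _ => univ) (fun _ => isOpen_univ) (fun _ => isPreconnected_univ) monotone_const
    (iUnion_const univ) (F := fun _ z => (w : ℂ) ^ (-(1 + 2 * z)) * riemannZeta (1 + 2 * z) *
      M (1 - 2 * z) - S z) (fun _ z _ => ?_) (mem_univ (1 / 2 : ℂ)) hhalf.1 fun _ => ?_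
  · have hpow : Differentiable ℂ fun z : ℂ => (w : ℂ) ^ (-(1 + 2 * z)) := fun z =>
      DifferentiableAt.const_cpow (by fun_prop) (Or.inl (by exact_mod_cast hw0.ne'))
    exact (((meromorphicAt_of_differentiable hpow z).mul
      ((meromorphicAt_riemannZeta _).comp_analyticAt (by fun_prop))).mul
      ((hM _ (mem_univ _)).comp_analyticAt (by fun_prop))).sub (hS.meromorphicOn z (mem_univ z))
  · filter_upwards [hstrip.mem_nhds hhalf] with z hz
    rw [weightedSum_powerKernel hw hδ hδ' hf hz.1 hz.2,
      hM_eq ⟨by rw [re_one_sub_two_mul]; push_cast; linarith [hz.2],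
        by rw [re_one_sub_two_mul]; push_cast; linarith [hz.1]⟩,
      hS_eq (mem_lowRegion_one hδ hδ' hz.1 hz.2)]

end PowerKernel

/-- The factor `2 sin (π s) / π` of the terms of the series. -/
noncomputable def sinFactor (s : ℂ) : ℂ := 2 * Complex.sin (Real.pi * s) / Real.pi

theorem differentiable_sinFactor : Differentiable ℂ sinFactor := by
  unfold sinFactor
  fun_prop

theorem sinFactor_zero : sinFactor 0 = 0 := by simp [sinFactor]

theorem hasDerivAt_sinFactor_zero : HasDerivAt sinFactor 2 0 := by
  have hlin : HasDerivAt (fun s : ℂ => (Real.pi : ℂ) * s) Real.pi 0 := by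
    simpa using (hasDerivAt_id (0 : ℂ)).const_mul (Real.pi : ℂ)
  have hpi : (Real.pi : ℂ) ≠ 0 := by exact_mod_cast Real.pi_ne_zero
  refine ((hlin.csin.const_mul 2).div_const (Real.pi : ℂ)).congr_deriv ?_
  simp [hpi]

/-- The zeta function `2 sin (π s) / π * ∑ₖ (freq k)⁻¹ ∫ ((freq k * u) ^ 2 - 1 / 4) ^ (-s) f(u) du`
of the amplitude `f`, each integral extending from the cutoff to infinity. -/
noncomputable def ampZeta (w δ : ℝ) (f : ℝ → ℂ) (s : ℂ) : ℂ :=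
  sinFactor s * weightedSum w δ (remainderKernel 0 s) f

section AmpZeta

variable {w δ : ℝ} {f : ℝ → ℂ} {s : ℂ}

theorem two_mul_re_add_natCast_pos (hs : 0 < s.re) (j : ℕ) : 0 < 2 * (s + j).re + 0 := by
  simp only [Complex.add_re, Complex.natCast_re]
  positivity

theorem weightedTerm_remainderKernel_zero (hw : 0 < w) (hδ : 0 ≤ δ) (hf : IsAmplitude f) (J : ℕ)
    (hs : 0 < s.re) (k : ℕ) :
    weightedTerm w δ (remainderKernel 0 s) f k =
      ∑ j ∈ Finset.range J, negBinomialCoeff j s * (1 / 4) ^ j *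
        weightedTerm w δ (powerKernel (s + j)) f k +
      weightedTerm w δ (remainderKernel J s) f k := by
  have hpower := fun j : ℕ => isKernelFamily_powerKernel.integrableOn_mul hw hδ hf
    (two_mul_re_add_natCast_pos hs j) k
  have hrem := (isKernelFamily_remainderKernel J).integrableOn_mul hw hδ hf (s := s)
    (by positivity) k
  have hsplit : ∀ u ∈ Ioi (cutoff w δ k), remainderKernel 0 s (freq w k * u) * f u =
      ∑ j ∈ Finset.range J, negBinomialCoeff j s * (1 / 4) ^ j *
        (powerKernel (s + j) (freq w k * u) * f u) +
        remainderKernel J s (freq w k * u) * f u := fun u hu => by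
    rw [remainderKernel_zero_eq_sum_add J s
      (mul_pos (freq_pos k hw) ((cutoff_pos k hw).trans hu)), add_mul, Finset.sum_mul]
    simp only [mul_assoc]
  rw [weightedTerm, setIntegral_congr_fun measurableSet_Ioi hsplit,
    integral_add (integrable_finsetSum _ fun j _ => (hpower j).const_mul _) hrem,
    integral_finsetSum _ fun j _ => (hpower j).const_mul _, mul_add, Finset.mul_sum]
  simp only [integral_const_mul, weightedTerm, mul_left_comm (freq w k : ℂ)⁻¹]

theorem weightedSum_remainderKernel_zero (hw : 0 < w) (hδ : 0 ≤ δ) (hf : IsAmplitude f) (J : ℕ)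
    (hs : 0 < s.re) :
    weightedSum w δ (remainderKernel 0 s) f =
      ∑ j ∈ Finset.range J, negBinomialCoeff j s * (1 / 4) ^ j *
        weightedSum w δ (powerKernel (s + j)) f + weightedSum w δ (remainderKernel J s) f := by
  refine ((HasSum.add (hasSum_sum fun j _ => HasSum.mul_left _ ?_) ?_).congr_fun
    (weightedTerm_remainderKernel_zero hw hδ hf J hs)).tsum_eq
  · exact (isKernelFamily_powerKernel.summable_norm_weightedTerm hw hδ hf
      (two_mul_re_add_natCast_pos hs j)).of_norm.hasSum
  · exact ((isKernelFamily_remainderKernel J).summable_norm_weightedTerm hw hδ hf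
      (by positivity)).of_norm.hasSum

theorem exists_meromorphicNFOn_ampZeta (hw : 1 ≤ w) (hδ : 0 ≤ δ) (hδ' : δ < 1)
    (hf : IsAmplitude f) :
    ∃ F : ℂ → ℂ, MeromorphicNFOn F univ ∧ EqOn F (ampZeta w δ f) {s | 0 < s.re} := by
  have hw0 : 0 < w := one_pos.trans_le hw
  obtain ⟨G, hG, hG_eq⟩ := exists_meromorphicNFOn_weightedSum_powerKernel hw hδ hδ' hf
  have hrem : ∀ J : ℕ, DifferentiableOn ℂ (fun s => weightedSum w δ (remainderKernel J s) f)
      {s | (0 : ℝ) - J < s.re} := fun J =>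
    ((isKernelFamily_remainderKernel J).differentiableOn_weightedSum hw0 hδ hf).mono fun s hs => by
      have : (0 : ℝ) - J < s.re := hs
      change 0 < 2 * s.re + 2 * (J : ℝ)
      linarith
  refine exists_meromorphicNFOn_univ_eqOn_halfPlane
    (differentiable_sinFactor.differentiableOn.mul (by simpa using hrem 0))
    (F := fun J s => sinFactor s * (∑ j ∈ Finset.range J, negBinomialCoeff j s * (1 / 4) ^ j *
      G (s + j) + weightedSum w δ (remainderKernel J s) f)) (fun J => ?_) fun J s hs => ?_
  · have hterm : ∀ (j : ℕ) (s : ℂ),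
        MeromorphicAt (fun s => negBinomialCoeff j s * (1 / 4) ^ j * G (s + j)) s := fun j s =>
      (meromorphicAt_of_differentiable
        ((differentiable_negBinomialCoeff j).mul_const ((1 / 4) ^ j)) s).mul
        ((hG.meromorphicOn (s + j) (mem_univ _)).comp_analyticAt
          (g := fun s : ℂ => s + j) (by fun_prop))
    exact MeromorphicOn.mul (fun s _ => meromorphicAt_of_differentiable differentiable_sinFactor s)
      (MeromorphicOn.add (fun s _ => MeromorphicAt.fun_sum fun j _ => hterm j s)
        (meromorphicOn_of_differentiableOn
          (isOpen_lt continuous_const Complex.continuous_re) (hrem J)))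
  · have hG_shift : ∀ j : ℕ, G (s + j) = weightedSum w δ (powerKernel (s + j)) f := fun j =>
      hG_eq (by simpa using add_pos_of_pos_of_nonneg hs j.cast_nonneg)
    simp only [hG_shift, ampZeta, weightedSum_remainderKernel_zero hw0 hδ hf J hs]

end AmpZeta

/-! ### The derivative at the origin -/

theorem differentiable_dslope_sinFactor : Differentiable ℂ (dslope sinFactor 0) := by
  rw [← differentiableOn_univ]
  exact (Complex.differentiableOn_dslope univ_mem).2 differentiable_sinFactor.differentiableOn

theorem dslope_sinFactor_of_ne {s : ℂ} (hs : s ≠ 0) : dslope sinFactor 0 s = sinFactor s / s := by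
  rw [dslope_of_ne _ hs, slope_def_field, sinFactor_zero, sub_zero, sub_zero]

theorem dslope_sinFactor_neg (s : ℂ) : dslope sinFactor 0 (-s) = dslope sinFactor 0 s := by
  rcases eq_or_ne s 0 with rfl | hs
  · rw [neg_zero]
  · rw [dslope_sinFactor_of_ne hs, dslope_sinFactor_of_ne (neg_ne_zero.2 hs), sinFactor, sinFactor,
      mul_neg, Complex.sin_neg, mul_neg, neg_div, neg_div_neg_eq]

theorem hasDerivAt_dslope_sinFactor_zero : HasDerivAt (dslope sinFactor 0) 0 0 := by
  have hneg : -deriv (dslope sinFactor 0) 0 = deriv (dslope sinFactor 0) 0 := by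
    simpa [dslope_sinFactor_neg] using (deriv_comp_neg (dslope sinFactor 0) 0).symm
  exact (differentiable_dslope_sinFactor 0).hasDerivAt.congr_deriv (neg_eq_self.1 hneg)

/-- The entire function `sinFactor s * ζ(1 + 2 s)`: the zero of the sine cancels the pole of `ζ`. -/
noncomputable def sinZeta (s : ℂ) : ℂ := dslope sinFactor 0 s * riemannZeta₁ (1 + 2 * s) / 2

theorem sinZeta_of_ne {s : ℂ} (hs : s ≠ 0) : sinZeta s = sinFactor s * riemannZeta (1 + 2 * s) := by
  rw [sinZeta, dslope_sinFactor_of_ne hs, riemannZeta_eq_inv_sub_mul (by simpa using hs)]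
  field_simp
  ring

theorem sinZeta_zero : sinZeta 0 = 1 := by
  simp [sinZeta, hasDerivAt_sinFactor_zero.deriv]

theorem hasDerivAt_one_add_two_mul (s : ℂ) : HasDerivAt (fun s : ℂ => 1 + 2 * s) 2 s := by
  simpa using ((hasDerivAt_id s).const_mul 2).const_add 1

theorem differentiable_sinZeta : Differentiable ℂ sinZeta :=
  (differentiable_dslope_sinFactor.mul
    (differentiable_riemannZeta₁.comp (by fun_prop : Differentiable ℂ fun s : ℂ => 1 + 2 * s))
    ).div_const 2

theorem hasDerivAt_sinZeta_zero :
    HasDerivAt sinZeta (2 * (Real.eulerMascheroniConstant : ℂ)) 0 := by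
  have hzeta : HasDerivAt riemannZeta₁ (Real.eulerMascheroniConstant : ℂ) (1 + 2 * 0) := by
    rw [mul_zero, add_zero, ← deriv_riemannZeta₁_one]
    exact (differentiable_riemannZeta₁ 1).hasDerivAt
  refine ((hasDerivAt_dslope_sinFactor_zero.mul
    (hzeta.comp 0 (hasDerivAt_one_add_two_mul 0))).div_const 2).congr_deriv ?_
  simp only [Function.comp_apply, mul_zero, add_zero, zero_add, riemannZeta₁_one, mul_one,
    dslope_same, hasDerivAt_sinFactor_zero.deriv]
  ring

/-- The form in which the continuation of `ampZeta` is holomorphic around the origin. -/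
noncomputable def ampZetaNearZero (w δ : ℝ) (f : ℝ → ℂ) (s : ℂ) : ℂ :=
  sinZeta s * ((w : ℂ) ^ (-(1 + 2 * s)) * mellin f (1 - 2 * s)) +
    sinFactor s * (weightedSum w δ (remainderKernel 1 s) f - lowSum w δ f s)

section AmpZetaNearZero

variable {w δ : ℝ} {f : ℝ → ℂ}

theorem ampZeta_eq_ampZetaNearZero (hw : 1 ≤ w) (hδ : 0 ≤ δ) (hδ' : δ < 1) (hf : IsAmplitude f)
    {s : ℂ} (hs : 0 < s.re) (hs' : s.re < 1) : ampZeta w δ f s = ampZetaNearZero w δ f s := by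
  have hs0 : s ≠ 0 := by
    rintro rfl
    exact lt_irrefl _ hs
  rw [ampZeta, weightedSum_remainderKernel_zero (one_pos.trans_le hw) hδ hf 1 hs,
    Finset.sum_range_one, Nat.cast_zero, add_zero, weightedSum_powerKernel hw hδ hδ' hf hs hs',
    ampZetaNearZero, sinZeta_of_ne hs0, negBinomialCoeff]
  simp only [Finset.range_zero, Finset.prod_empty, Nat.factorial_zero, Nat.cast_one, div_one,
    pow_zero]
  ring

theorem differentiableAt_weightedSum_sub_lowSum (hw : 1 ≤ w) (hδ : 0 ≤ δ) (hδ' : δ < 1)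
    (hf : IsAmplitude f) {s : ℂ} (hs : -1 < s.re) (hs' : s ∈ lowRegion δ 1) :
    DifferentiableAt ℂ (fun s => weightedSum w δ (remainderKernel 1 s) f - lowSum w δ f s) s := by
  refine DifferentiableAt.sub ?_ ?_
  · exact ((isKernelFamily_remainderKernel 1).differentiableOn_weightedSum
      (one_pos.trans_le hw) hδ hf).differentiableAt
      ((IsKernelFamily.isOpen_setOf_pos _).mem_nhds (by
        change 0 < 2 * s.re + 2 * ((1 : ℕ) : ℝ)
        push_cast
        linarith))
  · exact (differentiableOn_lowSum hw hδ'.le hf.continuousOn hf.isBigO_zero).differentiableAt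
      ((isOpen_lowRegion δ 1).mem_nhds hs')

theorem hasDerivAt_mellin_one_sub_two_mul (hf : IsAmplitude f) {s : ℂ} (hs : -1 / 2 < s.re)
    (hs' : s.re < 1) :
    HasDerivAt (fun s => mellin f (1 - 2 * s))
      (-2 * mellin (fun t => Real.log t • f t) (1 - 2 * s)) s := by
  have hlin : HasDerivAt (fun s : ℂ => 1 - 2 * s) (-2) s := by
    simpa using ((hasDerivAt_id s).const_mul 2).const_sub 1
  rw [mul_comm]
  exact (hf.hasDerivAt_mellin (by rw [re_one_sub_two_mul]; linarith)
    (by rw [re_one_sub_two_mul]; linarith)).comp s hlin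

theorem hasDerivAt_const_cpow_neg_one_add (hw : 0 < w) (s : ℂ) :
    HasDerivAt (fun s : ℂ => (w : ℂ) ^ (-(1 + 2 * s)))
      ((w : ℂ) ^ (-(1 + 2 * s)) * Real.log w * -2) s := by
  rw [Complex.ofReal_log hw.le]
  exact (hasDerivAt_one_add_two_mul s).neg.const_cpow (Or.inl (by exact_mod_cast hw.ne'))

theorem differentiableAt_ampZetaNearZero (hw : 1 ≤ w) (hδ : 0 ≤ δ) (hδ' : δ < 1)
    (hf : IsAmplitude f) {s : ℂ} (hs : -1 / 2 < s.re) (hs' : s ∈ lowRegion δ 1) :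
    DifferentiableAt ℂ (ampZetaNearZero w δ f) s := by
  have hs_lt : s.re < 1 := by
    have := hs'.1
    push_cast at this
    linarith
  exact ((differentiable_sinZeta s).mul
    ((hasDerivAt_const_cpow_neg_one_add (one_pos.trans_le hw) s).differentiableAt.mul
      (hasDerivAt_mellin_one_sub_two_mul hf hs hs_lt).differentiableAt)).add
    ((differentiable_sinFactor s).mul
      (differentiableAt_weightedSum_sub_lowSum hw hδ hδ' hf (by linarith) hs'))

theorem weightedSum_remainderKernel_one_zero (w δ : ℝ) (f : ℝ → ℂ) :
    weightedSum w δ (remainderKernel 1 0) f = 0 := by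
  simp [weightedSum, weightedTerm, remainderKernel, negBinomialRemainder_one_zero]

theorem hasDerivAt_ampZetaNearZero_zero (hw : 1 ≤ w) (hδ : 0 ≤ δ) (hδ' : δ < 1)
    (hf : IsAmplitude f) :
    HasDerivAt (ampZetaNearZero w δ f)
      ((w : ℂ)⁻¹ * ((2 * Real.eulerMascheroniConstant - 2 * Real.log w) * mellin f 1 -
        2 * mellin (fun t => Real.log t • f t) 1) - 2 * lowSum w δ f 0) 0 := by
  have hmellin := hasDerivAt_mellin_one_sub_two_mul hf (s := 0) (by norm_num) (by norm_num)
  have hcpow := hasDerivAt_const_cpow_neg_one_add (one_pos.trans_le hw) 0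
  have hrest := differentiableAt_weightedSum_sub_lowSum hw hδ hδ' hf (s := 0) (by simp)
    (zero_mem_lowRegion hδ' 1)
  refine ((hasDerivAt_sinZeta_zero.mul (hcpow.mul hmellin)).add
    (hasDerivAt_sinFactor_zero.mul hrest.hasDerivAt)).congr_deriv ?_
  simp only [Pi.mul_apply, sinZeta_zero, sinFactor_zero, weightedSum_remainderKernel_one_zero,
    mul_zero, add_zero, sub_zero, zero_sub, zero_mul, one_mul, Complex.cpow_neg_one]
  ring

theorem exists_meromorphicOn_ampZeta (hw : 1 ≤ w) (hδ : 0 ≤ δ) (hδ' : δ < 1)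
    (hf : IsAmplitude f) :
    ∃ F : ℂ → ℂ, MeromorphicOn F univ ∧ EqOn F (ampZeta w δ f) {s | 0 < s.re} ∧
      AnalyticAt ℂ F 0 ∧
      deriv F 0 = (w : ℂ)⁻¹ * ((2 * Real.eulerMascheroniConstant - 2 * Real.log w) * mellin f 1 -
        2 * mellin (fun t => Real.log t • f t) 1) - 2 * lowSum w δ f 0 := by
  obtain ⟨F, hF, hF_eq⟩ := exists_meromorphicNFOn_ampZeta hw hδ hδ' hf
  let V : Set ℂ := {s | -1 / 2 < s.re} ∩ lowRegion δ 1
  have hV_open : IsOpen V :=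
    (isOpen_lt continuous_const Complex.continuous_re).inter (isOpen_lowRegion δ 1)
  have hV_preconnected : IsPreconnected V :=
    ((convex_halfSpace_re_gt _).inter (convex_lowRegion δ 1)).isPreconnected
  have hG : AnalyticOnNhd ℂ (ampZetaNearZero w δ f) V :=
    DifferentiableOn.analyticOnNhd (fun s hs =>
      (differentiableAt_ampZetaNearZero hw hδ hδ' hf hs.1 hs.2).differentiableWithinAt) hV_open
  have hzero : (0 : ℂ) ∈ V := ⟨by norm_num, zero_mem_lowRegion hδ' 1⟩
  have hhalf : (1 / 2 : ℂ) ∈ V :=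
    ⟨by norm_num, mem_lowRegion_one hδ hδ' (by norm_num) (by norm_num)⟩
  have hstrip : {s : ℂ | 0 < s.re ∧ s.re < 1} ∈ 𝓝 (1 / 2 : ℂ) :=
    ((isOpen_lt continuous_const Complex.continuous_re).inter
      (isOpen_lt Complex.continuous_re continuous_const)).mem_nhds (by norm_num)
  have hFG : F =ᶠ[𝓝 0] ampZetaNearZero w δ f := by
    refine eventuallyEq_of_meromorphicNFOn (fun s _ => hF (mem_univ s))
      (fun s hs => (hG s hs).meromorphicNFAt) hV_preconnected hhalf ?_ hzero
    filter_upwards [mem_nhdsWithin_of_mem_nhds hstrip] with s hs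
    rw [hF_eq hs.1, ampZeta_eq_ampZetaNearZero hw hδ hδ' hf hs.1 hs.2]
  refine ⟨F, hF.meromorphicOn, hF_eq, (hG 0 hzero).congr hFG.symm, ?_⟩
  rw [hFG.deriv_eq, (hasDerivAt_ampZetaNearZero_zero hw hδ hδ' hf).deriv]

end AmpZetaNearZero

/-! ### Operations on amplitudes -/

namespace HasPowerExpansion

variable {m : ℕ} {f g : ℝ → ℂ} {b c : ℕ → ℂ}

theorem add (hf : HasPowerExpansion m f b) (hg : HasPowerExpansion m g c) :
    HasPowerExpansion m (fun x => f x + g x) fun n => b n + c n := fun N =>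
  ((hf N).add (hg N)).congr_left fun x => by
    simp only [add_mul, Finset.sum_add_distrib]
    ring

theorem const_mul (hf : HasPowerExpansion m f b) (a : ℂ) :
    HasPowerExpansion m (fun x => a * f x) fun n => a * b n := fun N =>
  ((hf N).const_mul_left a).congr_left fun x => by
    simp only [mul_sub, Finset.mul_sum, mul_assoc]

theorem comp_mul_left (hf : HasPowerExpansion m f b) {a : ℝ} (ha : 0 < a) :
    HasPowerExpansion m (fun x => f (a * x)) fun n => (a : ℂ) ^ (m + n) * b n := fun N => by
  have hscale : Tendsto (fun x : ℝ => a * x) (𝓝[>] 0) (𝓝[>] 0) := by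
    refine tendsto_nhdsWithin_iff.2 ⟨?_, eventually_mem_nhdsWithin.mono fun x hx =>
      mul_pos ha hx⟩
    simpa using ((continuous_const_mul a).tendsto 0).mono_left (nhdsWithin_le_nhds (s := Ioi 0))
  refine (((hf N).comp_tendsto hscale).congr_left fun x => ?_).trans ?_
  · simp only [Function.comp_apply, Complex.ofReal_mul, mul_pow]
    congr 1
    exact Finset.sum_congr rfl fun n _ => by ring
  · simp only [Function.comp_def, mul_pow]
    exact (isBigO_refl _ _).const_mul_left _

end HasPowerExpansion

namespace IsAmplitude

variable {f g : ℝ → ℂ}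

theorem add (hf : IsAmplitude f) (hg : IsAmplitude g) : IsAmplitude fun u => f u + g u where
  continuousOn := hf.continuousOn.add hg.continuousOn
  exists_expansion_zero :=
    let ⟨_, hb⟩ := hf.exists_expansion_zero
    let ⟨_, hc⟩ := hg.exists_expansion_zero
    ⟨_, hb.add hc⟩
  exists_expansion_atTop :=
    let ⟨_, hb⟩ := hf.exists_expansion_atTop
    let ⟨_, hc⟩ := hg.exists_expansion_atTop
    ⟨_, hb.add hc⟩

theorem const_mul (hf : IsAmplitude f) (a : ℂ) : IsAmplitude fun u => a * f u where
  continuousOn := continuousOn_const.mul hf.continuousOn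
  exists_expansion_zero := let ⟨_, hb⟩ := hf.exists_expansion_zero; ⟨_, hb.const_mul a⟩
  exists_expansion_atTop := let ⟨_, hb⟩ := hf.exists_expansion_atTop; ⟨_, hb.const_mul a⟩

theorem comp_mul_left (hf : IsAmplitude f) {a : ℝ} (ha : 0 < a) :
    IsAmplitude fun u => f (a * u) where
  continuousOn := hf.continuousOn.comp (by fun_prop) fun u hu => mul_pos ha hu
  exists_expansion_zero := let ⟨_, hb⟩ := hf.exists_expansion_zero; ⟨_, hb.comp_mul_left ha⟩
  exists_expansion_atTop :=
    let ⟨_, hb⟩ := hf.exists_expansion_atTop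
    ⟨_, (hb.comp_mul_left (inv_pos.2 ha)).congr' (.of_forall fun x => by simp [mul_comm])⟩

theorem of_analyticAt {p φ χ : ℝ → ℝ} (hp : Continuous p) (hp_zero : ∀ r, p r = r * φ r)
    (hφ : AnalyticAt ℝ φ 0) (hp_inv : ∀ x, 0 < x → p x⁻¹ = x ^ 2 * χ x)
    (hχ : AnalyticAt ℝ χ 0) : IsAmplitude fun r => (p r : ℂ) where
  continuousOn := by fun_prop
  exists_expansion_zero :=
    let ⟨b, hb⟩ := exists_hasPowerExpansion_of_analyticAt
      ((Complex.ofRealCLM.analyticAt (φ 0)).comp hφ) 1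
    ⟨b, hb.congr' (.of_forall fun r => by simp [hp_zero])⟩
  exists_expansion_atTop :=
    let ⟨b, hb⟩ := exists_hasPowerExpansion_of_analyticAt
      ((Complex.ofRealCLM.analyticAt (χ 0)).comp hχ) 2
    ⟨b, hb.congr' (eventually_mem_nhdsWithin.mono fun x hx => by simp [hp_inv x hx])⟩

variable {p : ℝ → ℝ}

theorem integrableOn (hp : IsAmplitude fun r => (p r : ℂ)) : IntegrableOn p (Ioi 0) := by
  have hconv := hp.mellinConvergent (s := 1) (by simp) (by simp)
  simpa [MellinConvergent, IntegrableOn] using hconv.re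

theorem integrableOn_log_mul (hp : IsAmplitude fun r => (p r : ℂ)) :
    IntegrableOn (fun r => Real.log r * p r) (Ioi 0) := by
  have hconv := (mellin_hasDerivAt_of_isBigO_rpow (s := 1)
    (hp.continuousOn.locallyIntegrableOn measurableSet_Ioi) hp.isBigO_atTop (by simp)
    (isBigO_rpow_neg_of_isBigO_pow hp.isBigO_zero) (by simp)).1
  simpa [MellinConvergent, IntegrableOn] using hconv.re

end IsAmplitude

theorem mellin_ofReal_one (p : ℝ → ℝ) :
    mellin (fun r => (p r : ℂ)) 1 = ((∫ r in Ioi 0, p r : ℝ) : ℂ) := by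
  simp only [mellin, sub_self, Complex.cpow_zero, one_smul, integral_complex_ofReal]

theorem integral_Ioi_mul_comp_mul_left (p : ℝ → ℝ) {a : ℝ} (ha : 0 < a) :
    ∫ u in Ioi 0, a * p (a * u) = ∫ r in Ioi 0, p r := by
  rw [integral_const_mul, integral_comp_mul_left_Ioi p 0 ha, mul_zero, smul_eq_mul,
    mul_inv_cancel_left₀ ha.ne']

theorem integral_Ioi_log_mul_comp_mul_left {p : ℝ → ℝ} (hp : IntegrableOn p (Ioi 0))
    (hp_log : IntegrableOn (fun r => Real.log r * p r) (Ioi 0)) {a : ℝ} (ha : 0 < a) :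
    ∫ u in Ioi 0, Real.log u * (a * p (a * u)) =
      (∫ r in Ioi 0, Real.log r * p r) - Real.log a * ∫ r in Ioi 0, p r := by
  calc ∫ u in Ioi 0, Real.log u * (a * p (a * u))
      = ∫ u in Ioi 0, a * ((Real.log (a * u) - Real.log a) * p (a * u)) :=
        setIntegral_congr_fun measurableSet_Ioi fun u hu => by
          simp only [Real.log_mul ha.ne' (mem_Ioi.1 hu).ne']
          ring
    _ = ∫ r in Ioi 0, (Real.log r - Real.log a) * p r :=
        integral_Ioi_mul_comp_mul_left (fun r => (Real.log r - Real.log a) * p r) ha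
    _ = _ := by
        simp only [sub_mul]
        rw [integral_sub hp_log (hp.const_mul _), integral_const_mul]

/-! ### The amplitude of the cone -/

/-- The Japanese bracket `⟨r⟩ = (1 + r²)^{1/2}`. -/
noncomputable def bracket (r : ℝ) : ℝ := √(1 + r ^ 2)

/-- The profile `r ⟨r⟩^{-(n+3)}`. -/
noncomputable def powProfile (n : ℕ) (r : ℝ) : ℝ := r / bracket r ^ (n + 3)

/-- What is left of `A₃`, in the variable `r = u sinh η` and with `c = cosh η`, after cancelling
the double zero of its numerator at `⟨r⟩ = c`, that is at `u = 1`. -/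
noncomputable def quotProfile (c r : ℝ) : ℝ :=
  r * (2 * bracket r ^ 3 + 4 * c * bracket r ^ 2 + 6 * c ^ 2 * bracket r + 3 * c ^ 3) /
    (24 * bracket r ^ 5 * (bracket r + c) ^ 2)

/-- The function of `r = u sinh η` which represents `(A₁ + A₂ + A₃) / sinh η`. -/
noncomputable def coneProfile (η r : ℝ) : ℝ :=
  (6 - Real.cosh η ^ 2) * Real.cosh η / 8 * powProfile 2 r - Real.cosh η / 8 * powProfile 0 r +
    Real.sinh η ^ 2 * quotProfile (Real.cosh η) r

/-- `A₁ + A₂ + A₃` with the removable singularity at `u = 1` removed. -/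
noncomputable def coneAmplitude (η u : ℝ) : ℝ := Real.sinh η * coneProfile η (Real.sinh η * u)

theorem bracket_pos (r : ℝ) : 0 < bracket r := Real.sqrt_pos.2 (by positivity)

theorem bracket_sq (r : ℝ) : bracket r ^ 2 = 1 + r ^ 2 := Real.sq_sqrt (by positivity)

theorem one_le_bracket (r : ℝ) : 1 ≤ bracket r :=
  Real.one_le_sqrt.2 (le_add_of_nonneg_right (sq_nonneg r))

theorem contDiff_bracket : ContDiff ℝ ⊤ bracket :=
  ContDiff.sqrt (by fun_prop) fun r => by positivity

theorem bracket_inv {x : ℝ} (hx : 0 < x) : bracket x⁻¹ = bracket x / x := by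
  rw [bracket, bracket, ← Real.sqrt_sq hx.le, ← Real.sqrt_div (by positivity),
    Real.sqrt_sq hx.le]
  congr 1
  field_simp
  ring

theorem isAmplitude_powProfile (n : ℕ) : IsAmplitude fun r => (powProfile n r : ℂ) := by
  have hcd := contDiff_bracket
  have hpos := fun r => (pow_pos (bracket_pos r) (n + 3)).ne'
  have hquot : ∀ q : ℝ → ℝ, ContDiff ℝ ⊤ q → ContDiff ℝ ⊤ fun r => q r / bracket r ^ (n + 3) :=
    fun q hq => hq.div (hcd.pow _) hpos
  refine .of_analyticAt (hquot _ contDiff_id).continuous (fun r => ?_)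
    (hquot _ contDiff_const).contDiffAt.analyticAt (fun x hx => ?_)
    (hquot _ (contDiff_id.pow n)).contDiffAt.analyticAt (φ := fun r => 1 / bracket r ^ (n + 3))
    (χ := fun x => x ^ n / bracket x ^ (n + 3))
  · rw [powProfile, mul_one_div]
  · have hb := bracket_pos x
    rw [powProfile, bracket_inv hx, div_pow]
    field_simp
    ring

theorem isAmplitude_quotProfile {c : ℝ} (hc : 0 < c) :
    IsAmplitude fun r => (quotProfile c r : ℂ) := by
  have hcd := contDiff_bracket
  have hpos := bracket_pos
  have hden : ∀ r, 24 * bracket r ^ 5 * (bracket r + c) ^ 2 ≠ 0 := fun r => by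
    have := hpos r
    positivity
  refine .of_analyticAt (φ := fun r => (2 * bracket r ^ 3 + 4 * c * bracket r ^ 2 +
      6 * c ^ 2 * bracket r + 3 * c ^ 3) / (24 * bracket r ^ 5 * (bracket r + c) ^ 2))
    (χ := fun x => x * (2 * bracket x ^ 3 + 4 * (c * x) * bracket x ^ 2 +
      6 * (c * x) ^ 2 * bracket x + 3 * (c * x) ^ 3) /
        (24 * bracket x ^ 5 * (bracket x + c * x) ^ 2))
    (ContDiff.div (n := ⊤) (by fun_prop) (by fun_prop) hden).continuous (fun r => ?_)
    (ContDiff.div (n := ⊤) (by fun_prop) (by fun_prop) hden).contDiffAt.analyticAt (fun x hx => ?_)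
    (ContDiffAt.div (n := ⊤) (by fun_prop) (by fun_prop) ?_).analyticAt
  · rw [quotProfile, mul_div_assoc]
  · have hb := hpos x
    have : bracket x + c * x ≠ 0 := by positivity
    have : bracket x / x + c ≠ 0 := by positivity
    rw [quotProfile, bracket_inv hx]
    field_simp
  · have := hpos 0
    simp only [mul_zero, add_zero]
    positivity

theorem isAmplitude_coneProfile (η : ℝ) : IsAmplitude fun r => (coneProfile η r : ℂ) := by
  convert (((isAmplitude_powProfile 2).const_mul ((6 - Real.cosh η ^ 2) * Real.cosh η / 8)).add
    ((isAmplitude_powProfile 0).const_mul (-(Real.cosh η / 8)))).add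
    ((isAmplitude_quotProfile (Real.cosh_pos η)).const_mul (Real.sinh η ^ 2)) using 2
  simp only [coneProfile]
  push_cast
  ring

theorem isAmplitude_coneAmplitude {η : ℝ} (hη : 0 < η) :
    IsAmplitude fun u => (coneAmplitude η u : ℂ) := by
  simp only [coneAmplitude, Complex.ofReal_mul (Real.sinh η)]
  exact ((isAmplitude_coneProfile η).comp_mul_left (Real.sinh_pos_iff.2 hη)).const_mul _

theorem one_add_mul_sq_rpow (h u : ℝ) (n : ℕ) :
    (1 + u ^ 2 * h ^ 2) ^ (-(n : ℝ) / 2) = (bracket (h * u) ^ n)⁻¹ := by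
  have hpos : 0 ≤ 1 + u ^ 2 * h ^ 2 := by positivity
  rw [show -(n : ℝ) / 2 = 1 / 2 * -(n : ℝ) by ring, Real.rpow_mul hpos, ← Real.sqrt_eq_rpow,
    Real.rpow_neg (Real.sqrt_nonneg _), Real.rpow_natCast, bracket, mul_pow, mul_comm (u ^ 2)]

theorem cone_third_quotient_eq {b c h u : ℝ} (hb : 0 < b) (hc : 0 < c) (hh : h ≠ 0)
    (hu : u ^ 2 - 1 ≠ 0) (hbc : (u ^ 2 - 1) * h ^ 2 = (b - c) * (b + c)) :
    u / (24 * (u ^ 2 - 1) ^ 2) * (2 + 3 * c ^ 5 * (b ^ 5)⁻¹ - 5 * c ^ 3 * (b ^ 3)⁻¹) =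
      h ^ 4 * u * (2 * b ^ 3 + 4 * c * b ^ 2 + 6 * c ^ 2 * b + 3 * c ^ 3) /
        (24 * b ^ 5 * (b + c) ^ 2) := by
  have hsub : b - c ≠ 0 := left_ne_zero_of_mul (hbc ▸ mul_ne_zero hu (pow_ne_zero 2 hh))
  have hu_eq : u ^ 2 - 1 = (b - c) * (b + c) / h ^ 2 := by
    field_simp
    exact hbc
  rw [hu_eq]
  field_simp
  ring

theorem coneA3_eq_mul_quotProfile {η u : ℝ} (hη : 0 < η) (hu : 0 < u) (hu1 : u ≠ 1) :
    coneA3 η u = Real.sinh η ^ 3 * quotProfile (Real.cosh η) (Real.sinh η * u) := by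
  have hpow5 := one_add_mul_sq_rpow (Real.sinh η) u 5
  have hpow3 := one_add_mul_sq_rpow (Real.sinh η) u 3
  have hu2 : u ^ 2 - 1 ≠ 0 :=
    sub_ne_zero.2 fun h => hu1 ((pow_eq_one_iff_of_nonneg hu.le two_ne_zero).1 h)
  push_cast at hpow5 hpow3
  rw [coneA3, hpow5, hpow3, cone_third_quotient_eq (bracket_pos _) (Real.cosh_pos η)
    (Real.sinh_pos_iff.2 hη).ne' hu2 (by
      linear_combination Real.cosh_sq η - bracket_sq (Real.sinh η * u)), quotProfile]
  ring

theorem coneA1_add_coneA2 (η u : ℝ) :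
    coneA1 η u + coneA2 η u = Real.sinh η * ((6 - Real.cosh η ^ 2) * Real.cosh η / 8 *
      powProfile 2 (Real.sinh η * u) - Real.cosh η / 8 * powProfile 0 (Real.sinh η * u)) := by
  have hpow5 := one_add_mul_sq_rpow (Real.sinh η) u 5
  have hb := bracket_pos (Real.sinh η * u)
  push_cast at hpow5
  simp only [coneA1, coneA2, hpow5, powProfile, Nat.reduceAdd]
  field_simp
  rw [bracket_sq]
  ring

theorem coneA_eq_coneAmplitude {η u : ℝ} (hη : 0 < η) (hu : 0 < u) (hu1 : u ≠ 1) :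
    coneA1 η u + coneA2 η u + coneA3 η u = coneAmplitude η u := by
  rw [coneA1_add_coneA2, coneA3_eq_mul_quotProfile hη hu hu1, coneAmplitude, coneProfile]
  ring

theorem coneE2_eq {ω : ℕ} (hω : 1 ≤ ω) {η δ : ℝ} (hη : 0 < η) (hδ : 0 ≤ δ) (k : ℕ) (s : ℂ) :
    coneE2 ω η δ (k + 1) s = sinFactor s *
      weightedTerm ω δ (remainderKernel 0 s) (fun u => (coneAmplitude η u : ℂ)) k := by
  have hw : (0 : ℝ) < ω := by exact_mod_cast hω
  have hne : ∀ᵐ u : ℝ, u ≠ 1 := Measure.ae_ne volume 1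
  rw [coneE2, sinFactor, weightedTerm, mul_assoc]
  congr 2
  · simp [freq]
  · have hcutoff : ((k + 1 : ℕ) : ℝ) ^ (δ - 1) / ω = cutoff ω δ k := by simp [cutoff]
    rw [hcutoff]
    refine setIntegral_congr_ae measurableSet_Ioi ?_
    filter_upwards [hne] with u hu1 hu
    rw [coneA_eq_coneAmplitude hη ((cutoff_pos k hw).trans hu) hu1,
      remainderKernel_zero s (one_le_freq_mul k hw hδ (mem_Ioi.1 hu).le), freq]
    congr 3
    push_cast
    ring

theorem quotProfile_nonneg {c r : ℝ} (hc : 0 < c) (hr : 0 ≤ r) : 0 ≤ quotProfile c r := by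
  have hb := bracket_pos r
  unfold quotProfile
  positivity

theorem quotProfile_le {c r : ℝ} (hc : 0 < c) (hr : 0 ≤ r) :
    quotProfile c r ≤ (1 + c) / 8 * powProfile 0 r := by
  have hb := one_le_bracket r
  have hb0 := bracket_pos r
  rw [quotProfile, powProfile]
  generalize bracket r = b at *
  have hcube : 2 * b ^ 3 + 4 * c * b ^ 2 + 6 * c ^ 2 * b + 3 * c ^ 3 ≤ 3 * (b + c) ^ 3 := by
    have : 0 ≤ b ^ 3 + 5 * c * b ^ 2 + 3 * c ^ 2 * b := by positivity
    linarith
  have hlin : b + c ≤ (1 + c) * b ^ 2 := by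
    have hb2 : b ≤ b ^ 2 := le_self_pow₀ hb two_ne_zero
    nlinarith
  calc r * (2 * b ^ 3 + 4 * c * b ^ 2 + 6 * c ^ 2 * b + 3 * c ^ 3) / (24 * b ^ 5 * (b + c) ^ 2)
      ≤ r * (3 * (b + c) ^ 3) / (24 * b ^ 5 * (b + c) ^ 2) := by gcongr
    _ = r * (b + c) / (8 * b ^ 5) := by
        field_simp
        ring
    _ ≤ r * ((1 + c) * b ^ 2) / (8 * b ^ 5) := by gcongr
    _ = (1 + c) / 8 * (r / b ^ (0 + 3)) := by field_simp

theorem powProfile_nonneg (n : ℕ) {r : ℝ} (hr : 0 ≤ r) : 0 ≤ powProfile n r :=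
  div_nonneg hr (pow_pos (bracket_pos r) _).le

theorem powProfile_le_self (n : ℕ) {r : ℝ} (hr : 0 ≤ r) : powProfile n r ≤ r :=
  div_le_self hr (one_le_pow₀ (one_le_bracket r))

theorem abs_coneProfile_le (η : ℝ) {r : ℝ} (hr : 0 ≤ r) :
    |coneProfile η r| ≤ (|(6 - Real.cosh η ^ 2) * Real.cosh η / 8| + Real.cosh η / 8 +
      Real.sinh η ^ 2 * ((1 + Real.cosh η) / 8)) * r := by
  have hc := Real.cosh_pos η
  have hpow := fun n => (abs_of_nonneg (powProfile_nonneg n hr)).trans_le (powProfile_le_self n hr)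
  have hquot : |quotProfile (Real.cosh η) r| ≤ (1 + Real.cosh η) / 8 * r := by
    rw [abs_of_nonneg (quotProfile_nonneg hc hr)]
    exact (quotProfile_le hc hr).trans (by gcongr; exact powProfile_le_self 0 hr)
  calc |coneProfile η r|
      ≤ |(6 - Real.cosh η ^ 2) * Real.cosh η / 8| * |powProfile 2 r| +
          |Real.cosh η / 8| * |powProfile 0 r| +
          |Real.sinh η ^ 2| * |quotProfile (Real.cosh η) r| := by
        simp only [← abs_mul]
        exact (abs_add_le _ _).trans (by gcongr; exact abs_sub _ _)
    _ ≤ |(6 - Real.cosh η ^ 2) * Real.cosh η / 8| * r + |Real.cosh η / 8| * r +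
          |Real.sinh η ^ 2| * ((1 + Real.cosh η) / 8 * r) := by
        gcongr
        exacts [hpow 2, hpow 0]
    _ = _ := by
        rw [abs_of_pos (by positivity : 0 < Real.cosh η / 8), abs_sq]
        ring

/-! ### Moments of the profiles -/

theorem bracket_zero : bracket 0 = 1 := by simp [bracket]

theorem le_bracket (r : ℝ) : r ≤ bracket r := Real.le_sqrt_of_sq_le (by linarith)

theorem bracket_le_add_one {r : ℝ} (hr : 0 ≤ r) : bracket r ≤ r + 1 :=
  Real.sqrt_le_iff.2 ⟨by linarith, by nlinarith⟩

theorem tendsto_bracket_atTop : Tendsto bracket atTop atTop :=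
  tendsto_atTop_mono le_bracket tendsto_id

theorem hasDerivAt_bracket (r : ℝ) : HasDerivAt bracket (r / bracket r) r := by
  have hsq : HasDerivAt (fun r : ℝ => 1 + r ^ 2) (2 * r) r := by
    simpa using (hasDerivAt_pow 2 r).const_add 1
  exact (hsq.sqrt (by positivity)).congr_deriv (mul_div_mul_left _ _ two_ne_zero)

theorem integral_powProfile (n : ℕ) : ∫ r in Ioi 0, powProfile n r = 1 / (n + 1) := by
  have hderiv : ∀ r, HasDerivAt (fun r => -(1 / (n + 1 : ℝ)) * (bracket r ^ (n + 1))⁻¹)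
      (powProfile n r) r := fun r => by
    have hb := bracket_pos r
    refine ((((hasDerivAt_bracket r).fun_pow (n + 1)).fun_inv (by positivity)).const_mul
      (-(1 / (n + 1 : ℝ)))).congr_deriv ?_
    simp only [powProfile, Nat.cast_add, Nat.cast_one, Nat.add_sub_cancel]
    field_simp
    ring
  have hlim : Tendsto (fun r => -(1 / (n + 1 : ℝ)) * (bracket r ^ (n + 1))⁻¹) atTop (𝓝 0) := by
    simpa using (((tendsto_pow_atTop n.succ_ne_zero).comp
      tendsto_bracket_atTop).inv_tendsto_atTop.const_mul (-(1 / (n + 1 : ℝ))))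
  rw [integral_Ioi_of_hasDerivAt_of_tendsto' (fun r _ => hderiv r)
    (isAmplitude_powProfile n).integrableOn hlim]
  simp [bracket_zero]

theorem tendsto_log_mul_atTop_zero {g : ℝ → ℝ} (hg0 : ∀ r, 1 ≤ r → 0 ≤ g r)
    (hg : ∀ r, 1 ≤ r → g r ≤ r⁻¹) : Tendsto (fun r => Real.log r * g r) atTop (𝓝 0) := by
  refine squeeze_zero' ((eventually_ge_atTop 1).mono fun r hr =>
    mul_nonneg (Real.log_nonneg hr) (hg0 r hr)) ((eventually_ge_atTop 1).mono fun r hr =>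
    mul_le_mul_of_nonneg_left (hg r hr) (Real.log_nonneg hr)) ?_
  simpa only [div_eq_mul_inv, id] using Real.isLittleO_log_id_atTop.tendsto_div_nhds_zero

theorem tendsto_log_mul_inv_bracket : Tendsto (fun r => Real.log r * (bracket r)⁻¹) atTop (𝓝 0) :=
  tendsto_log_mul_atTop_zero (fun r _ => (inv_pos.2 (bracket_pos r)).le) fun r hr =>
    inv_anti₀ (one_pos.trans_le hr) (le_bracket r)

theorem tendsto_log_mul_sq_div_bracket_pow (n : ℕ) :
    Tendsto (fun r => Real.log r * (r ^ 2 / bracket r ^ (n + 3))) atTop (𝓝 0) := by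
  refine tendsto_log_mul_atTop_zero
    (fun r _ => div_nonneg (sq_nonneg r) (pow_pos (bracket_pos r) _).le) fun r hr => ?_
  have hr0 : 0 < r := one_pos.trans_le hr
  rw [div_le_iff₀ (pow_pos (bracket_pos r) _), ← div_eq_inv_mul, le_div_iff₀ hr0, ← pow_succ]
  calc r ^ 3 ≤ bracket r ^ 3 := by gcongr; exact le_bracket r
    _ ≤ bracket r ^ (n + 3) := pow_le_pow_right₀ (one_le_bracket r) (by lia)

theorem hasDerivAt_log_mul_sq_div_bracket_pow (n : ℕ) {r : ℝ} (hr : 0 < r) :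
    HasDerivAt (fun r => Real.log r * (r ^ 2 / bracket r ^ (n + 3)))
      (powProfile n r + ((n + 3) * (Real.log r * powProfile (n + 2) r) -
        (n + 1) * (Real.log r * powProfile n r))) r := by
  have hb := bracket_pos r
  refine ((Real.hasDerivAt_log hr.ne').mul ((hasDerivAt_pow 2 r).fun_div
    ((hasDerivAt_bracket r).fun_pow (n + 3)) (by positivity))).congr_deriv ?_
  simp only [powProfile, Nat.cast_add, Nat.cast_ofNat, Nat.add_succ_sub_one]
  field_simp
  linear_combination Real.log r * r * bracket r ^ (2 * n + 7) * (n + 3) * bracket_sq r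

theorem integral_log_mul_powProfile_add_two (n : ℕ) :
    (n + 3) * ∫ r in Ioi 0, Real.log r * powProfile (n + 2) r =
      (n + 1) * (∫ r in Ioi 0, Real.log r * powProfile n r) - 1 / (n + 1) := by
  have hn := isAmplitude_powProfile n
  have hn2 := (isAmplitude_powProfile (n + 2)).integrableOn_log_mul.const_mul (n + 3 : ℝ)
  have hnl := hn.integrableOn_log_mul.const_mul (n + 1 : ℝ)
  have hcont : Continuous fun r => Real.log r * (r ^ 2 / bracket r ^ (n + 3)) := by
    have hb := contDiff_bracket.continuous
    refine (Real.continuous_mul_log.mul (continuous_id'.div (hb.pow (n + 3)) fun r =>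
      (pow_pos (bracket_pos r) _).ne')).congr fun r => ?_
    simp only [Pi.mul_apply, Pi.div_apply, Pi.pow_apply]
    ring
  have hint := integral_Ioi_of_hasDerivAt_of_tendsto hcont.continuousWithinAt
    (fun r hr => hasDerivAt_log_mul_sq_div_bracket_pow n hr) (hn.integrableOn.add (hn2.sub hnl))
    (tendsto_log_mul_sq_div_bracket_pow n)
  rw [integral_add hn.integrableOn (by exact hn2.sub hnl), integral_sub hn2 hnl, integral_const_mul,
    integral_const_mul, integral_powProfile] at hint
  simp only [Real.log_zero, zero_mul, sub_zero] at hint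
  linarith

theorem hasDerivAt_log_mul_powProfile_zero_primitive {r : ℝ} (hr : 0 < r) :
    HasDerivAt (fun r => (1 - (bracket r)⁻¹) * Real.log r - Real.log (bracket r + 1))
      (Real.log r * powProfile 0 r) r := by
  have hb := bracket_pos r
  refine ((((hasDerivAt_bracket r).fun_inv hb.ne').const_sub 1).mul
    (Real.hasDerivAt_log hr.ne') |>.sub
    (((hasDerivAt_bracket r).add_const 1).log (by positivity))).congr_deriv ?_
  simp only [powProfile]
  field_simp
  linear_combination bracket r ^ 5 * bracket_sq r

theorem tendsto_log_sub_log_bracket_add_one :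
    Tendsto (fun r => Real.log r - Real.log (bracket r + 1)) atTop (𝓝 0) := by
  have hlower := (Real.tendsto_log_comp_add_sub_log 2).neg
  rw [neg_zero] at hlower
  refine tendsto_of_tendsto_of_tendsto_of_le_of_le' hlower tendsto_const_nhds ?_ ?_
  · filter_upwards [eventually_gt_atTop 0] with r hr
    have : Real.log (bracket r + 1) ≤ Real.log (r + 2) :=
      Real.log_le_log (by linarith [bracket_pos r]) (by linarith [bracket_le_add_one hr.le])
    linarith
  · filter_upwards [eventually_gt_atTop 0] with r hr
    exact sub_nonpos.2 (Real.log_le_log hr (by linarith [le_bracket r]))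

theorem continuous_log_mul_powProfile_zero_primitive :
    Continuous fun r => (1 - (bracket r)⁻¹) * Real.log r - Real.log (bracket r + 1) := by
  have hb := contDiff_bracket.continuous
  have hpos := bracket_pos
  have hfactor : ∀ r, (1 - (bracket r)⁻¹) * Real.log r =
      r / (bracket r * (bracket r + 1)) * (r * Real.log r) := fun r => by
    have := hpos r
    field_simp
    linear_combination Real.log r * bracket_sq r
  simp only [hfactor]
  refine ((continuous_id.div (by fun_prop) fun r => ?_).mul Real.continuous_mul_log).sub
    (Continuous.log (by fun_prop) fun r => ?_)
  all_goals
    have := hpos r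
    positivity

theorem integral_log_mul_powProfile_zero :
    ∫ r in Ioi 0, Real.log r * powProfile 0 r = Real.log 2 := by
  have hlim := tendsto_log_sub_log_bracket_add_one.sub tendsto_log_mul_inv_bracket
  rw [sub_zero] at hlim
  rw [integral_Ioi_of_hasDerivAt_of_tendsto
    continuous_log_mul_powProfile_zero_primitive.continuousWithinAt
    (fun r hr => hasDerivAt_log_mul_powProfile_zero_primitive hr)
    (isAmplitude_powProfile 0).integrableOn_log_mul (hlim.congr fun r => by ring)]
  norm_num [bracket_zero]

theorem integral_log_mul_powProfile_two :
    ∫ r in Ioi 0, Real.log r * powProfile 2 r = (Real.log 2 - 1) / 3 := by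
  have hrec := integral_log_mul_powProfile_add_two 0
  rw [integral_log_mul_powProfile_zero] at hrec
  norm_num at hrec
  linarith

/-! ### The limit `η → 0⁺` -/

/-- The total mass `∫ (A₁ + A₂ + A₃) du`. -/
noncomputable def coneMass (η : ℝ) : ℝ := ∫ r in Ioi 0, coneProfile η r

/-- The logarithmic moment `∫ log (u sinh η) (A₁ + A₂ + A₃) du`. -/
noncomputable def coneLogMass (η : ℝ) : ℝ := ∫ r in Ioi 0, Real.log r * coneProfile η r

theorem mellin_coneAmplitude_one {η : ℝ} (hη : 0 < η) :
    mellin (fun u => (coneAmplitude η u : ℂ)) 1 = coneMass η := by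
  rw [mellin_ofReal_one]
  exact congrArg _ (integral_Ioi_mul_comp_mul_left _ (Real.sinh_pos_iff.2 hη))

theorem mellin_log_smul_coneAmplitude_one {η : ℝ} (hη : 0 < η) :
    mellin (fun u => Real.log u • (coneAmplitude η u : ℂ)) 1 =
      (coneLogMass η - Real.log (Real.sinh η) * coneMass η : ℝ) := by
  have hp := isAmplitude_coneProfile η
  simp only [Complex.real_smul, ← Complex.ofReal_mul, mellin_ofReal_one]
  exact congrArg _ (integral_Ioi_log_mul_comp_mul_left hp.integrableOn hp.integrableOn_log_mul
    (Real.sinh_pos_iff.2 hη))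

theorem coneMass_eq (η : ℝ) :
    coneMass η = (6 - Real.cosh η ^ 2) * Real.cosh η / 24 - Real.cosh η / 8 +
      Real.sinh η ^ 2 * ∫ r in Ioi 0, quotProfile (Real.cosh η) r := by
  have hpow₂ := (isAmplitude_powProfile 2).integrableOn.const_mul
    ((6 - Real.cosh η ^ 2) * Real.cosh η / 8)
  have hpow₀ := (isAmplitude_powProfile 0).integrableOn.const_mul (Real.cosh η / 8)
  have hquot := (isAmplitude_quotProfile (Real.cosh_pos η)).integrableOn.const_mul
    (Real.sinh η ^ 2)
  simp only [coneMass, coneProfile]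
  rw [integral_add (by exact hpow₂.sub hpow₀) hquot, integral_sub hpow₂ hpow₀, integral_const_mul,
    integral_const_mul, integral_const_mul, integral_powProfile, integral_powProfile]
  push_cast
  ring

theorem coneLogMass_eq (η : ℝ) :
    coneLogMass η = (6 - Real.cosh η ^ 2) * Real.cosh η / 8 * ((Real.log 2 - 1) / 3) -
      Real.cosh η / 8 * Real.log 2 +
      Real.sinh η ^ 2 * ∫ r in Ioi 0, Real.log r * quotProfile (Real.cosh η) r := by
  have hpow₂ := (isAmplitude_powProfile 2).integrableOn_log_mul.const_mul
    ((6 - Real.cosh η ^ 2) * Real.cosh η / 8)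
  have hpow₀ := (isAmplitude_powProfile 0).integrableOn_log_mul.const_mul (Real.cosh η / 8)
  have hquot := (isAmplitude_quotProfile (Real.cosh_pos η)).integrableOn_log_mul.const_mul
    (Real.sinh η ^ 2)
  simp only [coneLogMass, coneProfile, mul_add, mul_sub, mul_left_comm (Real.log _)]
  rw [integral_add (by exact hpow₂.sub hpow₀) hquot, integral_sub hpow₂ hpow₀, integral_const_mul,
    integral_const_mul, integral_const_mul, integral_log_mul_powProfile_two,
    integral_log_mul_powProfile_zero]

theorem integral_quotProfile_mem_Icc {c : ℝ} (hc : 0 < c) :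
    ∫ r in Ioi 0, quotProfile c r ∈ Icc 0 ((1 + c) / 8) := by
  refine ⟨setIntegral_nonneg measurableSet_Ioi fun r hr =>
    quotProfile_nonneg hc (mem_Ioi.1 hr).le, ?_⟩
  calc ∫ r in Ioi 0, quotProfile c r ≤ ∫ r in Ioi 0, (1 + c) / 8 * powProfile 0 r :=
        setIntegral_mono_on (isAmplitude_quotProfile hc).integrableOn
          ((isAmplitude_powProfile 0).integrableOn.const_mul _) measurableSet_Ioi
          fun r hr => quotProfile_le hc (mem_Ioi.1 hr).le
    _ = (1 + c) / 8 := by rw [integral_const_mul, integral_powProfile]; norm_num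

theorem abs_integral_log_mul_quotProfile_le {c : ℝ} (hc : 0 < c) :
    |∫ r in Ioi 0, Real.log r * quotProfile c r| ≤
      (1 + c) / 8 * ∫ r in Ioi 0, |Real.log r * powProfile 0 r| := by
  rw [← integral_const_mul, ← Real.norm_eq_abs]
  refine norm_integral_le_of_norm_le
    ((isAmplitude_powProfile 0).integrableOn_log_mul.abs.const_mul _)
    (ae_restrict_of_forall_mem measurableSet_Ioi fun r hr => ?_)
  have hr : 0 ≤ r := (mem_Ioi.1 hr).le
  rw [Real.norm_eq_abs, abs_mul, abs_mul, abs_of_nonneg (quotProfile_nonneg hc hr),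
    abs_of_nonneg (powProfile_nonneg 0 hr), mul_left_comm]
  exact mul_le_mul_of_nonneg_left (quotProfile_le hc hr) (abs_nonneg _)

theorem abs_coneMass_sub_le (η : ℝ) :
    |coneMass η - 1 / 12| ≤ Real.sinh η ^ 2 * Real.cosh η := by
  obtain ⟨hquot, hquot'⟩ := integral_quotProfile_mem_Icc (Real.cosh_pos η)
  rw [coneMass_eq]
  generalize (∫ r in Ioi 0, quotProfile (Real.cosh η) r) = Q at *
  have hone := Real.one_le_cosh η
  have hsq := Real.cosh_sq η
  generalize Real.sinh η ^ 2 = a, Real.cosh η = c at *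
  have ha : 0 ≤ a := by nlinarith
  have hc_sub : c - 1 ≤ a := by nlinarith
  have hmul : a ≤ a * c := le_mul_of_one_le_right ha hone
  have haQ : a * Q ≤ a * ((1 + c) / 8) := mul_le_mul_of_nonneg_left hquot' ha
  have haQ0 : 0 ≤ a * Q := mul_nonneg ha hquot
  have hsplit : (6 - c ^ 2) * c / 24 - c / 8 + a * Q - 1 / 12 =
      (2 * (c - 1) - a * c) / 24 + a * Q := by
    rw [hsq]; ring
  rw [hsplit, abs_le]
  constructor <;> linarith

theorem tendsto_sinh_nhdsGT_zero : Tendsto Real.sinh (𝓝[>] 0) (𝓝 0) :=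
  (Real.continuous_sinh.tendsto' 0 0 Real.sinh_zero).mono_left nhdsWithin_le_nhds

theorem tendsto_cosh_nhdsGT_zero : Tendsto Real.cosh (𝓝[>] 0) (𝓝 1) :=
  (Real.continuous_cosh.tendsto' 0 1 Real.cosh_zero).mono_left nhdsWithin_le_nhds

theorem tendsto_log_sinh_sub_log :
    Tendsto (fun η => Real.log (Real.sinh η) - Real.log η) (𝓝[>] 0) (𝓝 0) := by
  have hslope := (Real.hasDerivAt_sinh 0).tendsto_slope_zero_right
  simp only [zero_add, Real.sinh_zero, sub_zero, smul_eq_mul, Real.cosh_zero] at hslope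
  have hlog := hslope.log one_ne_zero
  rw [Real.log_one] at hlog
  refine hlog.congr' ?_
  filter_upwards [self_mem_nhdsWithin] with η hη
  rw [Real.log_mul (inv_ne_zero (mem_Ioi.1 hη).ne') (Real.sinh_pos_iff.2 hη).ne', Real.log_inv]
  ring

theorem tendsto_coneMass : Tendsto coneMass (𝓝[>] 0) (𝓝 (1 / 12)) := by
  rw [← tendsto_sub_nhds_zero_iff]
  refine squeeze_zero_norm abs_coneMass_sub_le ?_
  simpa using (tendsto_sinh_nhdsGT_zero.pow 2).mul tendsto_cosh_nhdsGT_zero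

theorem tendsto_log_sinh_mul_coneMass_sub :
    Tendsto (fun η => Real.log (Real.sinh η) * (coneMass η - 1 / 12)) (𝓝[>] 0) (𝓝 0) := by
  have hmul_log : Tendsto (fun η => Real.sinh η * Real.log (Real.sinh η)) (𝓝[>] 0) (𝓝 0) :=
    (Real.continuous_mul_log.tendsto' 0 0 (by simp)).comp tendsto_sinh_nhdsGT_zero
  refine squeeze_zero_norm (fun η => ?_)
    (a := fun η => |Real.sinh η * Real.log (Real.sinh η)| * |Real.sinh η| * Real.cosh η) ?_
  · calc ‖Real.log (Real.sinh η) * (coneMass η - 1 / 12)‖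
        ≤ |Real.log (Real.sinh η)| * (Real.sinh η ^ 2 * Real.cosh η) := by
          rw [norm_mul]
          exact mul_le_mul_of_nonneg_left (abs_coneMass_sub_le η) (abs_nonneg _)
      _ = _ := by rw [abs_mul, ← sq_abs (Real.sinh η)]; ring
  · simpa using (hmul_log.abs.mul tendsto_sinh_nhdsGT_zero.abs).mul tendsto_cosh_nhdsGT_zero

theorem tendsto_coneLogMass :
    Tendsto coneLogMass (𝓝[>] 0) (𝓝 (Real.log 2 / 12 - 5 / 24)) := by
  have hcosh := tendsto_cosh_nhdsGT_zero
  have hquot : Tendsto (fun η => Real.sinh η ^ 2 *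
      ∫ r in Ioi 0, Real.log r * quotProfile (Real.cosh η) r) (𝓝[>] 0) (𝓝 0) := by
    refine squeeze_zero_norm (fun η => ?_) (a := fun η => Real.sinh η ^ 2 *
      ((1 + Real.cosh η) / 8 * ∫ r in Ioi 0, |Real.log r * powProfile 0 r|)) ?_
    · rw [norm_mul, Real.norm_of_nonneg (sq_nonneg _)]
      exact mul_le_mul_of_nonneg_left (abs_integral_log_mul_quotProfile_le (Real.cosh_pos η))
        (sq_nonneg _)
    · simpa using (tendsto_sinh_nhdsGT_zero.pow 2).mul
        (((hcosh.const_add 1).div_const 8).mul_const _)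
  rw [funext coneLogMass_eq]
  convert (((((hcosh.pow 2).const_sub 6).mul hcosh).div_const 8).mul_const
    ((Real.log 2 - 1) / 3)).sub ((hcosh.div_const 8).mul_const (Real.log 2)) |>.add hquot using 2
  ring

theorem tendsto_lowSum_coneAmplitude {w δ : ℝ} (hw : 1 ≤ w) (hδ : δ < 1) :
    Tendsto (fun η => lowSum w δ (fun u => (coneAmplitude η u : ℂ)) 0) (𝓝[>] 0) (𝓝 0) := by
  let K (η : ℝ) := |(6 - Real.cosh η ^ 2) * Real.cosh η / 8| + Real.cosh η / 8 +
    Real.sinh η ^ 2 * ((1 + Real.cosh η) / 8)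
  have hcoef : Tendsto (fun η => Real.sinh η ^ 2 * K η) (𝓝[>] 0) (𝓝 0) := by
    have hcont : Continuous fun η => Real.sinh η ^ 2 * K η := by fun_prop
    exact (hcont.tendsto' 0 0 (by simp)).mono_left nhdsWithin_le_nhds
  have hbound : ∀ η, 0 < η → ∀ u ∈ Ioc (0 : ℝ) 1,
      ‖(coneAmplitude η u : ℂ)‖ ≤ Real.sinh η ^ 2 * K η * u ^ 1 := fun η hη u hu => by
    have hsinh := Real.sinh_pos_iff.2 hη
    rw [Complex.norm_real, Real.norm_eq_abs, coneAmplitude, abs_mul, abs_of_pos hsinh]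
    refine (mul_le_mul_of_nonneg_left
      (abs_coneProfile_le η (mul_pos hsinh hu.1).le) hsinh.le).trans_eq ?_
    ring
  refine squeeze_zero_norm' (eventually_mem_nhdsWithin.mono fun η hη =>
    norm_lowSum_le hw hδ.le (hbound η hη) (zero_mem_lowRegion hδ 1)) ?_
  simpa using hcoef.mul_const _

/-- The contribution to `ζ_{E₂}'(0)` of the full half-line `(0, ∞)`, expressed through the moments
of `A₁ + A₂ + A₃`. -/
noncomputable def coneMainDeriv (w η : ℝ) : ℝ :=
  w⁻¹ * ((2 * Real.eulerMascheroniConstant - 2 * Real.log w) * coneMass η -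
    2 * (coneLogMass η - Real.log (Real.sinh η) * coneMass η))

/-- The value of `ζ_{E₂}'(0)`: the cutoffs only enter through `lowSum`. -/
noncomputable def coneZetaDeriv (w δ η : ℝ) : ℂ :=
  coneMainDeriv w η - 2 * lowSum w δ (fun u => (coneAmplitude η u : ℂ)) 0

section ConeSeries

variable {ω : ℕ} {η δ : ℝ}

theorem summable_norm_coneE2 (hω : 1 ≤ ω) (hη : 0 < η) (hδ : 0 ≤ δ) {s : ℂ} (hs : 0 < s.re) :
    Summable fun k : ℕ => ‖coneE2 ω η δ (k + 1) s‖ := by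
  simp only [coneE2_eq hω hη hδ, norm_mul]
  exact ((isKernelFamily_remainderKernel 0).summable_norm_weightedTerm (by exact_mod_cast hω) hδ
    (isAmplitude_coneAmplitude hη) (by simpa using hs)).mul_left _

theorem tsum_coneE2 (hω : 1 ≤ ω) (hη : 0 < η) (hδ : 0 ≤ δ) (s : ℂ) :
    ∑' k : ℕ, coneE2 ω η δ (k + 1) s = ampZeta ω δ (fun u => (coneAmplitude η u : ℂ)) s := by
  simp only [coneE2_eq hω hη hδ, tsum_mul_left]
  rfl

theorem tendstoLocallyUniformlyOn_sum_coneE2 (hω : 1 ≤ ω) (hη : 0 < η) (hδ : 0 ≤ δ) :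
    TendstoLocallyUniformlyOn (fun n s => ∑ k ∈ Finset.range n, coneE2 ω η δ (k + 1) s)
      (fun s => ∑' k : ℕ, coneE2 ω η δ (k + 1) s) atTop {s | 0 < s.re} := by
  have hamp := isAmplitude_coneAmplitude hη
  have hw : (0 : ℝ) < ω := by exact_mod_cast hω
  have hψ := isKernelFamily_remainderKernel 0
  rw [tendstoLocallyUniformlyOn_iff_forall_isCompact
    (isOpen_lt continuous_const Complex.continuous_re)]
  intro K hK_pos hK
  obtain ⟨u, hu, hle⟩ := hψ.exists_summable_bound hw hδ hamp hK fun s hs => by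
    simpa using hK_pos hs
  obtain ⟨C, hC⟩ := hK.exists_bound_of_continuousOn
    differentiable_sinFactor.continuous.continuousOn
  refine tendstoUniformlyOn_tsum_nat (hu.mul_left C) fun k s hs => ?_
  rw [coneE2_eq hω hη hδ, norm_mul]
  exact mul_le_mul (hC s hs) (hle k s hs) (norm_nonneg _) ((norm_nonneg _).trans (hC s hs))

theorem exists_meromorphicOn_tsum_coneE2 (hω : 1 ≤ ω) (hη : 0 < η) (hδ : 0 ≤ δ) (hδ' : δ < 1) :
    ∃ F : ℂ → ℂ, MeromorphicOn F univ ∧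
      EqOn F (fun s => ∑' k : ℕ, coneE2 ω η δ (k + 1) s) {s | 0 < s.re} ∧ AnalyticAt ℂ F 0 ∧
      deriv F 0 = coneZetaDeriv ω δ η := by
  obtain ⟨F, hF, hF_eq, hF_analytic, hF_deriv⟩ := exists_meromorphicOn_ampZeta
    (w := ω) (by exact_mod_cast hω) hδ hδ' (isAmplitude_coneAmplitude hη)
  refine ⟨F, hF, hF_eq.trans fun s _ => (tsum_coneE2 hω hη hδ s).symm, hF_analytic, ?_⟩
  rw [hF_deriv, mellin_coneAmplitude_one hη, mellin_log_smul_coneAmplitude_one hη,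
    coneZetaDeriv, coneMainDeriv]
  push_cast
  ring

end ConeSeries

theorem riemannZeta_neg_one : riemannZeta (-1) = -(1 / 12) := by
  have hbernoulli := riemannZeta_neg_nat_eq_bernoulli 1
  norm_num [bernoulli_two, bernoulli_eq_bernoulli'_of_ne_one] at hbernoulli ⊢
  exact hbernoulli

theorem tendsto_coneMainDeriv_sub (w : ℝ) :
    Tendsto (fun η => coneMainDeriv w η -
      (1 / 12 / w * (5 + 2 * Real.eulerMascheroniConstant - 2 * Real.log 2 - 2 * Real.log w) +
        1 / (6 * w) * Real.log η)) (𝓝[>] 0) (𝓝 0) := by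
  have hmass := (tendsto_coneMass.sub_const (1 / 12)).const_mul
    (2 * Real.eulerMascheroniConstant - 2 * Real.log w)
  have hlogMass := (tendsto_coneLogMass.sub_const (Real.log 2 / 12 - 5 / 24)).const_mul 2
  have hsinh := tendsto_log_sinh_sub_log.const_mul (1 / 6)
  have hmain := (((hmass.sub hlogMass).add (tendsto_log_sinh_mul_coneMass_sub.const_mul 2)).add
    hsinh).const_mul w⁻¹
  simp only [sub_self, mul_zero, add_zero] at hmain
  refine hmain.congr fun η => ?_
  rw [coneMainDeriv]
  ring

theorem tendsto_coneZetaDeriv_sub {w δ : ℝ} (hw : 1 ≤ w) (hδ : δ < 1) :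
    Tendsto (fun η : ℝ => coneZetaDeriv w δ η - (-(riemannZeta (-1) / (w : ℂ)) *
        (5 + 2 * (Real.eulerMascheroniConstant : ℂ) - 2 * (Real.log 2 : ℂ) -
          2 * (Real.log w : ℂ)) + (1 / (6 * (w : ℂ))) * (Real.log η : ℂ))) (𝓝[>] 0) (𝓝 0) := by
  have hmain := (Complex.continuous_ofReal.tendsto' 0 0 Complex.ofReal_zero).comp
    (tendsto_coneMainDeriv_sub w)
  have hlow := (tendsto_lowSum_coneAmplitude hw hδ).const_mul 2
  have hsub := hmain.sub hlow
  rw [mul_zero, sub_zero] at hsub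
  refine hsub.congr fun η => ?_
  rw [coneZetaDeriv, riemannZeta_neg_one, Function.comp_apply]
  push_cast
  ring

end ConeZeta

open ConeZeta in
theorem statement8_general (ω : ℕ) (hω : 1 ≤ ω) (δ : ℝ) (hδ0 : 0 ≤ δ) (hδ1 : δ < 1) :
    ∃ F : ℝ → ℂ → ℂ,
      (∀ η : ℝ, 0 < η →
        (∀ s ∈ {s : ℂ | 0 < s.re}, Summable (fun k : ℕ => ‖coneE2 ω η δ (k + 1) s‖)) ∧
        TendstoLocallyUniformlyOn
          (fun (n : ℕ) (s : ℂ) => ∑ k ∈ Finset.range n, coneE2 ω η δ (k + 1) s)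
          (fun s : ℂ => ∑' k : ℕ, coneE2 ω η δ (k + 1) s) atTop {s : ℂ | 0 < s.re} ∧
        MeromorphicOn (F η) Set.univ ∧
        Set.EqOn (F η) (fun s : ℂ => ∑' k : ℕ, coneE2 ω η δ (k + 1) s) {s : ℂ | 0 < s.re} ∧
        AnalyticAt ℂ (F η) 0) ∧
      Tendsto
        (fun η : ℝ => deriv (F η) 0 -
          (-(riemannZeta (-1) / (ω : ℂ)) *
              (5 + 2 * (Real.eulerMascheroniConstant : ℂ) - 2 * (Real.log 2 : ℂ) -
                2 * (Real.log ω : ℂ)) +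
            (1 / (6 * (ω : ℂ))) * (Real.log η : ℂ)))
        (nhdsWithin 0 (Set.Ioi 0)) (nhds 0) := by
  choose! F hF hF_eq hF_analytic hF_deriv using fun η (hη : 0 < η) =>
    exists_meromorphicOn_tsum_coneE2 hω hη hδ0 hδ1
  refine ⟨F, fun η hη => ⟨fun s hs => summable_norm_coneE2 hω hη hδ0 hs,
    tendstoLocallyUniformlyOn_sum_coneE2 hω hη hδ0, hF η hη, hF_eq η hη, hF_analytic η hη⟩, ?_⟩
  refine (tendsto_coneZetaDeriv_sub (w := ω) (by exact_mod_cast hω) hδ1).congr' ?_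
  filter_upwards [self_mem_nhdsWithin] with η hη
  rw [hF_deriv η hη, Complex.ofReal_natCast]

/-- for fixed integer `ω ≥ 1` and `δ ∈ (0,1/8)`, for every `η > 0` the series
`ζ_{E₂}(s) = Σ_{k≥1} E_{2,k}(s)` converges absolutely and locally uniformly on the strip
`1 < Re(s) < 2`, its sum extends to a meromorphic function on `ℂ` holomorphic at `s = 0`, and
the derivative at `0` satisfies
`ζ_{E₂}'(0) = -(ζ(-1)/ω)·(5 + 2γ - 2 log 2 - 2 log ω) + (1/(6ω))·log η + o(1)` as `η → 0⁺`. -/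
theorem statement8 (ω : ℕ) (hω : 1 ≤ ω) (δ : ℝ) (hδ0 : 0 < δ) (hδ1 : δ < 1 / 8) :
    ∃ F : ℝ → ℂ → ℂ,
      (∀ η : ℝ, 0 < η →
        (∀ s ∈ {s : ℂ | 1 < s.re ∧ s.re < 2},
          Summable (fun k : ℕ => ‖coneE2 ω η δ (k + 1) s‖)) ∧
        TendstoLocallyUniformlyOn
          (fun (n : ℕ) (s : ℂ) => ∑ k ∈ Finset.range n, coneE2 ω η δ (k + 1) s)
          (fun s : ℂ => ∑' k : ℕ, coneE2 ω η δ (k + 1) s)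
          atTop {s : ℂ | 1 < s.re ∧ s.re < 2} ∧
        MeromorphicOn (F η) Set.univ ∧
        Set.EqOn (F η) (fun s : ℂ => ∑' k : ℕ, coneE2 ω η δ (k + 1) s)
          {s : ℂ | 1 < s.re ∧ s.re < 2} ∧
        AnalyticAt ℂ (F η) 0) ∧
      Tendsto
        (fun η : ℝ => deriv (F η) 0 -
          (-(riemannZeta (-1) / (ω : ℂ)) *
              (5 + 2 * (Real.eulerMascheroniConstant : ℂ) - 2 * (Real.log 2 : ℂ) -
                2 * (Real.log ω : ℂ)) +
            (1 / (6 * (ω : ℂ))) * (Real.log η : ℂ)))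
        (nhdsWithin 0 (Set.Ioi 0)) (nhds 0) := by
  have hstrip : {s : ℂ | 1 < s.re ∧ s.re < 2} ⊆ {s | 0 < s.re} := fun s hs => one_pos.trans hs.1
  obtain ⟨F, hF, hderiv⟩ := statement8_general ω hω δ hδ0.le (by linarith)
  refine ⟨F, fun η hη => ?_, hderiv⟩
  obtain ⟨hsummable, hunif, hmero, heq, hanalytic⟩ := hF η hη
  exact ⟨fun s hs => hsummable s (hstrip hs), hunif.mono hstrip, hmero, heq.mono hstrip, hanalytic⟩
end

section
/- Let ω ≥ 1 be an integer. The double series Ξ₃(s) = (2 sin(πs)/π) · Σ_{k≥1} Σ_{j≥0} ((s)_j/(j!·4^j)) · (kω)^{1-2s-2j} · ∫₁^{∞} (log(u) - log(u+1)) · u^{-2s-2j} du converges absolutely and locally uniformly on the strip {s ∈ ℂ : 1 < Re(s) < 2}, and its sum extends to a meromorphic function on the half-plane {Re(s) > -1/2} which is holomorphic at s = 0 with value Ξ₃(0) = -ζ(-1)·ω and derivative Ξ₃'(0) = 2ω·(ζ(-1)·log 4 - ζ(-1) - ζ'(-1)) + (1/ω)·(ζ(0)² + ζ(0)·log 2)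 + 2ω·ζ(-1)·log(ω). -/
open MeasureTheory Filter

/-- The Pochhammer symbol `(s)_j = s(s+1)⋯(s+j-1)`. -/
noncomputable def pochSym (s : ℂ) (j : ℕ) : ℂ := ∏ i ∈ Finset.range j, (s + i)

/-- The `(k,j)`-term of the double series `Ξ₃(s)`:
`(2 sin(πs)/π) · ((s)_j/(j!·4^j)) · (kω)^{1-2s-2j} · ∫₁^∞ (log u - log(u+1))·u^{-2s-2j} du`. -/
noncomputable def Xi3Term (ω : ℕ) (k j : ℕ) (s : ℂ) : ℂ :=
  (2 * Complex.sin ((Real.pi : ℂ) * s) / (Real.pi : ℂ)) *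
    (pochSym s j / ((Nat.factorial j : ℂ) * 4 ^ j)) *
    (((k : ℝ) * (ω : ℝ) : ℝ) : ℂ) ^ (1 - 2 * s - 2 * (j : ℂ)) *
    ∫ u in Set.Ioi (1 : ℝ),
      ((Real.log u - Real.log (u + 1) : ℝ) : ℂ) * (u : ℂ) ^ (-(2 * s) - 2 * (j : ℂ))

open Set Topology Asymptotics

/-!
Up to the entire factor `ω^{1-2s} · 2 sin(πs)/(πs)`, the series is `s` times the sum over `j` of
`((s)_j/j!) (4ω²)^{-j} ζ(2s+2j-1) M(2s+2j)`, where `M(a) = ∫₁^∞ (log u - log (u+1)) u^{-a} du`.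
The kernel is `-1/u + O(u⁻²)`, so `M(a) + 1/a` is holomorphic on `re a > -1`.

Since `4ω² > 1`, the rows `j ≥ 2` converge locally uniformly on `re s > -1` and vanish at `0`. The
row `j = 0` contributes `ζ(2s-1)(s M(2s))`, holomorphic at `0` with value `-ζ(-1)/2`. In the row
`j = 1` the zero of `(s)_1 = s` cancels the pole of `ζ(2s+1)`. The first-order terms at `0` then
need only `∫₁^∞ (log u - log (u+1) + 1/u) du = 2 log 2 - 1` and `M(2) = 1 - 2 log 2`, both
elementary, and no derivative of the sine factor, because `sin(πs)/(πs)` is even.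
-/

/-! ### Mellin integrals over `(1, ∞)` -/

/-- The Mellin transform of `g` restricted to `(1, ∞)`, in the variable `a = 1 - s`, so that it is
defined on a right half-plane. -/
noncomputable def tailMellin (g : ℝ → ℂ) (a : ℂ) : ℂ :=
  ∫ u in Ioi (1 : ℝ), g u * (u : ℂ) ^ (-a)

theorem tailMellin_eq_mellin (g : ℝ → ℂ) (a : ℂ) :
    tailMellin g a = mellin ((Ioi 1).indicator g) (1 - a) := by
  have hsmul : (fun t : ℝ => (t : ℂ) ^ (1 - a - 1) • (Ioi 1).indicator g t) =
      (Ioi 1).indicator fun t : ℝ => g t * (t : ℂ) ^ (-a) := by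
    funext t
    rw [← indicator_const_smul_apply, sub_right_comm, sub_self, zero_sub]
    simp only [indicator_apply, smul_eq_mul, mul_comm]
  rw [mellin, hsmul, setIntegral_indicator measurableSet_Ioi, Ioi_inter_Ioi,
    sup_of_le_right zero_le_one, tailMellin]

section Decay

variable {g : ℝ → ℂ} {C m : ℝ} {a : ℂ}

theorem norm_mul_cpow_neg_le (hb : ∀ u ∈ Ioi (1 : ℝ), ‖g u‖ ≤ C * u ^ (-m)) {u : ℝ}
    (hu : u ∈ Ioi (1 : ℝ)) : ‖g u * (u : ℂ) ^ (-a)‖ ≤ C * u ^ (-m - a.re) := by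
  have hu0 : 0 < u := one_pos.trans hu
  rw [norm_mul, Complex.norm_cpow_eq_rpow_re_of_pos hu0, Complex.neg_re, sub_eq_add_neg,
    Real.rpow_add hu0, ← mul_assoc]
  gcongr
  exact hb u hu

theorem integrableOn_mul_cpow_neg (hg : AEStronglyMeasurable g (volume.restrict (Ioi 1)))
    (hb : ∀ u ∈ Ioi (1 : ℝ), ‖g u‖ ≤ C * u ^ (-m)) (ha : 1 - m < a.re) :
    IntegrableOn (fun u : ℝ => g u * (u : ℂ) ^ (-a)) (Ioi 1) := by
  have hmajorant : IntegrableOn (fun u : ℝ => C * u ^ (-m - a.re)) (Ioi 1) :=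
    (integrableOn_Ioi_rpow_of_lt (by linarith) one_pos).const_mul C
  refine hmajorant.mono' (hg.mul ?_) ?_
  · exact (by fun_prop : Measurable fun u : ℝ => (u : ℂ) ^ (-a)).aestronglyMeasurable
  · exact ae_restrict_of_forall_mem measurableSet_Ioi fun u => norm_mul_cpow_neg_le hb

theorem norm_tailMellin_le (hb : ∀ u ∈ Ioi (1 : ℝ), ‖g u‖ ≤ C * u ^ (-m)) (ha : 1 - m < a.re) :
    ‖tailMellin g a‖ ≤ C / (a.re + m - 1) := by
  have hlt : -m - a.re < -1 := by linarith
  calc ‖tailMellin g a‖ ≤ ∫ u in Ioi (1 : ℝ), C * u ^ (-m - a.re) :=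
        norm_integral_le_of_norm_le ((integrableOn_Ioi_rpow_of_lt hlt one_pos).const_mul C)
          (ae_restrict_of_forall_mem measurableSet_Ioi fun u => norm_mul_cpow_neg_le hb)
    _ = C / (a.re + m - 1) := by
        rw [integral_const_mul, integral_Ioi_rpow_of_lt hlt one_pos, Real.one_rpow,
          neg_div, ← div_neg, mul_one_div]
        ring_nf

theorem locallyIntegrableOn_indicator_Ioi_one
    (hg : AEStronglyMeasurable g (volume.restrict (Ioi 1)))
    (hb : ∀ u ∈ Ioi (1 : ℝ), ‖g u‖ ≤ C * u ^ (-m)) :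
    LocallyIntegrableOn ((Ioi 1).indicator g) (Ioi 0) := by
  have hpow : LocallyIntegrableOn (fun u : ℝ => C * u ^ (-m)) (Ioi 0) :=
    ContinuousOn.locallyIntegrableOn (continuousOn_const.mul fun u hu =>
      (Real.continuousAt_rpow_const u _ (.inl (ne_of_gt hu))).continuousWithinAt) measurableSet_Ioi
  refine hpow.mono ((aestronglyMeasurable_indicator_iff measurableSet_Ioi).2 hg)
    (.of_forall fun u => ?_)
  by_cases hu : u ∈ Ioi (1 : ℝ)
  · rw [indicator_of_mem hu]
    exact (hb u hu).trans (le_abs_self _)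
  · rw [indicator_of_notMem hu, norm_zero]
    exact norm_nonneg _

theorem differentiableAt_tailMellin (hg : AEStronglyMeasurable g (volume.restrict (Ioi 1)))
    (hb : ∀ u ∈ Ioi (1 : ℝ), ‖g u‖ ≤ C * u ^ (-m)) (ha : 1 - m < a.re) :
    DifferentiableAt ℂ (tailMellin g) a := by
  have htop : (Ioi 1).indicator g =O[atTop] fun u : ℝ => u ^ (-m) := by
    refine .of_bound C ?_
    filter_upwards [eventually_gt_atTop (1 : ℝ)] with u hu
    rw [indicator_of_mem (mem_Ioi.2 hu), Real.norm_of_nonneg (by positivity)]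
    exact hb u hu
  have hzero : (Ioi 1).indicator g =O[𝓝[>] 0] fun u : ℝ => u ^ (-((1 - a).re - 1)) := by
    refine EventuallyEq.trans_isBigO ?_ (isBigO_zero _ _)
    filter_upwards [mem_nhdsWithin_of_mem_nhds (Iio_mem_nhds one_pos)] with u hu
    exact indicator_of_notMem (notMem_Ioi.2 (le_of_lt hu)) g
  have hmellin : DifferentiableAt ℂ (mellin ((Ioi 1).indicator g)) (1 - a) :=
    mellin_differentiableAt_of_isBigO_rpow (locallyIntegrableOn_indicator_Ioi_one hg hb) htop
      (by rw [Complex.sub_re, Complex.one_re]; linarith) hzero (sub_one_lt _)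
  rw [funext (tailMellin_eq_mellin g)]
  exact hmellin.fun_comp' a (by fun_prop)

end Decay

/-! ### The kernel `log u - log (u + 1)` -/

/-- The integrand `log u - log (u + 1)` of the coefficients of `Ξ₃`. -/
noncomputable def logStep (u : ℝ) : ℝ := Real.log u - Real.log (u + 1)

@[fun_prop]
theorem measurable_logStep : Measurable logStep := by
  unfold logStep
  fun_prop

theorem neg_inv_le_logStep {u : ℝ} (hu : 0 < u) : -u⁻¹ ≤ logStep u := by
  have h := Real.log_le_sub_one_of_pos (show 0 < (u + 1) / u by positivity)
  rw [Real.log_div (by positivity) hu.ne', show (u + 1) / u - 1 = u⁻¹ by field_simp; ring] at h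
  rw [logStep]
  linarith

theorem logStep_le_neg_inv_add_one {u : ℝ} (hu : 0 < u) : logStep u ≤ -(u + 1)⁻¹ := by
  have h := Real.one_sub_inv_le_log_of_pos (show 0 < (u + 1) / u by positivity)
  rw [Real.log_div (by positivity) hu.ne',
    show 1 - ((u + 1) / u)⁻¹ = (u + 1)⁻¹ by field_simp; ring] at h
  rw [logStep]
  linarith

theorem logStep_nonpos {u : ℝ} (hu : 0 < u) : logStep u ≤ 0 :=
  (logStep_le_neg_inv_add_one hu).trans (by rw [neg_nonpos]; positivity)

theorem hasDerivAt_logStep {u : ℝ} (hu : 0 < u) :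
    HasDerivAt logStep (u⁻¹ - (u + 1)⁻¹) u := by
  have hlog := (Real.hasDerivAt_log (by positivity : u + 1 ≠ 0)).comp_add_const u 1
  exact (Real.hasDerivAt_log hu.ne').sub hlog

theorem tendsto_logStep_atTop : Tendsto logStep atTop (𝓝 0) := by
  refine tendsto_of_tendsto_of_tendsto_of_le_of_le' (g := fun u : ℝ => -u⁻¹) ?_
    tendsto_const_nhds ?_ ?_
  · simpa using (tendsto_inv_atTop_zero (𝕜 := ℝ)).neg
  · filter_upwards [eventually_gt_atTop 0] with u hu using neg_inv_le_logStep hu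
  · filter_upwards [eventually_gt_atTop 0] with u hu using logStep_nonpos hu

theorem tendsto_add_one_mul_logStep_atTop :
    Tendsto (fun u => (u + 1) * logStep u) atTop (𝓝 (-1)) := by
  refine tendsto_of_tendsto_of_tendsto_of_le_of_le' (g := fun u : ℝ => -1 - u⁻¹) ?_
    tendsto_const_nhds ?_ ?_
  · simpa using (tendsto_inv_atTop_zero (𝕜 := ℝ)).const_sub (-1)
  · filter_upwards [eventually_gt_atTop 0] with u hu
    calc -1 - u⁻¹ = (u + 1) * -u⁻¹ := by field_simp; ring
      _ ≤ (u + 1) * logStep u := by gcongr; exact neg_inv_le_logStep hu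
  · filter_upwards [eventually_gt_atTop 0] with u hu
    calc (u + 1) * logStep u ≤ (u + 1) * -(u + 1)⁻¹ := by
          gcongr; exact logStep_le_neg_inv_add_one hu
      _ = -1 := by field_simp

theorem integral_Ioi_one_logStep_add_inv :
    ∫ u in Ioi (1 : ℝ), (logStep u + u⁻¹) = 2 * Real.log 2 - 1 := by
  have hderiv : ∀ u ∈ Ici (1 : ℝ),
      HasDerivAt (fun u => (u + 1) * logStep u) (logStep u + u⁻¹) u := fun u hu => by
    have hu0 : 0 < u := one_pos.trans_le hu
    refine (((hasDerivAt_id u).add_const 1).mul (hasDerivAt_logStep hu0)).congr_deriv ?_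
    simp only [id]
    field_simp
    ring
  rw [integral_Ioi_of_hasDerivAt_of_nonneg' hderiv
    (fun u hu => by linarith [neg_inv_le_logStep (one_pos.trans hu)])
    tendsto_add_one_mul_logStep_atTop]
  simp only [logStep, Real.log_one, one_add_one_eq_two]
  ring

theorem integral_Ioi_one_logStep_mul_inv_sq :
    ∫ u in Ioi (1 : ℝ), logStep u * (u ^ 2)⁻¹ = 1 - 2 * Real.log 2 := by
  have hderiv : ∀ u ∈ Ici (1 : ℝ), HasDerivAt (fun u => -u⁻¹ * logStep u - u⁻¹ - logStep u)
      (logStep u * (u ^ 2)⁻¹) u := fun u hu => by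
    have hu0 : 0 < u := one_pos.trans_le hu
    have hinv := hasDerivAt_inv hu0.ne'
    refine (((hinv.neg.mul (hasDerivAt_logStep hu0)).sub hinv).sub
      (hasDerivAt_logStep hu0)).congr_deriv ?_
    simp only [Pi.neg_apply]
    field_simp
    ring
  have hlim : Tendsto (fun u => -u⁻¹ * logStep u - u⁻¹ - logStep u) atTop (𝓝 0) := by
    have hinv := tendsto_inv_atTop_zero (𝕜 := ℝ)
    simpa using ((hinv.neg.mul tendsto_logStep_atTop).sub hinv).sub tendsto_logStep_atTop
  rw [integral_Ioi_of_hasDerivAt_of_nonpos' hderiv (fun u hu =>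
    mul_nonpos_of_nonpos_of_nonneg (logStep_nonpos (one_pos.trans hu)) (by positivity)) hlim]
  simp only [logStep, Real.log_one, inv_one, one_add_one_eq_two]
  ring

/-! ### The transform of the kernel -/

/-- The integral `∫₁^∞ (log u - log (u + 1)) u^{-a} du`, convergent for `0 < re a`. -/
noncomputable def logMellin (a : ℂ) : ℂ := tailMellin (fun u => (logStep u : ℂ)) a

/-- `logMellin` with the leading term `-1/u` of the kernel removed, hence convergent for
`-1 < re a`. -/
noncomputable def logMellinReg (a : ℂ) : ℂ := tailMellin (fun u => ((logStep u + u⁻¹ : ℝ) : ℂ)) a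

theorem norm_ofReal_logStep_le {u : ℝ} (hu : 0 < u) :
    ‖(logStep u : ℂ)‖ ≤ 1 * u ^ (-1 : ℝ) := by
  rw [Complex.norm_real, Real.norm_of_nonpos (logStep_nonpos hu), Real.rpow_neg_one, one_mul]
  linarith [neg_inv_le_logStep hu]

theorem norm_ofReal_logStep_add_inv_le {u : ℝ} (hu : 0 < u) :
    ‖((logStep u + u⁻¹ : ℝ) : ℂ)‖ ≤ 1 * u ^ (-2 : ℝ) := by
  rw [Complex.norm_real, Real.norm_of_nonneg (by linarith [neg_inv_le_logStep hu]), one_mul,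
    Real.rpow_neg hu.le, Real.rpow_two]
  calc logStep u + u⁻¹ ≤ u⁻¹ - (u + 1)⁻¹ := by linarith [logStep_le_neg_inv_add_one hu]
    _ = (u * (u + 1))⁻¹ := by field_simp; ring
    _ ≤ (u ^ 2)⁻¹ := by gcongr; nlinarith

theorem differentiableAt_logMellin {a : ℂ} (ha : 0 < a.re) : DifferentiableAt ℂ logMellin a :=
  differentiableAt_tailMellin (by fun_prop) (fun _ hu => norm_ofReal_logStep_le (one_pos.trans hu))
    (by linarith)

theorem differentiableAt_logMellinReg {a : ℂ} (ha : -1 < a.re) :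
    DifferentiableAt ℂ logMellinReg a :=
  differentiableAt_tailMellin (by fun_prop)
    (fun _ hu => norm_ofReal_logStep_add_inv_le (one_pos.trans hu)) (by linarith)

theorem norm_logMellin_le {a : ℂ} (ha : 0 < a.re) : ‖logMellin a‖ ≤ 1 / a.re := by
  simpa [logMellin] using norm_tailMellin_le
    (fun _ hu => norm_ofReal_logStep_le (one_pos.trans (mem_Ioi.1 hu))) (by linarith : 1 - 1 < a.re)

theorem logMellin_eq_logMellinReg_sub {a : ℂ} (ha : 0 < a.re) :
    logMellin a = logMellinReg a - 1 / a := by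
  have hint := integrableOn_mul_cpow_neg (a := a) (by fun_prop)
    (fun _ hu => norm_ofReal_logStep_le (one_pos.trans hu)) (by linarith)
  have hintReg := integrableOn_mul_cpow_neg (a := a) (by fun_prop)
    (fun _ hu => norm_ofReal_logStep_add_inv_le (one_pos.trans hu)) (by linarith)
  have hpole : ∫ u in Ioi (1 : ℝ), (u : ℂ) ^ (-1 - a) = 1 / a := by
    rw [integral_Ioi_cpow_of_lt (by simpa using ha) one_pos, Complex.ofReal_one,
      Complex.one_cpow, show -1 - a + 1 = -a by ring, neg_div_neg_eq]
  have hdiff : logMellinReg a - logMellin a = ∫ u in Ioi (1 : ℝ), (u : ℂ) ^ (-1 - a) := by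
    rw [logMellinReg, logMellin, tailMellin, tailMellin, ← integral_sub hintReg hint]
    refine setIntegral_congr_fun measurableSet_Ioi fun u hu => ?_
    have hu0 : (u : ℂ) ≠ 0 := Complex.ofReal_ne_zero.2 (one_pos.trans hu).ne'
    simp only [sub_eq_add_neg (-1 : ℂ), Complex.cpow_add _ _ hu0, Complex.cpow_neg_one]
    push_cast
    ring
  rw [← hpole, ← hdiff, sub_sub_cancel]

theorem logMellin_two : logMellin 2 = 1 - 2 * (Real.log 2 : ℂ) := by
  have hker (u : ℝ) : (logStep u : ℂ) * (u : ℂ) ^ (-2 : ℂ) = ((logStep u * (u ^ 2)⁻¹ : ℝ) : ℂ) := by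
    rw [Complex.cpow_neg, Complex.cpow_ofNat]
    push_cast
    rfl
  simp only [logMellin, tailMellin, hker, integral_complex_ofReal,
    integral_Ioi_one_logStep_mul_inv_sq]
  push_cast
  rfl

theorem logMellinReg_zero : logMellinReg 0 = 2 * (Real.log 2 : ℂ) - 1 := by
  simp only [logMellinReg, tailMellin, neg_zero, Complex.cpow_zero, mul_one,
    integral_complex_ofReal, integral_Ioi_one_logStep_add_inv]
  push_cast
  rfl

/-! ### The double series with a constant ratio -/

theorem differentiable_pochSym (j : ℕ) : Differentiable ℂ fun s => pochSym s j := by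
  unfold pochSym
  fun_prop

theorem pochSym_zero_succ (j : ℕ) : pochSym 0 (j + 1) = 0 :=
  Finset.prod_eq_zero (Finset.mem_range.2 j.succ_pos) (by simp)

theorem norm_pochSym_div_factorial_le {s : ℂ} {n : ℕ} (hs : ‖s‖ ≤ n + 1) (j : ℕ) :
    ‖pochSym s j / (j.factorial : ℂ)‖ ≤ (j + n).choose n := by
  rw [norm_div, Complex.norm_natCast, div_le_iff₀ (by positivity)]
  calc ‖pochSym s j‖ = ∏ i ∈ Finset.range j, ‖s + i‖ := norm_prod _ _
    _ ≤ ∏ i ∈ Finset.range j, ((n + 1 + i : ℕ) : ℝ) := by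
        gcongr with i
        push_cast
        exact (norm_add_le _ _).trans (by rw [Complex.norm_natCast]; gcongr)
    _ = (j + n).choose n * j.factorial := by
        rw [← Nat.cast_prod, ← Nat.ascFactorial_eq_prod_range,
          Nat.ascFactorial_eq_factorial_mul_choose, ← Nat.choose_symm_add (a := n) (b := j),
          add_comm n, Nat.cast_mul, mul_comm]

/-- The term `((s)_j/j!) q^j (k+1)^{1-2s-2j} ∫₁^∞ (log u - log (u + 1)) u^{-2s-2j} du`, to which
the `(k+1, j)`-term of `Ξ₃` reduces, with `q = 1/(4ω²)`, once the factors depending on `s` alone are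
removed. -/
noncomputable def coneTerm (q : ℂ) (k j : ℕ) (s : ℂ) : ℂ :=
  pochSym s j / (j.factorial : ℂ) * q ^ j * ((k : ℂ) + 1) ^ (-(2 * s + 2 * j - 1)) *
    logMellin (2 * s + 2 * j)

/-- The sum of `coneTerm q k j s` over `k ≥ 0` and `j ≥ N`, convergent for `1 < re s + N`. -/
noncomputable def coneTail (q : ℂ) (N : ℕ) (s : ℂ) : ℂ :=
  ∑' p : ℕ × ℕ, coneTerm q p.1 (p.2 + N) s

section ConeSeries

variable {q : ℂ}

theorem two_mul_add_two_mul_natCast_re (s : ℂ) (j : ℕ) :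
    (2 * s + 2 * (j : ℂ)).re = 2 * (s.re + j) := by
  simp [mul_add]

theorem norm_coneTerm_le {s : ℂ} {n : ℕ} {r : ℝ} (hs : ‖s‖ ≤ n + 1) (k : ℕ) {j : ℕ} (hr : 0 ≤ r)
    (hrj : r ≤ 2 * (s.re + j) - 1) :
    ‖coneTerm q k j s‖ ≤ ((j + n).choose n * ‖q‖ ^ j) * ((k + 1 : ℕ) : ℝ) ^ (-r) := by
  have hre := two_mul_add_two_mul_natCast_re s j
  have hpow : ‖((k : ℂ) + 1) ^ (-(2 * s + 2 * j - 1))‖ ≤ ((k + 1 : ℕ) : ℝ) ^ (-r) := by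
    rw [← Nat.cast_add_one, Complex.norm_natCast_cpow_of_pos k.succ_pos, Complex.neg_re,
      Complex.sub_re, hre, Complex.one_re]
    gcongr
    exact_mod_cast k.succ_pos
  have hlog : ‖logMellin (2 * s + 2 * j)‖ ≤ 1 := by
    refine (norm_logMellin_le (by linarith)).trans ?_
    rw [hre, div_le_one (by linarith)]
    linarith
  rw [coneTerm, norm_mul, norm_mul, norm_mul, norm_pow, ← mul_one (_ * _ ^ (-r))]
  gcongr
  exact norm_pochSym_div_factorial_le hs j

theorem differentiableAt_coneTerm (k : ℕ) {j : ℕ} {s : ℂ} (hs : 0 < s.re + j) :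
    DifferentiableAt ℂ (coneTerm q k j) s := by
  have hlog : DifferentiableAt ℂ (fun s : ℂ => logMellin (2 * s + 2 * j)) s := by
    have h : DifferentiableAt ℂ logMellin (2 * s + 2 * j) :=
      differentiableAt_logMellin (by rw [two_mul_add_two_mul_natCast_re]; linarith)
    exact h.fun_comp' s (by fun_prop)
  have hpoch := (differentiable_pochSym j).differentiableAt (x := s)
  have hpow : DifferentiableAt ℂ (fun s : ℂ => ((k : ℂ) + 1) ^ (-(2 * s + 2 * (j : ℂ) - 1))) s :=
    DifferentiableAt.const_cpow (by fun_prop) (.inl k.cast_add_one_ne_zero)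
  exact (((hpoch.div_const _).mul_const _).mul hpow).mul hlog

theorem exists_summable_norm_coneTerm_le (hq : ‖q‖ < 1) (N : ℕ) {K : Set ℂ} (hK : IsCompact K)
    (hKN : ∀ s ∈ K, 1 < s.re + N) :
    ∃ u : ℕ × ℕ → ℝ, Summable u ∧ ∀ p, ∀ s ∈ K, ‖coneTerm q p.1 (p.2 + N) s‖ ≤ u p := by
  obtain ⟨n, hn⟩ : ∃ n : ℕ, ∀ s ∈ K, ‖s‖ ≤ n + 1 := by
    obtain ⟨C, hC⟩ := hK.isBounded.exists_norm_le
    obtain ⟨n, hn⟩ := exists_nat_ge C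
    exact ⟨n, fun s hs => by linarith [hC s hs]⟩
  obtain ⟨r, hr1, hr⟩ : ∃ r > 1, ∀ s ∈ K, r ≤ 2 * (s.re + N) - 1 :=
    hK.exists_forall_le' (by fun_prop) fun s hs => by linarith [hKN s hs]
  have hbinom : Summable fun j : ℕ => ((j + N + n).choose n : ℝ) * ‖q‖ ^ (j + N) :=
    (summable_nat_add_iff (f := fun j : ℕ => ((j + n).choose n : ℝ) * ‖q‖ ^ j) N).2
      (summable_choose_mul_geometric_of_norm_lt_one n (by rwa [norm_norm]))
  have hpow : Summable fun k : ℕ => ((k + 1 : ℕ) : ℝ) ^ (-r) :=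
    (summable_nat_add_iff (f := fun k : ℕ => (k : ℝ) ^ (-r)) 1).2
      (Real.summable_nat_rpow.2 (by linarith))
  refine ⟨fun p => ((p.2 + N + n).choose n * ‖q‖ ^ (p.2 + N)) * ((p.1 + 1 : ℕ) : ℝ) ^ (-r), ?_,
    fun p s hs => norm_coneTerm_le (hn s hs) p.1 (by linarith) ?_⟩
  · exact (Equiv.prodComm ℕ ℕ).summable_iff.2 (hbinom.mul_of_nonneg hpow
      (fun _ => by positivity) fun _ => by positivity)
  · push_cast
    linarith [hr s hs, p.2.cast_nonneg (α := ℝ)]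

theorem summable_norm_coneTerm (hq : ‖q‖ < 1) {N : ℕ} {s : ℂ} (hs : 1 < s.re + N) :
    Summable fun p : ℕ × ℕ => ‖coneTerm q p.1 (p.2 + N) s‖ := by
  obtain ⟨u, hu, hle⟩ := exists_summable_norm_coneTerm_le hq N (isCompact_singleton (x := s))
    (by simpa using hs)
  exact hu.of_nonneg_of_le (fun _ => norm_nonneg _) fun p => hle p s rfl

theorem isOpen_setOf_lt_re_add (c : ℝ) (N : ℕ) : IsOpen {s : ℂ | c < s.re + N} :=
  isOpen_lt continuous_const (by fun_prop)

theorem summableLocallyUniformlyOn_coneTerm (hq : ‖q‖ < 1) (N : ℕ) :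
    SummableLocallyUniformlyOn (fun (p : ℕ × ℕ) s => coneTerm q p.1 (p.2 + N) s)
      {s | 1 < s.re + N} :=
  SummableLocallyUniformlyOn_of_locally_bounded (isOpen_setOf_lt_re_add 1 N) fun _ hKN hK =>
    exists_summable_norm_coneTerm_le hq N hK hKN

theorem differentiableOn_coneTail (hq : ‖q‖ < 1) (N : ℕ) :
    DifferentiableOn ℂ (coneTail q N) {s | 1 < s.re + N} := by
  refine (summableLocallyUniformlyOn_coneTerm hq N).differentiableOn (isOpen_setOf_lt_re_add 1 N)
    fun p s hs => differentiableAt_coneTerm _ ?_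
  have hs : 1 < s.re + N := hs
  push_cast
  linarith [p.2.cast_nonneg (α := ℝ)]

theorem coneTail_succ_zero (N : ℕ) : coneTail q (N + 1) 0 = 0 := by
  simp [coneTail, coneTerm, ← add_assoc, pochSym_zero_succ]

theorem tsum_coneTerm {j : ℕ} {s : ℂ} (hs : 1 < s.re + j) :
    ∑' k, coneTerm q k j s = pochSym s j / (j.factorial : ℂ) * q ^ j *
      riemannZeta (2 * s + 2 * j - 1) * logMellin (2 * s + 2 * j) := by
  have hre : 1 < (2 * s + 2 * (j : ℂ) - 1).re := by
    rw [Complex.sub_re, two_mul_add_two_mul_natCast_re, Complex.one_re]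
    linarith
  simp only [coneTerm, tsum_mul_right, tsum_mul_left, Complex.cpow_neg, ← one_div,
    ← zeta_eq_tsum_one_div_nat_add_one_cpow hre]

end ConeSeries

theorem tsum_prod_eq_sum_range_add_tsum {E : Type*} [NormedAddCommGroup E] [CompleteSpace E]
    {f : ℕ × ℕ → E} (hf : Summable f) (N : ℕ) :
    ∑' p, f p = ∑ j ∈ Finset.range N, ∑' k, f (k, j) + ∑' p : ℕ × ℕ, f (p.1, p.2 + N) := by
  have hswap : Summable fun p : ℕ × ℕ => f p.swap := (Equiv.prodComm ℕ ℕ).summable_iff.2 hf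
  have htail : Summable fun p : ℕ × ℕ => f (p.2, p.1 + N) :=
    hswap.comp_injective (i := fun p : ℕ × ℕ => (p.1 + N, p.2)) fun p p' h => by
      simpa [Prod.ext_iff] using h
  calc ∑' p, f p = ∑' j, ∑' k, f (k, j) := by
        rw [← (Equiv.prodComm ℕ ℕ).tsum_eq f]
        exact hswap.tsum_prod
    _ = ∑ j ∈ Finset.range N, ∑' k, f (k, j) + ∑' j, ∑' k, f (k, j + N) :=
        (hswap.prod.sum_add_tsum_nat_add N).symm
    _ = _ := by
        rw [← (Equiv.prodComm ℕ ℕ).tsum_eq fun p : ℕ × ℕ => f (p.1, p.2 + N)]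
        congr 1
        exact htail.tsum_prod.symm

/-! ### Analytic continuation of the double series -/

/-- The part of the continuation of `coneTail q 0` that is holomorphic on `-1 < re s`: the row
`j = 1`, in which the pole of `ζ (2 s + 1)` at `0` is cancelled by the factor `(s)_1 = s`, and the
rows `j ≥ 2`. -/
noncomputable def coneRest (q s : ℂ) : ℂ :=
  q / 2 * riemannZeta₁ (2 * s + 1) * logMellin (2 * s + 2) + coneTail q 2 s

/-- The continuation of `s * coneTail q 0 s` to `-1/2 < re s`. The factor `s` removes the pole at
`0` of `logMellin (2 * s) = logMellinReg (2 * s) - 1 / (2 * s)` in the row `j = 0`. -/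
noncomputable def coneContinuation (q s : ℂ) : ℂ :=
  riemannZeta (2 * s - 1) * (s * logMellinReg (2 * s) - 1 / 2) + s * coneRest q s

section Continuation

variable {q : ℂ}

theorem coneTail_zero_eq (hq : ‖q‖ < 1) {s : ℂ} (hs : 1 < s.re) :
    coneTail q 0 s = riemannZeta (2 * s - 1) * logMellin (2 * s) + coneRest q s := by
  have hs0 : s ≠ 0 := by rintro rfl; norm_num at hs
  have hsummable : Summable fun p : ℕ × ℕ => coneTerm q p.1 p.2 s :=
    (summable_norm_coneTerm hq (N := 0) (by simpa using hs)).of_norm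
  have hrow₀ : ∑' k, coneTerm q k 0 s = riemannZeta (2 * s - 1) * logMellin (2 * s) := by
    rw [tsum_coneTerm (by simpa using hs)]
    simp [pochSym]
  have hrow₁ : ∑' k, coneTerm q k 1 s =
      q / 2 * riemannZeta₁ (2 * s + 1) * logMellin (2 * s + 2) := by
    have hzeta : riemannZeta (2 * s + 2 - 1) = (2 * s)⁻¹ * riemannZeta₁ (2 * s + 1) := by
      rw [show 2 * s + 2 - 1 = 2 * s + 1 by ring, riemannZeta_eq_inv_sub_mul (by simpa using hs0),
        add_sub_cancel_right]
    rw [tsum_coneTerm (by push_cast; linarith)]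
    simp only [pochSym, Finset.prod_range_one, Nat.cast_zero, add_zero, Nat.factorial_one,
      Nat.cast_one, div_one, pow_one, mul_one, hzeta]
    field_simp
  simp only [coneTail, add_zero, coneRest]
  rw [tsum_prod_eq_sum_range_add_tsum hsummable 2, Finset.sum_range_succ, Finset.sum_range_one,
    hrow₀, hrow₁, add_assoc]

theorem mul_coneTail_zero_eq_coneContinuation (hq : ‖q‖ < 1) {s : ℂ} (hs : 1 < s.re) :
    s * coneTail q 0 s = coneContinuation q s := by
  have hs0 : s ≠ 0 := by rintro rfl; norm_num at hs
  have hre : 0 < (2 * s).re := by simpa using one_pos.trans hs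
  rw [coneTail_zero_eq hq hs, logMellin_eq_logMellinReg_sub hre, coneContinuation]
  field_simp

theorem differentiableAt_coneRest (hq : ‖q‖ < 1) {s : ℂ} (hs : -1 < s.re) :
    DifferentiableAt ℂ (coneRest q) s := by
  have htail : DifferentiableAt ℂ (coneTail q 2) s :=
    (differentiableOn_coneTail hq 2).differentiableAt
      ((isOpen_setOf_lt_re_add 1 2).mem_nhds (by rw [mem_ofPred_eq]; push_cast; linarith))
  have hlog : DifferentiableAt ℂ (fun s => logMellin (2 * s + 2)) s := by
    have h : DifferentiableAt ℂ logMellin (2 * s + 2) :=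
      differentiableAt_logMellin
        (by rw [two_mul, Complex.add_re, Complex.add_re, Complex.re_ofNat]; linarith)
    exact h.fun_comp' s (by fun_prop)
  have hzeta : DifferentiableAt ℂ (fun s => q / 2 * riemannZeta₁ (2 * s + 1)) s := by fun_prop
  exact (hzeta.mul hlog).add htail

theorem differentiableAt_logMellinReg_two_mul {s : ℂ} (hs : -(1 / 2) < s.re) :
    DifferentiableAt ℂ (fun s => logMellinReg (2 * s)) s := by
  have h : DifferentiableAt ℂ logMellinReg (2 * s) :=
    differentiableAt_logMellinReg (by rw [two_mul, Complex.add_re]; linarith)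
  exact h.fun_comp' s (by fun_prop)

theorem analyticAt_of_forall_lt_re {E : Type*} [NormedAddCommGroup E] [NormedSpace ℂ E]
    [CompleteSpace E] {f : ℂ → E} {c : ℝ}
    (hf : ∀ s : ℂ, c < s.re → DifferentiableAt ℂ f s) {s : ℂ} (hs : c < s.re) :
    AnalyticAt ℂ f s :=
  DifferentiableOn.analyticAt (s := {s | c < s.re}) (fun s hs => (hf s hs).differentiableWithinAt)
    ((isOpen_lt continuous_const Complex.continuous_re).mem_nhds hs)

theorem meromorphicAt_riemannZeta (s : ℂ) : MeromorphicAt riemannZeta s := by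
  have hfun : MeromorphicAt (fun s => (s - 1)⁻¹ * riemannZeta₁ s) s :=
    ((MeromorphicAt.id s).sub (.const 1 s)).inv.mul
      (differentiable_riemannZeta₁.analyticAt s).meromorphicAt
  refine hfun.congr ?_
  filter_upwards [nhdsNE_le_cofinite s (finite_singleton 1).compl_mem_cofinite] with z hz
  exact (riemannZeta_eq_inv_sub_mul hz).symm

theorem analyticAt_coneRest (hq : ‖q‖ < 1) {s : ℂ} (hs : -1 < s.re) :
    AnalyticAt ℂ (coneRest q) s :=
  analyticAt_of_forall_lt_re (fun _ => differentiableAt_coneRest hq) hs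

theorem meromorphicAt_coneContinuation (hq : ‖q‖ < 1) {s : ℂ} (hs : -(1 / 2) < s.re) :
    MeromorphicAt (coneContinuation q) s := by
  have hzeta : MeromorphicAt (fun s => riemannZeta (2 * s - 1)) s :=
    (meromorphicAt_riemannZeta _).comp_analyticAt (g := fun s => 2 * s - 1) (by fun_prop)
  have hreg := analyticAt_of_forall_lt_re (fun _ => differentiableAt_logMellinReg_two_mul) hs
  have hrest := analyticAt_coneRest hq (by linarith : -1 < s.re)
  exact (hzeta.mul ((analyticAt_id.mul hreg).sub analyticAt_const).meromorphicAt).add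
    (analyticAt_id.mul hrest).meromorphicAt

theorem analyticAt_coneContinuation_zero (hq : ‖q‖ < 1) :
    AnalyticAt ℂ (coneContinuation q) 0 := by
  have hzeta : AnalyticAt ℂ (fun s => riemannZeta (2 * s - 1)) 0 :=
    (analyticOn_riemannZeta _ (by norm_num)).fun_comp (f := fun s : ℂ => 2 * s - 1) (by fun_prop)
  have hreg := analyticAt_of_forall_lt_re (s := 0)
    (fun _ => differentiableAt_logMellinReg_two_mul) (by norm_num)
  have hrest := analyticAt_coneRest hq (s := 0) (by norm_num)
  exact (hzeta.mul ((analyticAt_id.mul hreg).sub analyticAt_const)).add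
    (analyticAt_id.mul hrest)

theorem coneContinuation_zero : coneContinuation q 0 = -riemannZeta (-1) / 2 := by
  simp [coneContinuation, div_eq_mul_inv]

theorem coneRest_zero : coneRest q 0 = q * (1 / 2 - (Real.log 2 : ℂ)) := by
  simp only [coneRest, mul_zero, zero_add, riemannZeta₁_one, logMellin_two, coneTail_succ_zero]
  ring

theorem hasDerivAt_coneContinuation_zero (hq : ‖q‖ < 1) :
    HasDerivAt (coneContinuation q)
      (-deriv riemannZeta (-1) + riemannZeta (-1) * (2 * (Real.log 2 : ℂ) - 1) +
        q * (1 / 2 - (Real.log 2 : ℂ))) 0 := by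
  have hlin : HasDerivAt (fun s : ℂ => 2 * s - 1) 2 0 := by
    simpa using ((hasDerivAt_id (0 : ℂ)).const_mul 2).sub_const 1
  have hzeta : HasDerivAt (fun s => riemannZeta (2 * s - 1)) (deriv riemannZeta (-1) * 2) 0 := by
    have h : HasDerivAt riemannZeta (deriv riemannZeta (-1)) (2 * 0 - 1) := by
      rw [mul_zero, zero_sub]
      exact (differentiableAt_riemannZeta (by norm_num)).hasDerivAt
    exact h.comp 0 hlin
  have hreg := (differentiableAt_logMellinReg_two_mul (s := 0) (by norm_num)).hasDerivAt
  have hrest := (differentiableAt_coneRest hq (s := 0) (by norm_num)).hasDerivAt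
  have hid := hasDerivAt_id (0 : ℂ)
  refine ((hzeta.mul ((hid.mul hreg).sub_const (1 / 2))).add (hid.mul hrest)).congr_deriv ?_
  simp [logMellinReg_zero, coneRest_zero]

end Continuation

/-! ### The sine factor -/

theorem differentiable_dslope {E : Type*} [NormedAddCommGroup E] [NormedSpace ℂ E]
    [CompleteSpace E] {f : ℂ → E} (hf : Differentiable ℂ f) (c : ℂ) :
    Differentiable ℂ (dslope f c) := by
  rw [← differentiableOn_univ, Complex.differentiableOn_dslope univ_mem]
  exact hf.differentiableOn

section Parity

variable {𝕜 E : Type*} [NontriviallyNormedField 𝕜] [NormedAddCommGroup E] [NormedSpace 𝕜 E]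
  [IsAddTorsionFree E] {f : 𝕜 → E}

theorem even_dslope_zero_of_odd (hf : f.Odd) : (dslope f 0).Even := by
  intro x
  rcases eq_or_ne x 0 with rfl | hx
  · rw [neg_zero]
  · simp only [dslope_of_ne f hx, dslope_of_ne f (neg_ne_zero.2 hx), slope_def_module, hf x,
      hf.map_zero, sub_zero, inv_neg, neg_smul_neg]

theorem deriv_zero_of_even (hf : f.Even) : deriv f 0 = 0 := by
  have h := deriv_comp_neg f 0
  rw [funext hf, neg_zero] at h
  exact self_eq_neg.1 h

end Parity

/-- The factor `2 sin(πs)/π` of `Ξ₃`. -/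
noncomputable def sinFactor (s : ℂ) : ℂ := 2 * Complex.sin ((Real.pi : ℂ) * s) / (Real.pi : ℂ)

theorem odd_sinFactor : sinFactor.Odd := fun s => by
  simp only [sinFactor, mul_neg, Complex.sin_neg, neg_div]

theorem hasDerivAt_sinFactor_zero : HasDerivAt sinFactor 2 0 := by
  have hpi : (Real.pi : ℂ) ≠ 0 := Complex.ofReal_ne_zero.2 Real.pi_ne_zero
  have hlin : HasDerivAt (fun s : ℂ => (Real.pi : ℂ) * s) (Real.pi : ℂ) 0 := by
    simpa using (hasDerivAt_id (0 : ℂ)).const_mul (Real.pi : ℂ)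
  refine ((hlin.csin.const_mul 2).div_const (Real.pi : ℂ)).congr_deriv ?_
  simp [hpi]

theorem mul_dslope_sinFactor (s : ℂ) : s * dslope sinFactor 0 s = sinFactor s := by
  simpa [odd_sinFactor.map_zero] using sub_smul_dslope sinFactor 0 s

theorem differentiable_dslope_sinFactor : Differentiable ℂ (dslope sinFactor 0) :=
  differentiable_dslope (by unfold sinFactor; fun_prop) 0

theorem hasDerivAt_dslope_sinFactor_zero : HasDerivAt (dslope sinFactor 0) 0 0 :=
  (differentiable_dslope_sinFactor 0).hasDerivAt.congr_deriv
    (deriv_zero_of_even (even_dslope_zero_of_odd odd_sinFactor))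

/-- The entire function `ω^{1-2s} · 2 sin(πs)/(πs)`. -/
noncomputable def xi3Prefactor (ω : ℝ) (s : ℂ) : ℂ :=
  (ω : ℂ) ^ (1 - 2 * s) * dslope sinFactor 0 s

/-- `Xi3Term` for a real parameter `ω`. -/
noncomputable def xi3TermReal (ω : ℝ) (k j : ℕ) (s : ℂ) : ℂ :=
  (2 * Complex.sin ((Real.pi : ℂ) * s) / (Real.pi : ℂ)) *
    (pochSym s j / ((Nat.factorial j : ℂ) * 4 ^ j)) *
    (((k : ℝ) * ω : ℝ) : ℂ) ^ (1 - 2 * s - 2 * (j : ℂ)) *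
    ∫ u in Ioi (1 : ℝ),
      ((Real.log u - Real.log (u + 1) : ℝ) : ℂ) * (u : ℂ) ^ (-(2 * s) - 2 * (j : ℂ))

section Prefactor

variable {ω : ℝ}

theorem xi3TermReal_succ (hω : 0 < ω) (k j : ℕ) (s : ℂ) :
    xi3TermReal ω (k + 1) j s =
      s * xi3Prefactor ω s * coneTerm (1 / (4 * (ω : ℂ) ^ 2)) k j s := by
  have hω0 : (ω : ℂ) ≠ 0 := Complex.ofReal_ne_zero.2 hω.ne'
  have hpow : ((((k + 1 : ℕ) : ℝ) * ω : ℝ) : ℂ) ^ (1 - 2 * s - 2 * (j : ℂ)) =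
      ((k : ℂ) + 1) ^ (-(2 * s + 2 * j - 1)) * ((ω : ℂ) ^ (1 - 2 * s) / ((ω : ℂ) ^ 2) ^ j) := by
    rw [Complex.ofReal_mul, Complex.mul_cpow_ofReal_nonneg (by positivity) hω.le,
      Complex.cpow_sub (1 - 2 * s) _ hω0, ← pow_mul, ← Complex.cpow_natCast (ω : ℂ) (2 * j)]
    push_cast
    ring_nf
  have hint : ∫ u in Ioi (1 : ℝ), ((Real.log u - Real.log (u + 1) : ℝ) : ℂ) *
      (u : ℂ) ^ (-(2 * s) - 2 * (j : ℂ)) = logMellin (2 * s + 2 * j) := by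
    rw [← neg_add']
    rfl
  rw [xi3TermReal, hpow, hint, ← sinFactor, ← mul_dslope_sinFactor, xi3Prefactor, coneTerm,
    div_pow, mul_pow, one_pow]
  field_simp

theorem differentiable_xi3Prefactor (hω : ω ≠ 0) : Differentiable ℂ (xi3Prefactor ω) := by
  have hpow : Differentiable ℂ fun s : ℂ => (ω : ℂ) ^ (1 - 2 * s) :=
    Differentiable.const_cpow (by fun_prop) (.inl (Complex.ofReal_ne_zero.2 hω))
  exact hpow.mul differentiable_dslope_sinFactor

theorem xi3Prefactor_zero : xi3Prefactor ω 0 = 2 * (ω : ℂ) := by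
  rw [xi3Prefactor, dslope_same, hasDerivAt_sinFactor_zero.deriv, mul_zero, sub_zero,
    Complex.cpow_one, mul_comm]

theorem hasDerivAt_xi3Prefactor_zero (hω : 0 < ω) :
    HasDerivAt (xi3Prefactor ω) (-4 * (ω : ℂ) * (Real.log ω : ℂ)) 0 := by
  have hω0 : (ω : ℂ) ≠ 0 := Complex.ofReal_ne_zero.2 hω.ne'
  have hlin : HasDerivAt (fun s : ℂ => 1 - 2 * s) (-2) 0 := by
    simpa using ((hasDerivAt_id (0 : ℂ)).const_mul 2).const_sub 1
  refine ((hlin.const_cpow (.inl hω0)).mul hasDerivAt_dslope_sinFactor_zero).congr_deriv ?_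
  simp only [dslope_same, hasDerivAt_sinFactor_zero.deriv, Complex.ofReal_log hω.le, mul_zero,
    sub_zero, Complex.cpow_one]
  ring

end Prefactor

/-! ### The series `Ξ₃` -/

section Xi3

variable {ω : ℝ}

theorem norm_one_div_four_mul_sq_lt_one (hω : 1 / 2 < ω) : ‖1 / (4 * (ω : ℂ) ^ 2)‖ < 1 := by
  rw [norm_div, norm_one, norm_mul, norm_pow, Complex.norm_real, Complex.norm_ofNat,
    Real.norm_of_nonneg (by linarith), div_lt_one (by positivity)]
  nlinarith

theorem tsum_xi3TermReal (hω : 0 < ω) (s : ℂ) :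
    ∑' p : ℕ × ℕ, xi3TermReal ω (p.1 + 1) p.2 s =
      s * xi3Prefactor ω s * coneTail (1 / (4 * (ω : ℂ) ^ 2)) 0 s := by
  simp only [xi3TermReal_succ hω, tsum_mul_left, coneTail, add_zero]

theorem summable_norm_xi3TermReal (hω : 1 / 2 < ω) {s : ℂ} (hs : 1 < s.re) :
    Summable fun p : ℕ × ℕ => ‖xi3TermReal ω (p.1 + 1) p.2 s‖ := by
  simp only [xi3TermReal_succ (by linarith : 0 < ω), norm_mul]
  exact (summable_norm_coneTerm (norm_one_div_four_mul_sq_lt_one hω) (N := 0)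
    (by simpa using hs)).mul_left _

theorem tendstoLocallyUniformlyOn_xi3TermReal (hω : 1 / 2 < ω) :
    TendstoLocallyUniformlyOn
      (fun (N : Finset (ℕ × ℕ)) (s : ℂ) => ∑ p ∈ N, xi3TermReal ω (p.1 + 1) p.2 s)
      (fun s => ∑' p : ℕ × ℕ, xi3TermReal ω (p.1 + 1) p.2 s) atTop {s | 1 < s.re} := by
  have hω0 : 0 < ω := by linarith
  have hq := norm_one_div_four_mul_sq_lt_one hω
  have hset : {s : ℂ | 1 < s.re} = {s : ℂ | 1 < s.re + (0 : ℕ)} := by simp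
  have htail := hasSumLocallyUniformlyOn_iff_tendstoLocallyUniformlyOn.1
    (summableLocallyUniformlyOn_coneTerm hq 0).hasSumLocallyUniformlyOn
  have hfactor : Continuous fun s => s * xi3Prefactor ω s :=
    continuous_id.mul (differentiable_xi3Prefactor hω0.ne').continuous
  have hconst : TendstoLocallyUniformlyOn (fun (_ : Finset (ℕ × ℕ)) s => s * xi3Prefactor ω s)
      (fun s => s * xi3Prefactor ω s) atTop {s : ℂ | 1 < s.re + (0 : ℕ)} :=
    fun _ hU _ _ => ⟨_, self_mem_nhdsWithin, .of_forall fun _ _ _ => refl_mem_uniformity hU⟩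
  simp only [hset, xi3TermReal_succ hω0, ← Finset.mul_sum, tsum_mul_left]
  exact hconst.mul₀ htail hfactor.continuousOn (differentiableOn_coneTail hq 0).continuousOn

/-- The continuation of `Ξ₃` to `-1/2 < re s`. -/
noncomputable def xi3Continuation (ω : ℝ) (s : ℂ) : ℂ :=
  xi3Prefactor ω s * coneContinuation (1 / (4 * (ω : ℂ) ^ 2)) s

theorem eqOn_xi3Continuation (hω : 1 / 2 < ω) :
    EqOn (xi3Continuation ω) (fun s => ∑' p : ℕ × ℕ, xi3TermReal ω (p.1 + 1) p.2 s)
      {s | 1 < s.re} := by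
  intro s hs
  simp only [tsum_xi3TermReal (by linarith : 0 < ω), xi3Continuation,
    ← mul_coneTail_zero_eq_coneContinuation (norm_one_div_four_mul_sq_lt_one hω) hs]
  ring

theorem meromorphicOn_xi3Continuation (hω : 1 / 2 < ω) :
    MeromorphicOn (xi3Continuation ω) {s | -(1 / 2) < s.re} := fun s hs =>
  ((differentiable_xi3Prefactor (by linarith)).analyticAt s).meromorphicAt.mul
    (meromorphicAt_coneContinuation (norm_one_div_four_mul_sq_lt_one hω) hs)

theorem analyticAt_xi3Continuation_zero (hω : 1 / 2 < ω) : AnalyticAt ℂ (xi3Continuation ω) 0 :=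
  ((differentiable_xi3Prefactor (by linarith)).analyticAt 0).mul
    (analyticAt_coneContinuation_zero (norm_one_div_four_mul_sq_lt_one hω))

theorem xi3Continuation_zero : xi3Continuation ω 0 = -riemannZeta (-1) * (ω : ℂ) := by
  rw [xi3Continuation, xi3Prefactor_zero, coneContinuation_zero]
  ring

theorem deriv_xi3Continuation_zero (hω : 1 / 2 < ω) :
    deriv (xi3Continuation ω) 0 =
      2 * (ω : ℂ) * (riemannZeta (-1) * (Real.log 4 : ℂ) - riemannZeta (-1) -
          deriv riemannZeta (-1)) +
        (1 / (ω : ℂ)) * (riemannZeta 0 ^ 2 + riemannZeta 0 * (Real.log 2 : ℂ)) +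
        2 * (ω : ℂ) * riemannZeta (-1) * (Real.log ω : ℂ) := by
  have hω0 : (ω : ℂ) ≠ 0 := Complex.ofReal_ne_zero.2 (by linarith)
  have hlog : Real.log 4 = 2 * Real.log 2 := by
    rw [show (4 : ℝ) = 2 ^ 2 by norm_num, Real.log_pow, Nat.cast_ofNat]
  have hderiv := (hasDerivAt_xi3Prefactor_zero (ω := ω) (by linarith)).mul
    (hasDerivAt_coneContinuation_zero (norm_one_div_four_mul_sq_lt_one hω))
  rw [show xi3Continuation ω = xi3Prefactor ω * coneContinuation _ from rfl, hderiv.deriv,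
    xi3Prefactor_zero, coneContinuation_zero, riemannZeta_zero, hlog]
  push_cast
  field_simp
  ring

end Xi3

theorem statement9_general (ω : ℝ) (hω : 1 / 2 < ω) :
    (∀ s ∈ {s : ℂ | 1 < s.re}, Summable fun p : ℕ × ℕ => ‖xi3TermReal ω (p.1 + 1) p.2 s‖) ∧
    TendstoLocallyUniformlyOn
      (fun (N : Finset (ℕ × ℕ)) (s : ℂ) => ∑ p ∈ N, xi3TermReal ω (p.1 + 1) p.2 s)
      (fun s : ℂ => ∑' p : ℕ × ℕ, xi3TermReal ω (p.1 + 1) p.2 s) atTop {s : ℂ | 1 < s.re} ∧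
    ∃ F : ℂ → ℂ,
      MeromorphicOn F {s : ℂ | -(1 / 2) < s.re} ∧
      EqOn F (fun s : ℂ => ∑' p : ℕ × ℕ, xi3TermReal ω (p.1 + 1) p.2 s) {s : ℂ | 1 < s.re} ∧
      AnalyticAt ℂ F 0 ∧
      F 0 = -riemannZeta (-1) * (ω : ℂ) ∧
      deriv F 0 =
        2 * (ω : ℂ) * (riemannZeta (-1) * (Real.log 4 : ℂ) - riemannZeta (-1) -
            deriv riemannZeta (-1)) +
          (1 / (ω : ℂ)) * (riemannZeta 0 ^ 2 + riemannZeta 0 * (Real.log 2 : ℂ)) +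
          2 * (ω : ℂ) * riemannZeta (-1) * (Real.log ω : ℂ) :=
  ⟨fun _ => summable_norm_xi3TermReal hω, tendstoLocallyUniformlyOn_xi3TermReal hω,
    xi3Continuation ω, meromorphicOn_xi3Continuation hω, eqOn_xi3Continuation hω,
    analyticAt_xi3Continuation_zero hω, xi3Continuation_zero, deriv_xi3Continuation_zero hω⟩

/-- for a fixed integer `ω ≥ 1`, the double series
`Ξ₃(s) = (2 sin(πs)/π)·Σ_{k≥1}Σ_{j≥0} ((s)_j/(j!·4^j))·(kω)^{1-2s-2j}·∫₁^∞(log u - log(u+1))u^{-2s-2j} du`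
converges absolutely and locally uniformly on the strip `1 < Re(s) < 2`, and its sum extends to
a meromorphic function on the half-plane `Re(s) > -1/2` which is holomorphic at `s = 0`, with
value `Ξ₃(0) = -ζ(-1)·ω` and derivative
`Ξ₃'(0) = 2ω·(ζ(-1)·log 4 - ζ(-1) - ζ'(-1)) + (1/ω)·(ζ(0)² + ζ(0)·log 2) + 2ω·ζ(-1)·log ω`. -/
theorem statement9 (ω : ℕ) (hω : 1 ≤ ω) :
    (∀ s ∈ {s : ℂ | 1 < s.re ∧ s.re < 2},
      Summable (fun p : ℕ × ℕ => ‖Xi3Term ω (p.1 + 1) p.2 s‖)) ∧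
    TendstoLocallyUniformlyOn
      (fun (N : Finset (ℕ × ℕ)) (s : ℂ) => ∑ p ∈ N, Xi3Term ω (p.1 + 1) p.2 s)
      (fun s : ℂ => ∑' p : ℕ × ℕ, Xi3Term ω (p.1 + 1) p.2 s)
      atTop {s : ℂ | 1 < s.re ∧ s.re < 2} ∧
    ∃ F : ℂ → ℂ,
      MeromorphicOn F {s : ℂ | -(1 / 2) < s.re} ∧
      Set.EqOn F (fun s : ℂ => ∑' p : ℕ × ℕ, Xi3Term ω (p.1 + 1) p.2 s)
        {s : ℂ | 1 < s.re ∧ s.re < 2} ∧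
      AnalyticAt ℂ F 0 ∧
      F 0 = -riemannZeta (-1) * (ω : ℂ) ∧
      deriv F 0 =
        2 * (ω : ℂ) * (riemannZeta (-1) * (Real.log 4 : ℂ) - riemannZeta (-1) -
            deriv riemannZeta (-1)) +
          (1 / (ω : ℂ)) * (riemannZeta 0 ^ 2 + riemannZeta 0 * (Real.log 2 : ℂ)) +
          2 * (ω : ℂ) * riemannZeta (-1) * (Real.log ω : ℂ) := by
  have hhalf : 1 / 2 < (ω : ℝ) := by linarith [(Nat.one_le_cast (α := ℝ)).2 hω]
  obtain ⟨hsum, hunif, F, hmero, heq, han, hval, hderiv⟩ := statement9_general ω hhalf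
  have hstrip : {s : ℂ | 1 < s.re ∧ s.re < 2} ⊆ {s | 1 < s.re} := fun _ hs => hs.1
  rw [Complex.ofReal_natCast] at hval hderiv
  exact ⟨fun s hs => hsum s (hstrip hs), hunif.mono hstrip, F, hmero, heq.mono hstrip, han, hval,
    hderiv⟩
end
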